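/- (Łojasiewicz inequality II) Let M = (M_0, M_1, M_2, …) be an increasing sequence of positive real numbers with M_0 = 1 that is logarithmically convex, satisfies ∑_{k≥0} M_k/((k+1)M_{k+1}) = ∞, and satisfies sup_{j≥1} (M_{j+1}/M_j)^{1/j} < ∞. Let U ⊆ ℝ^N be a connected open set, let f ∈ C^ℝ_M(U), and set Z = {x ∈ U : f(x) = 0}. For every compact K ⊆ U there exist a constant C > 0, a real ν ≥ 1, and an open neighborhood W of K in U such that |f(x)| ≥ C·d(x, Z)^ν for all x ∈ W, where d(·, Z) denotes the Euclidean distance to Z. -/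

import Mathlib

/-- The `i`-th partial derivative of a function on Euclidean space. -/
noncomputable def pd {ι : Type} [Fintype ι] [DecidableEq ι] {W : Type} [NormedAddCommGroup W]
    [NormedSpace ℝ W] (i : ι) (f : EuclideanSpace ℝ ι → W) : EuclideanSpace ℝ ι → W :=
  fun x => fderiv ℝ f x (EuclideanSpace.single i 1)

/-- The multi-index derivative `D^α f`. -/
noncomputable def mderiv {ι : Type} [Fintype ι] [DecidableEq ι] {W : Type} [NormedAddCommGroup W]
    [NormedSpace ℝ W] (α : ι → ℕ) (f : EuclideanSpace ℝ ι → W) : EuclideanSpace ℝ ι → W :=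
  (Finset.univ : Finset ι).toList.foldr (fun i g => (pd i)^[α i] g) f

/-- Membership in the real Denjoy-Carleman class `C^ℝ_M(U)`: `f` is `C^∞` on `U` and on every
compact `K ⊆ U` there are `A, B > 0` with `|(1/α!) D^α f(x)| ≤ A B^{|α|} M_{|α|}`. -/
def CRM {ι : Type} [Fintype ι] [DecidableEq ι] (M : ℕ → ℝ)
    (U : Set (EuclideanSpace ℝ ι)) (f : EuclideanSpace ℝ ι → ℝ) : Prop :=
  ContDiffOn ℝ (⊤ : ℕ∞) f U ∧
  ∀ K : Set (EuclideanSpace ℝ ι), K ⊆ U → IsCompact K →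
    ∃ A B : ℝ, 0 < A ∧ 0 < B ∧ ∀ x ∈ K, ∀ α : ι → ℕ,
      (1 / (∏ i, ((α i).factorial : ℝ))) * |mderiv α f x| ≤
        A * B ^ (∑ i, α i) * M (∑ i, α i)

section
open scoped ContDiff Nat Topology
open Filter Set

namespace QA

/-- Weight sequence conditions. -/
structure Wt (M : ℕ → ℝ) : Prop where
  pos : ∀ j, 0 < M j
  mono : Monotone M
  zero : M 0 = 1
  logc : ∀ j : ℕ, M (j+1) / M j ≤ M (j+2) / M (j+1)
  der : ∃ C : ℝ, 1 ≤ C ∧ ∀ j : ℕ, M (j+1) ≤ C ^ (j+1) * M j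

theorem Wt.one_le {M : ℕ → ℝ} (hM : Wt M) (j : ℕ) : 1 ≤ M j := by
  rw [← hM.zero]; exact hM.mono (Nat.zero_le j)

theorem Wt.ratio_mono {M : ℕ → ℝ} (hM : Wt M) : Monotone (fun j => M (j+1) / M j) :=
  monotone_nat_of_le_succ hM.logc

theorem Wt.ratio_mul {M : ℕ → ℝ} (hM : Wt M) {k s : ℕ} (h : k ≤ s) :
    M (k+1) * M s ≤ M (s+1) * M k := by
  have := hM.ratio_mono h
  simp only at this
  rwa [div_le_div_iff₀ (hM.pos _) (hM.pos _)] at this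

theorem Wt.mul_le {M : ℕ → ℝ} (hM : Wt M) (i j : ℕ) : M i * M j ≤ M (i + j) := by
  induction i with
  | zero => simp [hM.zero]
  | succ i ih =>
    have h := hM.ratio_mul (show i ≤ i + j by omega)
    have hi := hM.pos i
    rw [show i + 1 + j = i + j + 1 by ring]
    have : M (i+1) * M j * M i ≤ M (i+j+1) * M i := by
      calc M (i+1) * M j * M i = M (i+1) * (M i * M j) := by ring
        _ ≤ M (i+1) * M (i+j) := by gcongr; exact (hM.pos _).le
        _ ≤ _ := h
    exact le_of_mul_le_mul_right this hi

theorem Wt.shift {M : ℕ → ℝ} (hM : Wt M) (c s : ℕ) :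
    M (c+1) * M (s+1) ≤ M 1 * M (s + (c+1)) := by
  induction c with
  | zero => simp
  | succ c ih =>
    have h := hM.ratio_mul (show c + 1 ≤ s + (c+1) by omega)
    have hi := hM.pos (c+1)
    have : M (c+1+1) * M (s+1) * M (c+1) ≤ M 1 * M (s + (c+1+1)) * M (c+1) := by
      calc M (c+1+1) * M (s+1) * M (c+1) = M (c+1+1) * (M (c+1) * M (s+1)) := by ring
        _ ≤ M (c+1+1) * (M 1 * M (s + (c+1))) := by gcongr; exact (hM.pos _).le
        _ = M 1 * (M (c+1+1) * M (s + (c+1))) := by ring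
        _ ≤ M 1 * (M (s + (c+1)+1) * M (c+1)) := by gcongr; exact (hM.pos _).le
        _ = _ := by ring_nf
    exact le_of_mul_le_mul_right this hi

theorem Wt.faa {M : ℕ → ℝ} (hM : Wt M) (k : ℕ) (c : Fin k → ℕ) (hc : ∀ i, 0 < c i) :
    M k * ∏ i, M (c i) ≤ M 1 ^ k * M (∑ i, c i) ∧ k ≤ ∑ i, c i := by
  induction k with
  | zero => simp
  | succ k ih =>
    obtain ⟨h1, h2⟩ := ih (fun i => c i.castSucc) (fun i => hc _)
    rw [Fin.prod_univ_castSucc, Fin.sum_univ_castSucc]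
    have hl := hc (Fin.last k)
    refine ⟨?_, by omega⟩
    set S := ∑ i : Fin k, c i.castSucc
    set P := ∏ i : Fin k, M (c i.castSucc)
    obtain ⟨l, hl⟩ : ∃ l, c (Fin.last k) = l + 1 := ⟨c (Fin.last k) - 1, by omega⟩
    rw [hl]
    have hr := hM.ratio_mul h2
    have hk := hM.pos k
    have hP : 0 ≤ P := Finset.prod_nonneg fun i _ => (hM.pos _).le
    have hs := hM.shift l S
    have p1 := hM.pos 1
    have := hM.pos
    have key : M (k+1) * (P * M (l+1)) * M k ≤ M 1 ^ (k+1) * M (S + (l+1)) * M k := by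
      calc M (k+1) * (P * M (l+1)) * M k = (M k * P) * (M (k+1) * M (l+1)) := by ring
        _ ≤ (M 1 ^ k * M S) * (M (k+1) * M (l+1)) := by
            gcongr
            exact mul_nonneg (this _).le (this _).le
        _ = M 1 ^ k * M (l+1) * (M (k+1) * M S) := by ring
        _ ≤ M 1 ^ k * M (l+1) * (M (S+1) * M k) := by
            gcongr
            exact mul_nonneg (pow_nonneg p1.le _) (this _).le
        _ = M 1 ^ k * M k * (M (l+1) * M (S+1)) := by ring
        _ ≤ M 1 ^ k * M k * (M 1 * M (S + (l+1))) := by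
            gcongr
            
        _ = _ := by ring
    exact le_of_mul_le_mul_right key hk

section
variable {E F G : Type} [NormedAddCommGroup E] [NormedSpace ℝ E] [NormedAddCommGroup F]
  [NormedSpace ℝ F] [NormedAddCommGroup G] [NormedSpace ℝ G]

theorem sum_partSize {n : ℕ} (c : OrderedFinpartition n) : ∑ i, c.partSize i = n := by
  have := c.sum_sigma_eq_sum (fun _ => (1:ℕ))
  simpa using this

/-- Faa di Bruno norm bound. -/
theorem norm_comp_le {g : F → G} {f : E → F} {x : E} (hg : ContDiffAt ℝ ∞ g (f x))
    (hf : ContDiffAt ℝ ∞ f x) (n : ℕ) :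
    ‖iteratedFDeriv ℝ n (g ∘ f) x‖ ≤ ∑ c : OrderedFinpartition n,
      ‖iteratedFDeriv ℝ c.length g (f x)‖ * ∏ i, ‖iteratedFDeriv ℝ (c.partSize i) f x‖ := by
  rw [iteratedFDeriv_comp hg hf (by exact_mod_cast le_top)]
  refine (norm_sum_le _ _).trans (Finset.sum_le_sum fun c _ => ?_)
  exact c.norm_compAlongOrderedFinpartition_le _ _

/-- Faa di Bruno scalar formula. -/
theorem iteratedDeriv_comp_eq {g : ℝ → ℝ} {f : ℝ → ℝ} {x : ℝ} (hg : ContDiffAt ℝ ∞ g (f x))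
    (hf : ContDiffAt ℝ ∞ f x) (n : ℕ) :
    iteratedDeriv n (g ∘ f) x = ∑ c : OrderedFinpartition n,
      iteratedDeriv c.length g (f x) * ∏ i, iteratedDeriv (c.partSize i) f x := by
  rw [iteratedDeriv_eq_iteratedFDeriv, iteratedFDeriv_comp hg hf (by exact_mod_cast le_top)]
  simp only [FormalMultilinearSeries.taylorComp, _root_.sum_apply]
  refine Finset.sum_congr rfl fun c _ => ?_
  rw [FormalMultilinearSeries.compAlongOrderedFinpartition_apply]
  simp only [ftaylorSeries]
  rw [iteratedFDeriv_apply_eq_iteratedDeriv_mul_prod, smul_eq_mul, mul_comm]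
  congr 1

/-- geometric majorant -/
theorem analytic_bound {f : ℝ → ℝ} (hf : AnalyticAt ℝ f 0) :
    ∃ C D : ℝ, 0 < C ∧ 0 < D ∧ ∀ n, |iteratedDeriv n f 0| ≤ C * D ^ n * n ! := by
  obtain ⟨p, hp⟩ := hf
  obtain ⟨r, hr0, hr⟩ := ENNReal.lt_iff_exists_nnreal_btwn.1 hp.radius_pos
  obtain ⟨C, hC, h⟩ := p.norm_mul_pow_le_of_lt_radius hr
  have hr0' : 0 < (r:ℝ) := by exact_mod_cast hr0
  refine ⟨C, 1 / r, hC, by positivity, fun n => ?_⟩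
  have h1 : iteratedDeriv n f 0 = n ! * p.coeff n := by
    have h1 := hp.eq_formalMultilinearSeries (hp.analyticAt.hasFPowerSeriesAt)
    rw [h1]
    simp [FormalMultilinearSeries.coeff_ofScalars]
    field_simp
  rw [h1, abs_mul, Nat.abs_cast, mul_comm]
  have h2 := h n
  have : |p.coeff n| ≤ C * (1/r)^n := by
    rw [one_div, inv_pow, ← div_eq_mul_inv, le_div_iff₀ (by positivity)]
    rw [← Real.norm_eq_abs, ← p.norm_apply_eq_norm_coef]
    exact h2
  gcongr

/-- The Denjoy-Carleman class at a point. -/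
def CM (M : ℕ → ℝ) (f : E → F) (a : E) : Prop :=
  ∃ A B : ℝ, 0 < A ∧ 0 < B ∧ ∀ᶠ x in 𝓝 a, ContDiffAt ℝ ∞ f x ∧
    ∀ n : ℕ, ‖iteratedFDeriv ℝ n f x‖ ≤ A * B ^ n * n ! * M n

variable {M : ℕ → ℝ}

theorem CM.contDiffAt {f : E → F} {a : E} (h : CM M f a) : ContDiffAt ℝ ∞ f a := by
  obtain ⟨A, B, _, _, h⟩ := h
  exact h.self_of_nhds.1

theorem CM.continuousAt {f : E → F} {a : E} (h : CM M f a) : ContinuousAt f a :=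
  h.contDiffAt.continuousAt

theorem CM.eventually {f : E → F} {a : E} (h : CM M f a) : ∀ᶠ x in 𝓝 a, CM M f x := by
  obtain ⟨A, B, hA, hB, h⟩ := h
  filter_upwards [eventually_eventually_nhds.2 h] with x hx
  exact ⟨A, B, hA, hB, hx⟩

theorem CM.congr {f g : E → F} {a : E} (h : CM M f a) (hfg : f =ᶠ[𝓝 a] g) : CM M g a := by
  obtain ⟨A, B, hA, hB, h⟩ := h
  refine ⟨A, B, hA, hB, ?_⟩
  filter_upwards [h, eventually_eventually_nhds.2 hfg] with x hx hx2
  refine ⟨hx.1.congr_of_eventuallyEq (hx2.mono fun y hy => hy.symm), fun n => ?_⟩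
  rw [← (Filter.EventuallyEq.iteratedFDeriv ℝ hx2 n).self_of_nhds]
  exact hx.2 n

theorem CM.clm_comp {f : E → F} {a : E} (h : CM M f a) (L : F →L[ℝ] G) (hM : Wt M) :
    CM M (fun x => L (f x)) a := by
  obtain ⟨A, B, hA, hB, h⟩ := h
  refine ⟨(‖L‖ + 1) * A, B, by positivity, hB, ?_⟩
  filter_upwards [h] with x hx
  refine ⟨L.contDiff.contDiffAt.comp x hx.1, fun n => ?_⟩
  have h1 := L.norm_iteratedFDeriv_comp_left (hx.1) (N := ∞) (n := n) (by exact_mod_cast le_top)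
  have := hM.pos n
  calc _ ≤ ‖L‖ * ‖iteratedFDeriv ℝ n f x‖ := h1
    _ ≤ (‖L‖ + 1) * (A * B ^ n * n ! * M n) := by
      gcongr
      · linarith
      · exact hx.2 n
    _ = _ := by ring

theorem CM.add {f g : E → F} {a : E} (hf : CM M f a) (hg : CM M g a) (hM : Wt M) :
    CM M (fun x => f x + g x) a := by
  obtain ⟨A, B, hA, hB, hf⟩ := hf
  obtain ⟨A', B', hA', hB', hg⟩ := hg
  refine ⟨A + A', max B B', by positivity, by positivity, ?_⟩
  filter_upwards [hf, hg] with x hx hx'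
  refine ⟨hx.1.add hx'.1, fun n => ?_⟩
  have h1 : iteratedFDeriv ℝ n (fun x => f x + g x) x =
    iteratedFDeriv ℝ n f x + iteratedFDeriv ℝ n g x := by
    have := iteratedFDeriv_add_apply (𝕜 := ℝ) (i := n) (f := f) (g := g) (x := x)
      (hx.1.of_le (by exact_mod_cast le_top)) (hx'.1.of_le (by exact_mod_cast le_top))
    exact this
  rw [h1]
  have := hM.pos n
  calc _ ≤ ‖iteratedFDeriv ℝ n f x‖ + ‖iteratedFDeriv ℝ n g x‖ := norm_add_le _ _
    _ ≤ A * B ^ n * n ! * M n + A' * B' ^ n * n ! * M n := add_le_add (hx.2 n) (hx'.2 n)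
    _ ≤ A * (max B B') ^ n * n ! * M n + A' * (max B B') ^ n * n ! * M n := by
      gcongr
      · exact le_max_left _ _
      · exact le_max_right _ _
    _ = _ := by ring

theorem CM_const (c : F) (a : E) (hM : Wt M) : CM M (fun _ => c) a := by
  refine ⟨‖c‖ + 1, 1, by positivity, by positivity, Eventually.of_forall fun x => ⟨contDiffAt_const, fun n => ?_⟩⟩
  have := hM.one_le n
  rcases n with _ | n
  · simp [hM.zero]
  · rw [iteratedFDeriv_const_of_ne (by simp)]
    simp only [Pi.zero_apply, norm_zero]; positivity

theorem CM_clm (L : E →L[ℝ] F) (a : E) (hM : Wt M) : CM M (fun x => L x) a := by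
  refine ⟨‖L‖ + ‖L‖ * (‖a‖ + 1) + 1, 1, by positivity, by positivity, ?_⟩
  filter_upwards [Metric.ball_mem_nhds a one_pos] with x hx
  refine ⟨L.contDiff.contDiffAt, fun n => ?_⟩
  have h1 := hM.one_le n
  have hx' : ‖x‖ ≤ ‖a‖ + 1 := by
    have : ‖x - a‖ < 1 := by simpa [dist_eq_norm] using hx
    have := norm_le_norm_add_norm_sub' x a
    linarith
  rcases n with _ | _ | n
  · simp only [norm_iteratedFDeriv_zero, pow_zero, mul_one, Nat.factorial_zero, Nat.cast_one, hM.zero]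
    calc ‖L x‖ ≤ ‖L‖ * ‖x‖ := L.le_opNorm x
      _ ≤ ‖L‖ * (‖a‖+1) := by gcongr
      _ ≤ _ := by linarith [norm_nonneg L]
  · simp only [zero_add, one_pow, mul_one, Nat.factorial_one, Nat.cast_one]
    rw [← norm_fderiv_iteratedFDeriv (n := 0)]
    have : ‖fderiv ℝ (iteratedFDeriv ℝ 0 fun x => L x) x‖ = ‖L‖ := by
      rw [iteratedFDeriv_zero_eq_comp, LinearIsometryEquiv.comp_fderiv]
      rw [ContinuousLinearMap.fderiv]
      exact LinearIsometry.norm_toContinuousLinearMap_comp ((continuousMultilinearCurryFin0 ℝ E F).symm).toLinearIsometry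
    rw [this]
    have : 0 ≤ ‖L‖ * (‖a‖ + 1) := by positivity
    have h0 := norm_nonneg L
    calc ‖L‖ ≤ (‖L‖ + ‖L‖ * (‖a‖ + 1) + 1) * 1 := by linarith
      _ ≤ _ := by gcongr
  · have : ‖iteratedFDeriv ℝ (n+1+1) (fun x => L x) x‖ = 0 := by
      rw [← norm_iteratedFDeriv_fderiv]
      have : fderiv ℝ (fun x => L x) = fun _ => L := by ext1 x; exact L.fderiv
      rw [this, iteratedFDeriv_const_of_ne (by simp)]
      simp
    rw [this]; positivity

theorem CM_id (a : E) (hM : Wt M) : CM M (fun x : E => x) a := CM_clm (ContinuousLinearMap.id ℝ E) a hM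

theorem CM.prodMk {f : E → F} {g : E → G} {a : E} (hf : CM M f a) (hg : CM M g a) (hM : Wt M) :
    CM M (fun x => (f x, g x)) a := by
  have h1 := hf.clm_comp (ContinuousLinearMap.inl ℝ F G) hM
  have h2 := hg.clm_comp (ContinuousLinearMap.inr ℝ F G) hM
  have := h1.add h2 hM
  simpa using this

/-- Majorized composition. -/
theorem comp_majorant (hM : Wt M) {g : F → G} {f : E → F} {x : E} (hg : ContDiffAt ℝ ∞ g (f x))
    (hf : ContDiffAt ℝ ∞ f x) {ph ps : ℝ → ℝ} (hph : AnalyticAt ℝ ph (ps 0))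
    (hps : AnalyticAt ℝ ps 0) (n : ℕ) (A : ℕ → ℝ) (hA : ∀ k, 0 ≤ A k)
    (hgb : ∀ k, ‖iteratedFDeriv ℝ k g (f x)‖ ≤ A k * M k)
    (hA' : ∀ k, A k * M 1 ^ k ≤ iteratedDeriv k ph (ps 0))
    (hfb : ∀ j, 1 ≤ j → j ≤ n → ‖iteratedFDeriv ℝ j f x‖ ≤ iteratedDeriv j ps 0 * M j) :
    ‖iteratedFDeriv ℝ n (g ∘ f) x‖ ≤ iteratedDeriv n (ph ∘ ps) 0 * M n := by
  refine (norm_comp_le hg hf n).trans ?_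
  rw [iteratedDeriv_comp_eq hph.contDiffAt hps.contDiffAt, Finset.sum_mul]
  refine Finset.sum_le_sum fun c _ => ?_
  have hMp := hM.pos
  have hψn : ∀ i, 0 ≤ iteratedDeriv (c.partSize i) ps 0 := fun i => by
    have := (norm_nonneg _).trans (hfb (c.partSize i) (c.partSize_pos i) (c.partSize_le i))
    exact nonneg_of_mul_nonneg_left this (hMp _)
  have h3 := (hM.faa c.length c.partSize c.partSize_pos).1
  rw [sum_partSize] at h3
  have hP : 0 ≤ ∏ i, iteratedDeriv (c.partSize i) ps 0 := Finset.prod_nonneg fun i _ => hψn i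
  calc _ ≤ (A c.length * M c.length) *
        ∏ i, (iteratedDeriv (c.partSize i) ps 0 * M (c.partSize i)) := by
        refine mul_le_mul (hgb _) ?_ (by positivity) (mul_nonneg (hA _) (hMp _).le)
        exact Finset.prod_le_prod (fun i _ => norm_nonneg _)
          (fun i _ => hfb _ (c.partSize_pos i) (c.partSize_le i))
    _ = A c.length * (∏ i, iteratedDeriv (c.partSize i) ps 0) *
        (M c.length * ∏ i, M (c.partSize i)) := by rw [Finset.prod_mul_distrib]; ring
    _ ≤ A c.length * (∏ i, iteratedDeriv (c.partSize i) ps 0) *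
        (M 1 ^ c.length * M n) := by
        gcongr
        exact mul_nonneg (hA _) hP
    _ = (A c.length * M 1 ^ c.length) * (∏ i, iteratedDeriv (c.partSize i) ps 0) * M n := by ring
    _ ≤ _ := by
        gcongr
        · exact (hMp n).le
        · exact hA' _

theorem geom_iteratedDeriv (A B : ℝ) (n : ℕ) :
    iteratedDeriv n (fun t : ℝ => A * (1 - B * t)⁻¹) 0 = A * B ^ n * n ! := by
  have h1 : (fun t : ℝ => A * (1 - B * t)⁻¹) = fun t => A * ((fun t : ℝ => ((-B) * t + 1)⁻¹) t) := by
    ext t; simp only; congr 2; ring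
  rw [h1, iteratedDeriv_const_mul_field, iteratedDeriv_eq_iterate, iter_deriv_inv_linear]
  simp
  rw [show (-B)^n = (-1)^n * B^n by rw [← mul_pow]; simp]
  have : ((-1:ℝ)^n) * (-1)^n = 1 := by rw [← mul_pow]; simp
  linear_combination (A * B^n * n !) * this

end
end QA
end

section
open scoped ContDiff Nat Topology
open Filter Set

namespace QA
section
variable {E F G : Type} [NormedAddCommGroup E] [NormedSpace ℝ E] [NormedAddCommGroup F]
  [NormedSpace ℝ F] [NormedAddCommGroup G] [NormedSpace ℝ G] {M : ℕ → ℝ}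

theorem geom_analytic (A B : ℝ) : AnalyticAt ℝ (fun t : ℝ => A * (1 - B * t)⁻¹) 0 := by
  refine AnalyticAt.mul analyticAt_const (AnalyticAt.inv ?_ (by simp))
  fun_prop

theorem CM.comp {g : F → G} {f : E → F} {a : E} (hg : CM M g (f a)) (hf : CM M f a) (hM : Wt M) :
    CM M (fun x => g (f x)) a := by
  have hc := hf.continuousAt
  obtain ⟨A, B, hA, hB, hg⟩ := hg
  obtain ⟨A', B', hA', hB', hf⟩ := hf
  set ps : ℝ → ℝ := fun t => A' * (1 - B' * t)⁻¹ - A' with hps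
  set ph : ℝ → ℝ := fun t => A * (1 - (B * M 1) * t)⁻¹ with hph
  have ps0 : ps 0 = 0 := by simp [hps]
  have aps : AnalyticAt ℝ ps 0 := (geom_analytic A' B').sub analyticAt_const
  have aph : AnalyticAt ℝ ph (ps 0) := by rw [ps0]; exact geom_analytic A (B * M 1)
  obtain ⟨C, D, hC, hD, hb⟩ := analytic_bound (aph.comp aps)
  refine ⟨C, D, hC, hD, ?_⟩
  filter_upwards [hf, hc.eventually hg] with x hx hx'
  refine ⟨hx'.1.comp x hx.1, fun n => ?_⟩
  have := comp_majorant hM hx'.1 hx.1 aph aps n (fun k => A * B ^ k * k !)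
    (fun k => by positivity) hx'.2
    (fun k => by
      rw [ps0, geom_iteratedDeriv]; apply le_of_eq; ring)
    (fun j hj _ => by
      refine (hx.2 j).trans (le_of_eq ?_)
      congr 1
      rw [← geom_iteratedDeriv]
      have e : ps = (fun t : ℝ => A' * (1 - B' * t)⁻¹) - (fun _ => A') := rfl
      rw [e, iteratedDeriv_sub (geom_analytic A' B').contDiffAt contDiffAt_const]
      rw [iteratedDeriv_const]
      simp [show j ≠ 0 by omega])
  refine this.trans ?_
  have hn := hM.pos n
  gcongr
  exact (le_abs_self _).trans (hb n)

theorem CM.comp_of_eq {g : F → G} {f : E → F} {a : E} {b : F} (hg : CM M g b) (hf : CM M f a)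
    (hab : f a = b) (hM : Wt M) : CM M (fun x => g (f x)) a := by
  subst hab; exact hg.comp hf hM

theorem CM_smul_aux (p : ℝ × F) (hM : Wt M) : CM M (fun x : ℝ × F => x.1 • x.2) p := by
  obtain ⟨A, B, hA, hB, h⟩ := CM_clm (ContinuousLinearMap.fst ℝ ℝ F) p hM
  obtain ⟨A', B', hA', hB', h'⟩ := CM_clm (ContinuousLinearMap.snd ℝ ℝ F) p hM
  refine ⟨A * A', 2 * max B B', by positivity, by positivity, ?_⟩
  filter_upwards [h, h'] with x hx hx'
  refine ⟨by fun_prop, fun n => ?_⟩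
  have h1 := norm_iteratedFDeriv_smul_le (𝕜 := ℝ) (N := ∞) (f := fun x : ℝ × F => x.1)
    (g := fun x : ℝ × F => x.2) contDiff_fst contDiff_snd x (n := n) (by exact_mod_cast le_top)
  refine h1.trans ?_
  have hn := hM.pos
  set Q := max B B'
  have hQ : 0 < Q := by positivity
  calc _ ≤ ∑ i ∈ Finset.range (n+1), A * A' * Q ^ n * n ! * M n := by
        refine Finset.sum_le_sum fun i hi => ?_
        have hi' : i ≤ n := by simpa [Nat.lt_succ_iff] using hi
        have e1 := hx.2 i
        have e2 := hx'.2 (n - i)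
        simp only [ContinuousLinearMap.coe_fst', ContinuousLinearMap.coe_snd'] at e1 e2
        have e3 := hM.mul_le i (n-i)
        rw [Nat.add_sub_of_le hi'] at e3
        have e4 : ((n.choose i : ℕ) : ℝ) * i ! * (n-i)! = n ! := by
          exact_mod_cast Nat.choose_mul_factorial_mul_factorial hi'
        have p1 := hn i
        have p2 := hn (n-i)
        have e5 : B ^ i * B' ^ (n-i) ≤ Q ^ n := by
          calc B ^ i * B' ^ (n-i) ≤ Q ^ i * Q ^ (n-i) := by
                gcongr
                · exact le_max_left _ _
                · exact le_max_right _ _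
            _ = Q ^ n := by rw [← pow_add, Nat.add_sub_of_le hi']
        calc _ ≤ (n.choose i : ℝ) * (A * B ^ i * i ! * M i) * (A' * B' ^ (n-i) * (n-i)! * M (n-i)) := by
              gcongr
          _ = A * A' * (B ^ i * B' ^ (n-i)) * ((n.choose i : ℝ) * i ! * (n-i)!) * (M i * M (n-i)) := by ring
          _ ≤ A * A' * Q ^ n * n ! * M n := by
              rw [e4]; gcongr
    _ = (n+1) * (A * A' * Q ^ n * n ! * M n) := by simp
    _ ≤ 2 ^ n * (A * A' * Q ^ n * n ! * M n) := by
        have p1 := hn n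
        gcongr
        exact_mod_cast Nat.lt_two_pow_self (n := n)
    _ = _ := by rw [mul_pow]; ring

theorem CM.smul {f : E → ℝ} {g : E → F} {a : E} (hf : CM M f a) (hg : CM M g a) (hM : Wt M) :
    CM M (fun x => f x • g x) a :=
  CM.comp (f := fun x => (f x, g x)) (g := fun p : ℝ × F => p.1 • p.2) (CM_smul_aux (f a, g a) hM)
    (hf.prodMk hg hM) hM

theorem CM.mul {f g : E → ℝ} {a : E} (hf : CM M f a) (hg : CM M g a) (hM : Wt M) :
    CM M (fun x => f x * g x) a := hf.smul hg hM

theorem CM.pow {f : E → ℝ} {a : E} (hf : CM M f a) (hM : Wt M) (k : ℕ) :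
    CM M (fun x => f x ^ k) a := by
  induction k with
  | zero => simpa using CM_const (1:ℝ) a hM
  | succ k ih => simpa only [pow_succ] using ih.mul hf hM

theorem CM.neg {f : E → F} {a : E} (hf : CM M f a) (hM : Wt M) : CM M (fun x => - f x) a := by
  simpa using hf.clm_comp (-(ContinuousLinearMap.id ℝ F)) hM

theorem CM.sub {f g : E → F} {a : E} (hf : CM M f a) (hg : CM M g a) (hM : Wt M) :
    CM M (fun x => f x - g x) a := by
  simpa only [sub_eq_add_neg] using hf.add (hg.neg hM) hM

theorem CM_sum {ι : Type} (s : Finset ι) {f : ι → E → F} {a : E} (hf : ∀ i ∈ s, CM M (f i) a)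
    (hM : Wt M) : CM M (fun x => ∑ i ∈ s, f i x) a := by
  classical
  induction s using Finset.induction_on with
  | empty => simpa using CM_const (0:F) a hM
  | insert i s hi ih =>
    simp only [Finset.sum_insert hi]
    exact (hf i (by simp)).add (ih fun j hj => hf j (by simp [hj])) hM

theorem CM_prod {ι : Type} (s : Finset ι) {f : ι → E → ℝ} {a : E} (hf : ∀ i ∈ s, CM M (f i) a)
    (hM : Wt M) : CM M (fun x => ∏ i ∈ s, f i x) a := by
  classical
  induction s using Finset.induction_on with
  | empty => simpa using CM_const (1:ℝ) a hM
  | insert i s hi ih =>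
    simp only [Finset.prod_insert hi]
    exact (hf i (by simp)).mul (ih fun j hj => hf j (by simp [hj])) hM

theorem CM_pi {ι : Type} [Fintype ι] {f : E → ι → ℝ} {a : E} (hf : ∀ i, CM M (fun x => f x i) a)
    (hM : Wt M) : CM M f a := by
  classical
  have h : CM M (fun x => ∑ i, (ContinuousLinearMap.single ℝ (fun _ : ι => ℝ) i) (f x i)) a :=
    CM_sum _ (fun i _ => (hf i).clm_comp _ hM) hM
  refine h.congr (Eventually.of_forall fun x => ?_)
  simp only [ContinuousLinearMap.single_apply]
  exact Finset.univ_sum_single (f x)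

theorem CM.fderiv {f : E → F} {a : E} (hf : CM M f a) (hM : Wt M) : CM M (fderiv ℝ f) a := by
  obtain ⟨A, B, hA, hB, h⟩ := hf
  obtain ⟨C, hC, hd⟩ := hM.der
  refine ⟨A * B * C, 2 * B * C, by positivity, by positivity, ?_⟩
  filter_upwards [h] with x hx
  refine ⟨hx.1.fderiv_right (m := ∞) (by simp), fun n => ?_⟩
  rw [norm_iteratedFDeriv_fderiv]
  have hn := hM.pos n
  calc _ ≤ A * B ^ (n+1) * (n+1)! * M (n+1) := hx.2 (n+1)
    _ ≤ A * B ^ (n+1) * (n+1)! * (C ^ (n+1) * M n) := by gcongr; exact hd n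
    _ = (n+1) * (A * B * C * (B * C) ^ n * n ! * M n) := by
        rw [Nat.factorial_succ]; push_cast; rw [mul_pow]; ring
    _ ≤ 2 ^ n * (A * B * C * (B * C) ^ n * n ! * M n) := by
        gcongr
        exact_mod_cast Nat.lt_two_pow_self (n := n)
    _ = _ := by rw [mul_assoc 2 B C, mul_pow 2]; ring

theorem CM_inv_aux (p : ℝ) (hp : p ≠ 0) (hM : Wt M) : CM M (fun x : ℝ => x⁻¹) p := by
  refine ⟨2 / |p|, 2 / |p|, by positivity, by positivity, ?_⟩
  have hp' : 0 < |p| := abs_pos.2 hp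
  have h1 : ∀ᶠ x in 𝓝 p, |p| / 2 < |x| :=
    (continuous_abs.tendsto p).eventually (lt_mem_nhds (by linarith))
  filter_upwards [h1] with x hx
  have hx0 : x ≠ 0 := by rintro rfl; simp at hx; linarith
  refine ⟨contDiffAt_inv ℝ hx0, fun n => ?_⟩
  rw [norm_iteratedFDeriv_eq_norm_iteratedDeriv, iteratedDeriv_eq_iterate, iter_deriv_inv]
  have e : ‖(-1:ℝ)^n * n ! * x ^ (-1 - n : ℤ)‖ = n ! * (|x|⁻¹)^(n+1) := by
    rw [norm_mul, norm_mul, norm_pow, norm_neg, norm_one, one_pow, one_mul, Real.norm_natCast,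
      norm_zpow, Real.norm_eq_abs, inv_pow, ← zpow_natCast, ← zpow_neg]
    congr 2; push_cast; ring
  rw [e]
  have e2 : |x|⁻¹ ≤ 2 / |p| := by
    rw [inv_le_comm₀ (by linarith) (by positivity), inv_div]; exact hx.le
  have := hM.one_le n
  calc (n ! : ℝ) * (|x|⁻¹)^(n+1) ≤ n ! * (2/|p|)^(n+1) := by gcongr
    _ = 2/|p| * (2/|p|)^n * n ! * 1 := by ring
    _ ≤ _ := by gcongr

theorem CM.inv {f : E → ℝ} {a : E} (hf : CM M f a) (h0 : f a ≠ 0) (hM : Wt M) :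
    CM M (fun x => (f x)⁻¹) a := CM.comp (CM_inv_aux (f a) h0 hM) hf hM

/-- Autonomous first order systems preserve the class. -/
theorem CM_ode {h : E → F} {a : E} {g : F → (E →L[ℝ] F)} (hg : CM M g (h a))
    (hs : ∀ᶠ x in 𝓝 a, ContDiffAt ℝ ∞ h x) (hd : ∀ᶠ x in 𝓝 a, fderiv ℝ h x = g (h x))
    (hM : Wt M) : CM M h a := by
  have hc : ContinuousAt h a := hs.self_of_nhds.continuousAt
  obtain ⟨A, B, hA, hB, hg⟩ := hg
  set K := B * M 1 with hK
  have hK0 : 0 < K := mul_pos hB (hM.pos 1)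
  set ps : ℝ → ℝ := fun t => (1 - Real.sqrt (1 - 2 * A * K * t)) / K with hps
  set ph : ℝ → ℝ := fun t => A * (1 - K * t)⁻¹ with hph
  have ps0 : ps 0 = 0 := by simp [hps]
  have aph : AnalyticAt ℝ ph (ps 0) := by rw [ps0]; exact geom_analytic A K
  have hev : ∀ᶠ t : ℝ in 𝓝 0, 0 < 1 - 2 * A * K * t := by
    have : ContinuousAt (fun t : ℝ => 1 - 2 * A * K * t) 0 := by fun_prop
    exact this.eventually (lt_mem_nhds (by simp))
  have aps : AnalyticAt ℝ ps 0 := by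
    have e : (fun t : ℝ => (1 - Real.exp (Real.log (1 - 2 * A * K * t) / 2)) / K) =ᶠ[𝓝 0] ps := by
      filter_upwards [hev] with t ht
      simp only [hps]
      rw [Real.exp_half, Real.exp_log ht]
    refine AnalyticAt.congr ?_ e
    have h1 : AnalyticAt ℝ (fun t : ℝ => 1 - 2 * A * K * t) 0 := by fun_prop
    have h2 := h1.log (by simp)
    have h3 : AnalyticAt ℝ (fun t : ℝ => Real.exp (Real.log (1 - 2 * A * K * t) / 2)) 0 :=
      (h2.div_const).rexp
    exact (analyticAt_const.sub h3).div_const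
  have hder : deriv ps =ᶠ[𝓝 0] ph ∘ ps := by
    filter_upwards [hev] with t ht
    have h1 : HasDerivAt (fun t : ℝ => 1 - 2 * A * K * t) (-(2 * A * K)) t := by
      simpa using ((hasDerivAt_id t).const_mul (2 * A * K)).const_sub 1
    have h2 := ((h1.sqrt ht.ne').const_sub 1).div_const K
    rw [show ps = fun t => (1 - Real.sqrt (1 - 2 * A * K * t)) / K from rfl, h2.deriv]
    have hs : 0 < Real.sqrt (1 - 2 * A * K * t) := Real.sqrt_pos.2 ht
    simp only [hph, Function.comp]
    rw [show 1 - K * ((1 - Real.sqrt (1 - 2 * A * K * t)) / K) = Real.sqrt (1 - 2 * A * K * t) by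
      field_simp; ring]
    generalize Real.sqrt (1 - 2 * A * K * t) = q at hs
    field_simp
  have hsucc : ∀ n, iteratedDeriv (n+1) ps 0 = iteratedDeriv n (ph ∘ ps) 0 := by
    intro n
    rw [iteratedDeriv_succ']
    exact hder.iteratedDeriv_eq n
  obtain ⟨C, D, hC, hD, hb⟩ := analytic_bound aps
  have hcev : ∀ᶠ x in 𝓝 a, ‖h x‖ < ‖h a‖ + 1 := hc.norm.eventually (gt_mem_nhds (by simp))
  refine ⟨C + (‖h a‖ + 1), D, by positivity, hD, ?_⟩
  filter_upwards [eventually_eventually_nhds.2 hd, hs, hc.eventually hg, hcev] with x hx hxs hxg hxn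
  refine ⟨hxs, ?_⟩
  have main : ∀ n, 1 ≤ n → ‖iteratedFDeriv ℝ n h x‖ ≤ iteratedDeriv n ps 0 * M n := by
    intro n
    induction n using Nat.strong_induction_on with
    | _ n ih =>
      intro hn
      obtain ⟨m, rfl⟩ : ∃ m, n = m + 1 := ⟨n - 1, by omega⟩
      rw [← norm_iteratedFDeriv_fderiv]
      have e : fderiv ℝ h =ᶠ[𝓝 x] g ∘ h := hx
      rw [(Filter.EventuallyEq.iteratedFDeriv ℝ e m).self_of_nhds]
      have := comp_majorant hM hxg.1 hxs aph aps m (fun k => A * B ^ k * k !)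
        (fun k => by positivity) hxg.2
        (fun k => by rw [ps0, geom_iteratedDeriv, hK]; apply le_of_eq; ring)
        (fun j hj hjm => ih j (by omega) hj)
      rw [← hsucc] at this
      refine this.trans ?_
      have h0 : 0 ≤ iteratedDeriv (m+1) ps 0 :=
        nonneg_of_mul_nonneg_left ((norm_nonneg _).trans this) (hM.pos _)
      gcongr
      exact hM.mono (Nat.le_succ m)
  intro n
  have hMn := hM.pos n
  rcases Nat.eq_zero_or_pos n with rfl | hn
  · simp [hM.zero]; linarith
  · refine (main n hn).trans ?_
    have := (le_abs_self _).trans (hb n)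
    have h2 : C * D ^ n * n ! ≤ (C + (‖h a‖+1)) * D ^ n * n ! := by
      gcongr; linarith [norm_nonneg (h a)]
    gcongr; linarith
end
end QA
end

section
open scoped ContDiff Nat Topology
open Filter Set

namespace QA
section
variable {E F G : Type} [NormedAddCommGroup E] [NormedSpace ℝ E] [NormedAddCommGroup F]
  [NormedSpace ℝ F] [NormedAddCommGroup G] [NormedSpace ℝ G] {M : ℕ → ℝ}

theorem norm_comp_clm_le (L : G →L[ℝ] E) {k : E → F} {O : Set E} (hO : IsOpen O)
    (hk : ∀ y ∈ O, ContDiffAt ℝ ∞ k y) {x : G} (hx : L x ∈ O) (n : ℕ) :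
    ‖iteratedFDeriv ℝ n (fun y => k (L y)) x‖ ≤ ‖iteratedFDeriv ℝ n k (L x)‖ * ‖L‖ ^ n := by
  have hO' : IsOpen (L ⁻¹' O) := hO.preimage L.continuous
  have h1 := L.iteratedFDerivWithin_comp_right (f := k) (s := O) (n := ∞)
    (fun y hy => (hk y hy).contDiffWithinAt) hO.uniqueDiffOn hO'.uniqueDiffOn hx (i := n)
    (by exact_mod_cast le_top)
  rw [iteratedFDerivWithin_of_isOpen n hO hx] at h1
  have h2 := iteratedFDerivWithin_of_isOpen (𝕜 := ℝ) (f := k ∘ L) n hO' hx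
  rw [h2] at h1
  change ‖iteratedFDeriv ℝ n (k ∘ L) x‖ ≤ _
  rw [h1]
  refine (ContinuousMultilinearMap.norm_compContinuousLinearMap_le _ _).trans ?_
  simp

theorem integral_smooth (O : Set E) (hO : IsOpen O) (n : ℕ) : ∀ (F : Type) [NormedAddCommGroup F]
    [NormedSpace ℝ F] [CompleteSpace F] (H : ℝ → E → F)
    (_ : ∀ s ∈ Icc (0:ℝ) 1, ∀ x ∈ O, ContDiffAt ℝ ∞ (Function.uncurry H) (s, x))
    (_ : ∀ n : ℕ, ∃ K : ℝ, ∀ s ∈ Icc (0:ℝ) 1, ∀ x ∈ O, ‖iteratedFDeriv ℝ n (H s) x‖ ≤ K),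
    ContDiffOn ℝ n (fun x => ∫ s in (0:ℝ)..1, H s x) O ∧
    ∀ K : ℝ, (∀ s ∈ Icc (0:ℝ) 1, ∀ x ∈ O, ‖iteratedFDeriv ℝ n (H s) x‖ ≤ K) →
      ∀ x ∈ O, ‖iteratedFDeriv ℝ n (fun x => ∫ s in (0:ℝ)..1, H s x) x‖ ≤ K := by
  have hI : ∀ t : ℝ, t ∈ uIoc (0:ℝ) 1 → t ∈ Icc (0:ℝ) 1 := fun t ht => by
    rw [uIoc_of_le zero_le_one] at ht; exact Ioc_subset_Icc_self ht
  have hder : ∀ (F : Type) [NormedAddCommGroup F]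
    [NormedSpace ℝ F] [CompleteSpace F] (H : ℝ → E → F)
    (_ : ∀ s ∈ Icc (0:ℝ) 1, ∀ x ∈ O, ContDiffAt ℝ ∞ (Function.uncurry H) (s, x))
    (_ : ∀ n : ℕ, ∃ K : ℝ, ∀ s ∈ Icc (0:ℝ) 1, ∀ x ∈ O, ‖iteratedFDeriv ℝ n (H s) x‖ ≤ K),
    (∀ s ∈ Icc (0:ℝ) 1, ∀ x ∈ O, ContDiffAt ℝ ∞ (Function.uncurry (fun s => fderiv ℝ (H s))) (s, x)) ∧
    ∀ x ∈ O, HasFDerivAt (fun x => ∫ s in (0:ℝ)..1, H s x) (∫ s in (0:ℝ)..1, fderiv ℝ (H s) x) x := by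
    intro F _ _ _ H h1 h2
    have h3 : (∀ s ∈ Icc (0:ℝ) 1, ∀ x ∈ O,
        ContDiffAt ℝ ∞ (Function.uncurry (fun s => fderiv ℝ (H s))) (s, x)) := by
      intro s hs x hx
      refine ContDiffAt.fderiv (f := fun p : ℝ × E => H p.1) (g := fun p => p.2) (n := ∞) ?_
        contDiffAt_snd (by simp)
      exact ContDiffAt.comp ((s,x),x) (g := Function.uncurry H)
        (f := fun q : (ℝ × E) × E => (q.1.1, q.2)) (h1 s hs x hx) (by fun_prop)
    refine ⟨h3, fun x hx => ?_⟩
    have cont : ∀ x ∈ O, ContinuousOn (fun s => H s x) (Icc 0 1) := fun x hx s hs =>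
      (ContinuousAt.comp (x := s) (g := Function.uncurry H) (f := fun s => (s,x))
        (h1 s hs x hx).continuousAt (by fun_prop)).continuousWithinAt
    have cont' : ContinuousOn (fun s => fderiv ℝ (H s) x) (Icc 0 1) := fun s hs =>
      (ContinuousAt.comp (x := s) (g := Function.uncurry (fun s => fderiv ℝ (H s)))
        (f := fun s => (s,x)) (h3 s hs x hx).continuousAt (by fun_prop)).continuousWithinAt
    have mI : ∀ {G : Type} [NormedAddCommGroup G] [NormedSpace ℝ G] (g : ℝ → G),
        ContinuousOn g (Icc 0 1) → IntervalIntegrable g MeasureTheory.volume 0 1 := by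
      intro G _ _ g hg
      exact ContinuousOn.intervalIntegrable (by rwa [uIcc_of_le zero_le_one])
    obtain ⟨K, hK⟩ := h2 1
    refine intervalIntegral.hasFDerivAt_integral_of_dominated_of_fderiv_le (s := O)
      (bound := fun _ => K) (F := fun x s => H s x) (F' := fun x s => fderiv ℝ (H s) x)
      (hO.mem_nhds hx) ?_ (mI _ (cont x hx)) ?_ ?_ (mI _ continuousOn_const) ?_
    · filter_upwards [hO.mem_nhds hx] with y hy
      exact (intervalIntegrable_iff.1 (mI _ (cont y hy))).aestronglyMeasurable
    · exact (intervalIntegrable_iff.1 (mI _ cont')).aestronglyMeasurable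
    · refine Eventually.of_forall fun t ht y hy => ?_
      rw [← norm_iteratedFDeriv_one]
      exact hK t (hI t ht) y hy
    · refine Eventually.of_forall fun t ht y hy => ?_
      have : ContDiffAt ℝ ∞ (H t) y := ContDiffAt.comp y (g := Function.uncurry H)
        (f := fun q : E => (t, q)) (h1 t (hI t ht) y hy) (by fun_prop)
      exact (this.differentiableAt (by simp)).hasFDerivAt
  induction n with
  | zero =>
    intro F _ _ _ H h1 h2
    have h := (hder F H h1 h2).2
    refine ⟨?_, fun K hK x hx => ?_⟩
    · have : DifferentiableOn ℝ (fun x => ∫ s in (0:ℝ)..1, H s x) O :=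
        fun x hx => (h x hx).differentiableAt.differentiableWithinAt
      simpa using this.continuousOn
    · rw [norm_iteratedFDeriv_zero]
      have := intervalIntegral.norm_integral_le_of_norm_le_const (a := (0:ℝ)) (b := 1) (C := K)
        (f := fun s => H s x) (fun s hs => by
          have := hK s (hI s hs) x hx
          rwa [norm_iteratedFDeriv_zero] at this)
      simpa using this
  | succ n ih =>
    intro F _ _ _ H h1 h2
    obtain ⟨h3, h⟩ := hder F H h1 h2
    have h2' : ∀ n : ℕ, ∃ K : ℝ, ∀ s ∈ Icc (0:ℝ) 1, ∀ x ∈ O,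
        ‖iteratedFDeriv ℝ n (fderiv ℝ (H s)) x‖ ≤ K := by
      intro n
      obtain ⟨K, hK⟩ := h2 (n+1)
      refine ⟨K, fun s hs x hx => ?_⟩
      rw [norm_iteratedFDeriv_fderiv]; exact hK s hs x hx
    obtain ⟨i1, i2⟩ := ih (E →L[ℝ] F) (fun s => fderiv ℝ (H s)) h3 h2'
    have e : ∀ x ∈ O, fderiv ℝ (fun x => ∫ s in (0:ℝ)..1, H s x) x
        = ∫ s in (0:ℝ)..1, fderiv ℝ (H s) x := fun x hx => (h x hx).fderiv
    refine ⟨?_, fun K hK x hx => ?_⟩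
    · have := (contDiffOn_succ_iff_fderiv_of_isOpen (𝕜 := ℝ) (n := n)
        (f := fun x => ∫ s in (0:ℝ)..1, H s x) hO).2 ⟨fun x hx =>
          (h x hx).differentiableAt.differentiableWithinAt, by simp, i1.congr e⟩
      exact_mod_cast this
    · rw [← norm_iteratedFDeriv_fderiv]
      have e2 : fderiv ℝ (fun x => ∫ s in (0:ℝ)..1, H s x) =ᶠ[𝓝 x]
          fun x => ∫ s in (0:ℝ)..1, fderiv ℝ (H s) x := by
        filter_upwards [hO.mem_nhds hx] with y hy using e y hy
      rw [e2.iteratedFDeriv ℝ n |>.eq_of_nhds]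
      refine i2 K (fun s hs x hx => ?_) x hx
      rw [norm_iteratedFDeriv_fderiv]; exact hK s hs x hx

/-- Division by a linear form. -/
theorem CM_divide {f : E → ℝ} {a : E} (hf : CM M f a) (l : E →L[ℝ] ℝ) (e : E) (hle : l e = 1)
    (ha : l a = 0) (h0 : ∀ᶠ x in 𝓝 a, l x = 0 → f x = 0) (hM : Wt M) :
    ∃ g : E → ℝ, CM M g a ∧ ∀ᶠ x in 𝓝 a, f x = l x * g x := by
  set k : E → ℝ := fun x => fderiv ℝ f x e with hk
  have hkC : CM M k a := (hf.fderiv hM).clm_comp (ContinuousLinearMap.apply ℝ ℝ e) hM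
  obtain ⟨A, B, hA, hB, hkb⟩ := hkC
  have hfs : ∀ᶠ x in 𝓝 a, ContDiffAt ℝ ∞ f x := hf.eventually.mono fun x h => h.contDiffAt
  obtain ⟨r, hr, hball⟩ := Metric.eventually_nhds_iff_ball.1 (hkb.and (hfs.and h0))
  set p : ℝ → E →L[ℝ] E := fun s => ContinuousLinearMap.id ℝ E - (1 - s) • (l.smulRight e) with hp
  have hpx : ∀ s x, p s x = x - ((1 - s) * l x) • e := fun s x => by
    simp [hp, smul_smul]
  set Q := 1 + ‖l‖ * ‖e‖ with hQ
  have hQ1 : 1 ≤ Q := by simp only [hQ]; linarith [mul_nonneg (norm_nonneg l) (norm_nonneg e)]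
  have hpn : ∀ s ∈ Icc (0:ℝ) 1, ‖p s‖ ≤ Q := by
    intro s hs
    refine ContinuousLinearMap.opNorm_le_bound _ (by linarith) fun x => ?_
    rw [hpx]
    refine (norm_sub_le _ _).trans ?_
    rw [norm_smul, norm_mul]
    have h1 : ‖1 - s‖ ≤ 1 := by rw [Real.norm_eq_abs, abs_le]; constructor <;> linarith [hs.1, hs.2]
    have h2 := l.le_opNorm x
    calc ‖x‖ + ‖1 - s‖ * ‖l x‖ * ‖e‖ ≤ ‖x‖ + 1 * (‖l‖ * ‖x‖) * ‖e‖ := by gcongr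
      _ = Q * ‖x‖ := by simp only [hQ]; ring
  have hpa : ∀ s, p s a = a := fun s => by rw [hpx, ha]; simp
  set O := Metric.ball a (r / Q) with hOdef
  have hO : IsOpen O := Metric.isOpen_ball
  have hmap : ∀ s ∈ Icc (0:ℝ) 1, ∀ x ∈ O, p s x ∈ Metric.ball a r := by
    intro s hs x hx
    rw [Metric.mem_ball, dist_eq_norm]
    have : p s x - a = p s (x - a) := by rw [map_sub, hpa]
    rw [this]
    rw [hOdef, Metric.mem_ball, dist_eq_norm, lt_div_iff₀ (by linarith)] at hx
    calc _ ≤ ‖p s‖ * ‖x - a‖ := (p s).le_opNorm _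
      _ ≤ Q * ‖x - a‖ := by gcongr; exact hpn s hs
      _ < r := by linarith
  have hOa : O ∈ 𝓝 a := Metric.ball_mem_nhds _ (by positivity)
  set H : ℝ → E → ℝ := fun s x => k (p s x) with hH
  have H1 : ∀ s ∈ Icc (0:ℝ) 1, ∀ x ∈ O, ContDiffAt ℝ ∞ (Function.uncurry H) (s, x) := by
    intro s hs x hx
    refine ContDiffAt.comp (s,x) (g := k) (f := fun q : ℝ × E => p q.1 q.2)
      (hball _ (hmap s hs x hx)).1.1 ?_
    simp only [hpx]
    fun_prop
  have H2 : ∀ n : ℕ, ∀ s ∈ Icc (0:ℝ) 1, ∀ x ∈ O,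
      ‖iteratedFDeriv ℝ n (H s) x‖ ≤ A * (B * Q) ^ n * n ! * M n := by
    intro n s hs x hx
    have := norm_comp_clm_le (p s) Metric.isOpen_ball (fun y hy => (hball y hy).1.1)
      (hmap s hs x hx) n
    refine this.trans ?_
    calc _ ≤ (A * B ^ n * n ! * M n) * Q ^ n := by
          have := hpn s hs
          have h1 := hM.one_le n
          gcongr
          exact (hball _ (hmap s hs x hx)).1.2 n
      _ = _ := by rw [mul_pow]; ring
  have HH := fun n => integral_smooth O hO n ℝ H H1 (fun n => ⟨_, H2 n⟩)
  refine ⟨fun x => ∫ s in (0:ℝ)..1, H s x, ⟨A, B * Q, hA, by positivity, ?_⟩, ?_⟩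
  · filter_upwards [hO.mem_nhds (Metric.mem_ball_self (by positivity : 0 < r / Q))] with x hx
    refine ⟨?_, fun n => (HH n).2 _ (H2 n) x hx⟩
    rw [contDiffAt_infty]
    exact fun n => ((HH n).1 x hx).contDiffAt (hO.mem_nhds hx)
  · filter_upwards [hO.mem_nhds (Metric.mem_ball_self (by positivity : 0 < r / Q))] with x hx
    have hd : ∀ s ∈ uIcc (0:ℝ) 1, HasDerivAt (fun s => f (p s x)) (l x * H s x) s := by
      intro s hs
      rw [uIcc_of_le zero_le_one] at hs
      have h1 : HasDerivAt (fun s => p s x) (l x • e) s := by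
        simp only [hpx]
        have := ((((hasDerivAt_id s).const_sub 1).mul_const (l x)).smul_const e).const_sub x
        simpa using this
      have h2 := (((hball _ (hmap s hs x hx)).2.1.differentiableAt (by simp)).hasFDerivAt).comp_hasDerivAt s h1
      rw [map_smul, smul_eq_mul] at h2
      exact h2
    have hi : IntervalIntegrable (fun s => l x * H s x) MeasureTheory.volume 0 1 := by
      refine ContinuousOn.intervalIntegrable ?_
      rw [uIcc_of_le zero_le_one]
      exact continuousOn_const.mul fun s hs =>
        (ContinuousAt.comp (x := s) (g := Function.uncurry H) (f := fun s => (s,x))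
        (H1 s hs x hx).continuousAt (by fun_prop)).continuousWithinAt
    have := intervalIntegral.integral_eq_sub_of_hasDerivAt hd hi
    rw [intervalIntegral.integral_const_mul] at this
    rw [this]
    have e0 : f (p 0 x) = 0 := by
      refine (hball _ (hmap 0 (by simp) x hx)).2.2 ?_
      rw [hpx]; simp [hle]
    rw [e0, hpx]; simp
end
end QA
end

section
open scoped ContDiff Nat Topology
open Filter Set

namespace QA
section
variable {E F G : Type} [NormedAddCommGroup E] [NormedSpace ℝ E] [NormedAddCommGroup F]
  [NormedSpace ℝ F] [NormedAddCommGroup G] [NormedSpace ℝ G] {M : ℕ → ℝ}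

theorem inr_invertible (T : E × ℝ →L[ℝ] ℝ) (h : T (0, 1) ≠ 0) :
    (T ∘L .inr ℝ E ℝ).IsInvertible := by
  refine ⟨(ContinuousLinearEquiv.unitsEquivAut ℝ (Units.mk0 _ h)), ?_⟩
  ext
  simp

/-- The implicit function theorem in the class. -/
theorem CM_implicit [CompleteSpace E] {f : E × ℝ → ℝ} {a : E} {b : ℝ} (hf : CM M f (a, b))
    (h0 : f (a, b) = 0) (h1 : fderiv ℝ f (a, b) (0, 1) ≠ 0) (hM : Wt M) :
    ∃ g : E → ℝ, CM M g a ∧ g a = b ∧ ∀ᶠ x in 𝓝 a, f (x, g x) = 0 := by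
  set g := hf.contDiffAt.implicitFunction (by simp) (inr_invertible _ h1) with hg
  have ga : g a = b := hf.contDiffAt.implicitFunction_apply_self (by simp) (inr_invertible _ h1)
  have gz : ∀ᶠ x in 𝓝 a, f (x, g x) = 0 := by
    have := hf.contDiffAt.eventually_apply_implicitFunction (by simp) (inr_invertible _ h1)
    rwa [h0] at this
  have gs : ContDiffAt ℝ ∞ g a := hf.contDiffAt.contDiffAt_implicitFunction (by simp) (inr_invertible _ h1)
  have gc : ∀ᶠ x in 𝓝 a, ContinuousAt g x := by
    have := (gs.of_le (m := 1) (by exact_mod_cast le_top)).eventually (by simp)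
    filter_upwards [this] with x hx using hx.continuousAt
  have hcf : ContinuousAt (fun x => (x, g x)) a := continuousAt_id.prodMk gs.continuousAt
  have hdt : CM M (fun p => fderiv ℝ f p (0, 1)) (a, b) :=
    (hf.fderiv hM).clm_comp (ContinuousLinearMap.apply ℝ ℝ ((0, 1) : E × ℝ)) hM
  have ev1 : ∀ᶠ x in 𝓝 a, CM M f (x, g x) := by
    apply hcf.eventually; beta_reduce; rw [ga]; exact hf.eventually
  have ev2 : ∀ᶠ x in 𝓝 a, fderiv ℝ f (x, g x) (0, 1) ≠ 0 := by
    apply hcf.eventually (p := fun q => fderiv ℝ f q (0, 1) ≠ 0)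
    beta_reduce; rw [ga]; exact hdt.continuousAt.eventually_ne h1
  have ev3 : ∀ᶠ x in 𝓝 a, ContDiffAt ℝ ∞ g x := by
    filter_upwards [ev1, ev2, eventually_eventually_nhds.2 gz, gc] with x hx1 hx2 hx3 hx4
    set g1 := hx1.contDiffAt.implicitFunction (by simp) (inr_invertible _ hx2)
    have s1 : ContDiffAt ℝ ∞ g1 x :=
      hx1.contDiffAt.contDiffAt_implicitFunction (by simp) (inr_invertible _ hx2)
    have s2 := hx1.contDiffAt.eventually_apply_eq_iff_implicitFunction (by simp) (inr_invertible _ hx2)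
    have hc : ContinuousAt (fun x => (x, g x)) x := continuousAt_id.prodMk hx4
    have s3 := hc.eventually s2
    refine s1.congr_of_eventuallyEq ?_
    filter_upwards [s3, hx3] with y hy hy2
    exact (hy.1 (hy2.trans hx3.self_of_nhds.symm)).symm
  set Gf : E × ℝ → (E →L[ℝ] E × ℝ) := fun p => .inl ℝ E ℝ +
    (ContinuousLinearMap.compL ℝ E ℝ (E × ℝ) (.inr ℝ E ℝ))
      ((-(fderiv ℝ f p (0, 1))⁻¹) • (fderiv ℝ f p ∘L .inl ℝ E ℝ)) with hGf
  have hG : CM M Gf (a, b) := by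
    refine (CM_const _ _ hM).add (CM.clm_comp (((hdt.inv h1 hM).neg hM).smul ?_ hM) _ hM) hM
    exact (hf.fderiv hM).clm_comp ((ContinuousLinearMap.compL ℝ E (E × ℝ) ℝ).flip (.inl ℝ E ℝ)) hM
  have hh : CM M (fun x => (x, g x)) a := by
    refine CM_ode (g := Gf) (by rw [ga]; exact hG) ?_ ?_ hM
    · filter_upwards [ev3] with x hx
      exact contDiffAt_id.prodMk hx
    · filter_upwards [ev1, ev2, eventually_eventually_nhds.2 gz, ev3] with x hx1 hx2 hx3 hx4
      have d1 : HasFDerivAt g (fderiv ℝ g x) x := (hx4.differentiableAt (by simp)).hasFDerivAt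
      have d2 := (hasFDerivAt_id x).prodMk d1
      have d3 := (hx1.contDiffAt.differentiableAt (by simp)).hasFDerivAt.comp x d2
      have d4 : (f ∘ fun x => (id x, g x)) =ᶠ[𝓝 x] fun _ => 0 := hx3
      have d5 := (d3.congr_of_eventuallyEq d4.symm).unique (hasFDerivAt_const (0:ℝ) x)
      rw [show (fun x => (x, g x)) = fun x => (id x, g x) from rfl, d2.fderiv]
      ext v
      · simp [hGf]
      · have d6 := congrArg (fun T => T v) d5
        simp only [ContinuousLinearMap.comp_apply, ContinuousLinearMap.prod_apply,
          zero_apply, ContinuousLinearMap.id_apply] at d6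
        have d7 : ((v, fderiv ℝ g x v) : E × ℝ) = (v, 0) + (fderiv ℝ g x v) • (0, 1) := by simp
        rw [d7, map_add, map_smul, smul_eq_mul] at d6
        simp [hGf]
        field_simp
        linarith
  exact ⟨g, hh.clm_comp (.snd ℝ E ℝ) hM, ga, gz⟩
end
end QA
end

section
open scoped ContDiff Nat Topology
open Filter Set

namespace QA
section
variable {E F G : Type} [NormedAddCommGroup E] [NormedSpace ℝ E] [NormedAddCommGroup F]
  [NormedSpace ℝ F] [NormedAddCommGroup G] [NormedSpace ℝ G] {M : ℕ → ℝ}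

theorem contDiffAt_deriv {g : ℝ → ℝ} {x : ℝ} (h : ContDiffAt ℝ ∞ g x) : ContDiffAt ℝ ∞ (deriv g) x := by
  have := (h.fderiv_right (m := ∞) (by simp)).clm_apply (contDiffAt_const (c := (1:ℝ)))
  exact this

theorem contDiffAt_iteratedDeriv {g : ℝ → ℝ} {x : ℝ} (n : ℕ) (h : ContDiffAt ℝ ∞ g x) :
    ContDiffAt ℝ ∞ (iteratedDeriv n g) x := by
  induction n with
  | zero => simpa using h
  | succ n ih => rw [iteratedDeriv_succ]; exact contDiffAt_deriv ih

theorem iteratedDeriv_iteratedDeriv_add (g : ℝ → ℝ) (n j : ℕ) :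
    iteratedDeriv j (iteratedDeriv n g) = iteratedDeriv (n + j) g := by
  simp only [iteratedDeriv_eq_iterate]
  rw [← Function.iterate_add_apply, add_comm]

theorem taylor_bound {G : ℝ → ℝ} {x h : ℝ} (hh : 0 < h) (p : ℕ)
    (hG : ∀ y ∈ Icc x (x+h), ContDiffAt ℝ ∞ G y) (D : ℕ → ℝ)
    (h1 : ∀ j ≤ p, |iteratedDeriv j G x| ≤ D j)
    (h2 : ∀ y ∈ Icc x (x+h), |iteratedDeriv (p+1) G y| ≤ D (p+1)) :
    |G (x+h)| ≤ ∑ j ∈ Finset.range (p+2), D j * h ^ j / j ! := by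
  have hlt : x < x + h := by linarith
  have hu : UniqueDiffOn ℝ (Icc x (x+h)) := uniqueDiffOn_Icc hlt
  have e1 : uIcc x (x+h) = Icc x (x+h) := uIcc_of_le hlt.le
  have e2 : uIoo x (x+h) = Ioo x (x+h) := uIoo_of_le hlt.le
  have hw : ∀ n : ℕ, ∀ y ∈ Icc x (x+h), iteratedDerivWithin n G (Icc x (x+h)) y = iteratedDeriv n G y :=
    fun n y hy => iteratedDerivWithin_eq_iteratedDeriv hu ((hG y hy).of_le (by exact_mod_cast le_top)) hy
  obtain ⟨y, hy, hyy⟩ := taylor_mean_remainder_lagrange (f := G) (n := p) hlt.ne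
    (by rw [e1]; exact fun y hy => ((hG y hy).of_le (by exact_mod_cast le_top)).contDiffWithinAt)
    (by
      rw [e1, e2]
      intro y hy
      have := (contDiffAt_iteratedDeriv p (hG y (Ioo_subset_Icc_self hy))).differentiableAt (by simp)
      refine (this.differentiableWithinAt).congr (fun z hz => hw p z (Ioo_subset_Icc_self hz))
        (hw p y (Ioo_subset_Icc_self hy)))
  rw [e1, e2] at *
  rw [hw _ y (Ioo_subset_Icc_self hy), taylor_within_apply] at hyy
  have e3 : G (x+h) = ∑ k ∈ Finset.range (p+1), iteratedDeriv k G x * h ^ k / k ! +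
      iteratedDeriv (p+1) G y * h ^ (p+1) / (p+1)! := by
    have : x + h - x = h := by ring
    rw [this] at hyy
    rw [← hyy]
    have e4 : ∑ k ∈ Finset.range (p+1), ((k ! : ℝ)⁻¹ * h ^ k) • iteratedDerivWithin k G (Icc x (x + h)) x
        = ∑ k ∈ Finset.range (p+1), iteratedDeriv k G x * h ^ k / k ! := by
      refine Finset.sum_congr rfl fun k _ => ?_
      rw [hw k x (left_mem_Icc.2 hlt.le), smul_eq_mul]; field_simp
    rw [e4]; ring
  rw [e3, Finset.sum_range_succ _ (p+1)]
  refine (abs_add_le _ _).trans (add_le_add ((Finset.abs_sum_le_sum_abs _ _).trans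
    (Finset.sum_le_sum fun j hj => ?_)) ?_)
  · rw [abs_div, abs_mul, abs_of_pos (pow_pos hh j), abs_of_pos (by positivity : (0:ℝ) < j !)]
    gcongr; exact h1 j (by simpa [Nat.lt_succ_iff] using hj)
  · rw [abs_div, abs_mul, abs_of_pos (pow_pos hh _), abs_of_pos (by positivity : (0:ℝ) < (p+1)!)]
    gcongr; exact h2 y (Ioo_subset_Icc_self hy)

theorem bang_step {m : ℕ → ℝ} (mpos : ∀ n, 0 < m n) (mr : Monotone fun n => m (n+1) / m n)
    {g : ℝ → ℝ} {x h c : ℝ} (k : ℕ) (hh : 0 < h)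
    (hg : ∀ y ∈ Icc x (x+h), ContDiffAt ℝ ∞ g y ∧ ∀ n, |iteratedDeriv n g y| ≤ m n)
    (hc : Real.exp (-(k+1)) ≤ c)
    (hx : ∀ n, |iteratedDeriv n g x| ≤ c * Real.exp n * m n) (n : ℕ) :
    |iteratedDeriv n g (x+h)| ≤ c * Real.exp (Real.exp 1 * h * (m (k+1) / m k)) * Real.exp n * m n := by
  have hc0 : 0 < c := (Real.exp_pos _).trans_le hc
  set ρ := m (k+1) / m k with hρ
  have hρ0 : 0 < ρ := div_pos (mpos _) (mpos _)
  have hmul : ∀ n j, n + j ≤ k + 1 → m (n+j) ≤ m n * ρ ^ j := by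
    intro n j
    induction j with
    | zero => intro _; simp
    | succ j ih =>
      intro hj
      have h1 := ih (by omega)
      have h2 : m (n + j + 1) / m (n+j) ≤ ρ := mr (by omega : n + j ≤ k)
      rw [div_le_iff₀ (mpos _)] at h2
      calc m (n + (j+1)) ≤ ρ * m (n+j) := h2
        _ ≤ ρ * (m n * ρ ^ j) := by gcongr
        _ = _ := by ring
  have hexp1 : 1 ≤ Real.exp (Real.exp 1 * h * ρ) := Real.one_le_exp (by positivity)
  have hmn := mpos n
  by_cases hn : n ≤ k
  · obtain ⟨p, rfl⟩ := Nat.exists_eq_add_of_le hn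
    have := taylor_bound (G := iteratedDeriv n g) hh p
      (fun y hy => contDiffAt_iteratedDeriv n (hg y hy).1)
      (fun j => c * Real.exp (n + j) * (m n * ρ ^ j)) (fun j hj => by
        rw [iteratedDeriv_iteratedDeriv_add]
        refine (hx (n+j)).trans ?_
        push_cast
        gcongr
        exact hmul n j (by omega)) (fun y hy => by
        rw [iteratedDeriv_iteratedDeriv_add]
        refine ((hg y hy).2 (n+(p+1))).trans ?_
        calc m (n + (p+1)) ≤ 1 * (m n * ρ ^ (p+1)) := by rw [one_mul]; exact hmul n (p+1) (by omega)
          _ ≤ _ := by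
            gcongr
            push_cast at hc ⊢
            calc (1:ℝ) = Real.exp (-(n + p + 1)) * Real.exp (n + (p+1)) := by
                  rw [← Real.exp_add, ← Real.exp_zero]; congr 1; ring
              _ ≤ _ := by gcongr)
    refine this.trans ?_
    have e : ∀ j ∈ Finset.range (p+2), c * Real.exp (n + j) * (m n * ρ ^ j) * h ^ j / j ! =
        c * Real.exp n * m n * ((Real.exp 1 * h * ρ) ^ j / j !) := by
      intro j _
      rw [Real.exp_add, ← mul_one (j:ℝ), Real.exp_nat_mul]; simp only [mul_pow]; ring
    rw [Finset.sum_congr rfl e, ← Finset.mul_sum]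
    have := Real.sum_le_exp_of_nonneg (x := Real.exp 1 * h * ρ) (by positivity) (p+2)
    calc _ ≤ c * Real.exp n * m n * Real.exp (Real.exp 1 * h * ρ) := by gcongr
      _ = _ := by ring
  · refine ((hg (x+h) ⟨by linarith, le_rfl⟩).2 n).trans ?_
    have h1 : 1 ≤ c * Real.exp n := by
      calc (1:ℝ) = Real.exp (-n) * Real.exp n := by rw [← Real.exp_add]; simp
        _ ≤ _ := by
          gcongr
          refine le_trans ?_ hc
          rw [Real.exp_le_exp]
          have : (k:ℝ) + 1 ≤ n := by exact_mod_cast (by omega : k + 1 ≤ n)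
          linarith
    calc m n = 1 * 1 * m n := by ring
      _ ≤ (c * Real.exp n) * Real.exp (Real.exp 1 * h * ρ) * m n := by gcongr
      _ = _ := by ring

theorem bang {m : ℕ → ℝ} (mpos : ∀ n, 0 < m n) (mr : Monotone fun n => m (n+1) / m n)
    (md : ∀ C : ℝ, ∃ K, C ≤ ∑ k ∈ Finset.range K, m k / m (k+1))
    {g : ℝ → ℝ} {T : ℝ} (hT : 0 ≤ T)
    (hg : ∀ y ∈ Icc 0 T, ContDiffAt ℝ ∞ g y ∧ ∀ n, |iteratedDeriv n g y| ≤ m n)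
    (h0 : ∀ n, iteratedDeriv n g 0 = 0) : g T = 0 := by
  have key : ∀ N K : ℕ, N ≤ K → ∀ x ∈ Icc 0 T,
      Real.exp 1 * x ≤ ∑ k ∈ Finset.Ico N K, m k / m (k+1) →
      ∀ n, |iteratedDeriv n g x| ≤ Real.exp (-(N:ℝ)) * Real.exp n * m n := by
    intro N K hNK
    induction hNK using Nat.decreasingInduction with
    | self =>
      intro x hx hxx n
      have hx0 : x = 0 := by
        simp only [Finset.Ico_self, Finset.sum_empty] at hxx
        have := Real.exp_pos 1
        have := hx.1
        nlinarith
      rw [hx0, h0]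
      have := mpos n
      simp; positivity
    | of_succ N hN ih =>
      intro x hx hxx n
      rw [Finset.sum_eq_sum_Ico_succ_bot (by omega)] at hxx
      have hmono : Real.exp (-((N+1:ℕ):ℝ)) ≤ Real.exp (-(N:ℝ)) := by
        rw [Real.exp_le_exp]; push_cast; linarith
      by_cases hc : Real.exp 1 * x ≤ ∑ k ∈ Finset.Ico (N+1) K, m k / m (k+1)
      · refine (ih x hx hc n).trans ?_
        have := mpos n
        gcongr
      · push Not at hc
        set y := (∑ k ∈ Finset.Ico (N+1) K, m k / m (k+1)) / Real.exp 1 with hy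
        have he := Real.exp_pos 1
        have hy1 : Real.exp 1 * y = ∑ k ∈ Finset.Ico (N+1) K, m k / m (k+1) := by
          rw [hy]; field_simp
        have hy0 : 0 ≤ y := by
          have : ∀ k, 0 < m k / m (k+1) := fun k => div_pos (mpos _) (mpos _)
          rw [hy]; exact div_nonneg (Finset.sum_nonneg fun k _ => (this k).le) he.le
        have hyx : y < x := by rw [← hy1] at hc; nlinarith
        have hyT : y ∈ Icc 0 T := ⟨hy0, hyx.le.trans hx.2⟩
        have h1 := ih y hyT hy1.le
        have h2 := bang_step mpos mr (g := g) (x := y) (h := x - y) N (by linarith)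
          (fun z hz => hg z ⟨hy0.trans hz.1, by linarith [hz.2, hx.2]⟩) (c := Real.exp (-((N+1:ℕ):ℝ)))
          (by push_cast; exact le_rfl) h1 n
        rw [show y + (x - y) = x by ring] at h2
        refine h2.trans ?_
        have := mpos n
        have h3 : Real.exp 1 * (x - y) * (m (N+1) / m N) ≤ 1 := by
          have : Real.exp 1 * (x - y) ≤ m N / m (N+1) := by rw [mul_sub, hy1]; linarith
          have p1 := mpos N
          have p2 := mpos (N+1)
          calc _ ≤ m N / m (N+1) * (m (N+1) / m N) := by gcongr
            _ = 1 := by field_simp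
        calc _ ≤ Real.exp (-((N+1:ℕ):ℝ)) * Real.exp 1 * Real.exp n * m n := by gcongr
          _ = _ := by rw [← Real.exp_add]; push_cast; ring_nf
  have key2 : ∀ N : ℕ, |g T| ≤ Real.exp (-(N:ℝ)) * m 0 := by
    intro N
    obtain ⟨K, hK⟩ := md (∑ k ∈ Finset.range N, m k / m (k+1) + Real.exp 1 * T)
    have pp : ∀ k, 0 ≤ m k / m (k+1) := fun k => (div_pos (mpos _) (mpos _)).le
    have hK2 : ∑ k ∈ Finset.range K, m k / m (k+1) ≤ ∑ k ∈ Finset.range (max N K), m k / m (k+1) :=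
      Finset.sum_le_sum_of_subset_of_nonneg (by intro k hk; simp at *; omega) (fun k _ _ => pp k)
    have h3 := Finset.sum_range_add_sum_Ico (fun k => m k / m (k+1)) (le_max_left N K)
    have := key N (max N K) (le_max_left _ _) T ⟨hT, le_rfl⟩ (by linarith) 0
    simpa using this
  have hlim : Tendsto (fun N : ℕ => Real.exp (-(N:ℝ)) * m 0) atTop (𝓝 (0 * m 0)) := by
    refine Tendsto.mul_const _ ?_
    exact Real.tendsto_exp_neg_atTop_nhds_zero.comp tendsto_natCast_atTop_atTop
  rw [zero_mul] at hlim
  exact abs_eq_zero.1 (le_antisymm (ge_of_tendsto' hlim key2) (abs_nonneg _))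

/-- The divergence condition. -/
def Dv (M : ℕ → ℝ) : Prop := ∀ C : ℝ, ∃ K, C ≤ ∑ k ∈ Finset.range K, M k / ((k+1) * M (k+1))

theorem iteratedDeriv_line_eq {g : E → F} (p v : E) (t : ℝ) (n : ℕ) {O : Set E} (hO : IsOpen O)
    (hg : ∀ y ∈ O, ContDiffAt ℝ ∞ g y) (ht : p + t • v ∈ O) :
    ContDiffAt ℝ ∞ (fun t : ℝ => g (p + t • v)) t ∧
    ‖iteratedDeriv n (fun t : ℝ => g (p + t • v)) t‖ ≤ ‖iteratedFDeriv ℝ n g (p + t • v)‖ * ‖v‖ ^ n := by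
  refine ⟨(hg _ ht).comp t (by fun_prop), ?_⟩
  rw [← norm_iteratedFDeriv_eq_norm_iteratedDeriv]
  set L : ℝ →L[ℝ] E := (ContinuousLinearMap.id ℝ ℝ).smulRight v with hL
  have hLt : ∀ t, L t = t • v := fun t => by simp [hL]
  have := norm_comp_clm_le L (k := fun y => g (p + y)) (O := (fun y => p + y) ⁻¹' O)
    (hO.preimage (by fun_prop)) (fun y hy => (hg _ hy).comp y (by fun_prop)) (x := t)
    (by rw [hLt]; exact ht) n
  rw [iteratedFDeriv_comp_add_left] at this
  simp only [hLt] at this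
  refine this.trans ?_
  gcongr
  refine ContinuousLinearMap.opNorm_le_bound _ (norm_nonneg _) fun t => ?_
  rw [hLt, norm_smul, mul_comm]

/-- Quasianalyticity on a ball. -/
theorem qa_ball (hM : Wt M) (hD : Dv M) {g : E → ℝ} {a : E} {r A B : ℝ} (hA : 0 < A) (hB : 0 < B)
    (hg : ∀ x ∈ Metric.ball a r, ContDiffAt ℝ ∞ g x ∧ ∀ n, ‖iteratedFDeriv ℝ n g x‖ ≤ A*B^n*n !*M n)
    {p q : E} (hp : p ∈ Metric.ball a r) (hq : q ∈ Metric.ball a r)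
    (h0 : ∀ n, iteratedDeriv n (fun t : ℝ => g (p + t • (q - p))) 0 = 0) : g q = 0 := by
  set v := q - p with hv
  set Q := ‖v‖ + 1 with hQ
  have hQ0 : 0 < Q := by positivity
  set m : ℕ → ℝ := fun n => A * (B * Q) ^ n * n ! * M n with hm
  have hMp := hM.pos
  have mpos : ∀ n, 0 < m n := fun n => by have := hMp n; simp only [hm]; positivity
  have hra : ∀ n, m (n+1) / m n = (B * Q) * ((n+1) * (M (n+1) / M n)) := by
    intro n
    have := hMp n
    simp only [hm, Nat.factorial_succ]; push_cast; field_simp; ring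
  have mr : Monotone fun n => m (n+1) / m n := by
    intro i j hij
    simp only [hra]
    have h1 := hM.ratio_mono hij
    have h2 : (i:ℝ) ≤ j := by exact_mod_cast hij
    have h3 : 0 ≤ M (i+1) / M i := (div_pos (hMp _) (hMp _)).le
    simp only at h1
    gcongr
  have hra2 : ∀ n, m n / m (n+1) = (B * Q)⁻¹ * (M n / ((n+1) * M (n+1))) := by
    intro n
    have h1 := hMp n
    have h2 := hMp (n+1)
    rw [← inv_div, hra]; field_simp
  have md : ∀ C : ℝ, ∃ K, C ≤ ∑ k ∈ Finset.range K, m k / m (k+1) := by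
    intro C
    obtain ⟨K, hK⟩ := hD (C * (B * Q))
    refine ⟨K, ?_⟩
    simp only [hra2]
    rw [← Finset.mul_sum, le_inv_mul_iff₀ (by positivity)]
    linarith
  have hin : ∀ t ∈ Icc (0:ℝ) 1, p + t • v ∈ Metric.ball a r := by
    intro t ht
    exact (convex_ball a r).add_smul_sub_mem hp hq ht
  have := bang mpos mr md (g := fun t : ℝ => g (p + t • v)) (T := 1) zero_le_one (fun t ht => by
    have h1 := fun n => iteratedDeriv_line_eq p v t n Metric.isOpen_ball (fun y hy => (hg y hy).1) (hin t ht)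
    refine ⟨(h1 0).1, fun n => ?_⟩
    refine (h1 n).2.trans ?_
    have h2 := (hg _ (hin t ht)).2 n
    have h3 := hMp n
    calc _ ≤ (A*B^n*n !*M n) * Q ^ n := by gcongr; simp [hQ]
      _ = _ := by simp only [hm, mul_pow]; ring) h0
  simpa [hv] using this

theorem qa_ball' (hM : Wt M) (hD : Dv M) {g : E → ℝ} {a : E} {r A B : ℝ} (hA : 0 < A) (hB : 0 < B)
    (hg : ∀ x ∈ Metric.ball a r, ContDiffAt ℝ ∞ g x ∧ ∀ n, ‖iteratedFDeriv ℝ n g x‖ ≤ A*B^n*n !*M n)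
    {p : E} (hp : p ∈ Metric.ball a r) (h0 : ∀ᶠ x in 𝓝 p, g x = 0) : ∀ q ∈ Metric.ball a r, g q = 0 := by
  intro q hq
  refine qa_ball hM hD hA hB hg hp hq fun n => ?_
  have : (fun t : ℝ => g (p + t • (q - p))) =ᶠ[𝓝 0] fun _ => (0:ℝ) := by
    have hc : ContinuousAt (fun t : ℝ => p + t • (q - p)) 0 := by fun_prop
    refine hc.eventually (p := fun y => g y = 0) ?_
    simpa using h0
  rw [this.iteratedDeriv_eq]
  simp

/-- A nonzero germ has a nonzero directional derivative. -/
theorem exists_iteratedDeriv_ne (hM : Wt M) (hD : Dv M) {g : E → ℝ} {a : E} (hg : CM M g a)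
    (h : ¬ ∀ᶠ x in 𝓝 a, g x = 0) : ∃ (v : E) (d : ℕ), iteratedDeriv d (fun t : ℝ => g (a + t • v)) 0 ≠ 0 := by
  by_contra! hcon
  obtain ⟨A, B, hA, hB, hg⟩ := hg
  obtain ⟨r, hr, hball⟩ := Metric.eventually_nhds_iff_ball.1 hg
  refine h ?_
  filter_upwards [Metric.ball_mem_nhds a hr] with q hq
  exact qa_ball hM hD hA hB hball (Metric.mem_ball_self hr) hq (hcon (q - a))

theorem CM_domain (hM : Wt M) (hD : Dv M) {f g : E → ℝ} {a : E} (hf : CM M f a) (hg : CM M g a)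
    (h : ∀ᶠ x in 𝓝 a, f x * g x = 0) : (∀ᶠ x in 𝓝 a, f x = 0) ∨ ∀ᶠ x in 𝓝 a, g x = 0 := by
  obtain ⟨A, B, hA, hB, hg⟩ := hg
  have hf' : ∀ᶠ x in 𝓝 a, ContinuousAt f x := hf.eventually.mono fun x h => h.continuousAt
  obtain ⟨r, hr, hball⟩ := Metric.eventually_nhds_iff_ball.1 (hg.and (hf'.and h))
  by_cases hz : ∀ x ∈ Metric.ball a r, f x = 0
  · left; filter_upwards [Metric.ball_mem_nhds a hr] using hz
  · right
    push Not at hz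
    obtain ⟨p, hp, hpf⟩ := hz
    have h0 : ∀ᶠ x in 𝓝 p, g x = 0 := by
      filter_upwards [(hball p hp).2.1.eventually_ne hpf, Metric.isOpen_ball.mem_nhds hp] with x hx hx2
      exact (mul_eq_zero.1 (hball x hx2).2.2).resolve_left hx
    filter_upwards [Metric.ball_mem_nhds a hr] using
      qa_ball' hM hD hA hB (fun x hx => (hball x hx).1) hp h0

theorem CM_domain_prod (hM : Wt M) (hD : Dv M) {ι : Type} (s : Finset ι) {f : ι → E → ℝ} {a : E}
    (hf : ∀ i ∈ s, CM M (f i) a) (h : ∀ᶠ x in 𝓝 a, ∏ i ∈ s, f i x = 0) :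
    ∃ i ∈ s, ∀ᶠ x in 𝓝 a, f i x = 0 := by
  classical
  induction s using Finset.induction_on with
  | empty => simpa using h.self_of_nhds
  | insert i s hi ih =>
    simp only [Finset.prod_insert hi] at h
    rcases CM_domain hM hD (hf i (by simp)) (CM_prod s (fun j hj => hf j (by simp [hj])) hM) h with h | h
    · exact ⟨i, by simp, h⟩
    · obtain ⟨j, hj, h⟩ := ih (fun j hj => hf j (by simp [hj])) h
      exact ⟨j, by simp [hj], h⟩

theorem CM_connected (hM : Wt M) (hD : Dv M) {f : E → ℝ} {U : Set E}
    (hc : IsPreconnected U) (hf : ∀ x ∈ U, CM M f x) {a : E} (ha : a ∈ U)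
    (h : ∀ᶠ x in 𝓝 a, f x = 0) : ∀ x ∈ U, f x = 0 := by
  have key : U ⊆ {x | ∀ᶠ y in 𝓝 x, f y = 0} := by
    refine hc.subset_of_closure_inter_subset isOpen_setOfPred_eventually_nhds ⟨a, ha, h⟩ ?_
    rintro x ⟨hx, hxU⟩
    obtain ⟨A, B, hA, hB, hg⟩ := hf x hxU
    obtain ⟨r, hr, hball⟩ := Metric.eventually_nhds_iff_ball.1 hg
    obtain ⟨p, hp1, hp2⟩ := mem_closure_iff_nhds.1 hx _ (Metric.ball_mem_nhds x hr)
    have := qa_ball' hM hD hA hB hball hp1 hp2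
    show ∀ᶠ y in 𝓝 x, f y = 0
    filter_upwards [Metric.ball_mem_nhds x hr] using this
  exact fun x hx => (key hx).self_of_nhds
end
end QA
end

section
open scoped ContDiff Nat Topology
open Filter Set

namespace QA
section
variable {M : ℕ → ℝ} {ι : Type} [Fintype ι] [DecidableEq ι]

/-- iterated partial derivatives along a list -/
noncomputable def Dl (l : List ι) (f : EuclideanSpace ℝ ι → ℝ) : EuclideanSpace ℝ ι → ℝ :=
  l.foldr (fun i g => pd i g) f

theorem pd_smooth {U : Set (EuclideanSpace ℝ ι)} (i : ι) {f : EuclideanSpace ℝ ι → ℝ}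
    (hf : ∀ x ∈ U, ContDiffAt ℝ ∞ f x) : ∀ x ∈ U, ContDiffAt ℝ ∞ (pd i f) x := fun x hx =>
  ((hf x hx).fderiv_right (m := ∞) (by simp)).clm_apply contDiffAt_const

theorem Dl_smooth {U : Set (EuclideanSpace ℝ ι)} (l : List ι) {f : EuclideanSpace ℝ ι → ℝ}
    (hf : ∀ x ∈ U, ContDiffAt ℝ ∞ f x) : ∀ x ∈ U, ContDiffAt ℝ ∞ (Dl l f) x := by
  induction l with
  | nil => exact hf
  | cons i l ih => exact pd_smooth i ih

theorem pd_congr {U : Set (EuclideanSpace ℝ ι)} (hU : IsOpen U) (i : ι)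
    {f g : EuclideanSpace ℝ ι → ℝ} (h : ∀ x ∈ U, f x = g x) : ∀ x ∈ U, pd i f x = pd i g x := by
  intro x hx
  have : f =ᶠ[𝓝 x] g := by filter_upwards [hU.mem_nhds hx] using h
  simp only [pd, this.fderiv_eq]

theorem pd_comm {U : Set (EuclideanSpace ℝ ι)} (i j : ι) {f : EuclideanSpace ℝ ι → ℝ}
    (hf : ∀ x ∈ U, ContDiffAt ℝ ∞ f x) : ∀ x ∈ U, pd i (pd j f) x = pd j (pd i f) x := by
  intro x hx
  have hs : IsSymmSndFDerivAt ℝ f x := (hf x hx).isSymmSndFDerivAt (by simp only [minSmoothness_of_isRCLikeNormedField]; exact WithTop.coe_le_coe.2 le_top)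
  have hd : DifferentiableAt ℝ (fderiv ℝ f) x :=
    ((hf x hx).fderiv_right (m := ∞) (by simp)).differentiableAt (by simp)
  have e : ∀ i j : ι, pd i (pd j f) x = fderiv ℝ (fderiv ℝ f) x (EuclideanSpace.single i 1)
      (EuclideanSpace.single j 1) := by
    intro i j
    have h1 : HasFDerivAt (pd j f) ((ContinuousLinearMap.apply ℝ ℝ (EuclideanSpace.single j (1:ℝ))).comp
        (fderiv ℝ (fderiv ℝ f) x)) x :=
      (ContinuousLinearMap.apply ℝ ℝ (EuclideanSpace.single j (1:ℝ))).hasFDerivAt.comp x hd.hasFDerivAt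
    change fderiv ℝ (pd j f) x _ = _
    rw [h1.fderiv]; simp
  rw [e, e]; exact hs _ _

theorem Dl_perm {U : Set (EuclideanSpace ℝ ι)} (hU : IsOpen U) {f : EuclideanSpace ℝ ι → ℝ}
    (hf : ∀ x ∈ U, ContDiffAt ℝ ∞ f x) {l l' : List ι} (h : l.Perm l') :
    ∀ x ∈ U, Dl l f x = Dl l' f x := by
  induction h with
  | nil => intro x _; rfl
  | cons i _ ih => exact pd_congr hU i ih
  | swap i j l => exact fun x hx => pd_comm j i (Dl_smooth l hf) x hx
  | trans _ _ ih1 ih2 => exact fun x hx => (ih1 x hx).trans (ih2 x hx)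

theorem Dl_append (l l' : List ι) (f : EuclideanSpace ℝ ι → ℝ) : Dl (l ++ l') f = Dl l (Dl l' f) := by
  simp [Dl, List.foldr_append]

theorem Dl_replicate (i : ι) (k : ℕ) (f : EuclideanSpace ℝ ι → ℝ) :
    Dl (List.replicate k i) f = (pd i)^[k] f := by
  induction k with
  | zero => rfl
  | succ k ih => rw [List.replicate_succ, Function.iterate_succ_apply', ← ih]; rfl

theorem mderiv_eq (α : ι → ℕ) (f : EuclideanSpace ℝ ι → ℝ) :
    mderiv α f = Dl ((Finset.univ : Finset ι).toList.flatMap fun i => List.replicate (α i) i) f := by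
  unfold mderiv
  induction (Finset.univ : Finset ι).toList with
  | nil => rfl
  | cons i l ih => rw [List.foldr_cons, ih, List.flatMap_cons, Dl_append, Dl_replicate]

theorem iteratedFDeriv_basis {U : Set (EuclideanSpace ℝ ι)} (hU : IsOpen U) {f : EuclideanSpace ℝ ι → ℝ}
    (hf : ∀ x ∈ U, ContDiffAt ℝ ∞ f x) (n : ℕ) : ∀ (i : Fin n → ι), ∀ x ∈ U,
    iteratedFDeriv ℝ n f x (fun k => EuclideanSpace.single (i k) 1) = Dl (List.ofFn i) f x := by
  induction n with
  | zero => intro i x _; simp [Dl]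
  | succ n ih =>
    intro i x hx
    rw [iteratedFDeriv_succ_apply_left, List.ofFn_succ]
    have h1 : ∀ y ∈ U, iteratedFDeriv ℝ n f y (Fin.tail fun k => EuclideanSpace.single (i k) 1)
        = Dl (List.ofFn fun k => i k.succ) f y := fun y hy => ih (fun k => i k.succ) y hy
    have h2 := pd_congr hU (i 0) h1 x hx
    have hd : DifferentiableAt ℝ (iteratedFDeriv ℝ n f) x :=
      ((hf x hx).iteratedFDeriv_right (m := ∞) (i := n) (by exact le_of_eq (by rfl))).differentiableAt (by simp)
    have h3 := (ContinuousMultilinearMap.apply ℝ (fun _ : Fin n => EuclideanSpace ℝ ι) ℝ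
      (Fin.tail fun k => EuclideanSpace.single (i k) (1:ℝ))).hasFDerivAt.comp x hd.hasFDerivAt
    change _ = pd (i 0) (Dl (List.ofFn fun k => i k.succ) f) x
    rw [← h2]
    change _ = fderiv ℝ _ x _
    have h4 : (fun y => iteratedFDeriv ℝ n f y (Fin.tail fun k => EuclideanSpace.single (i k) (1:ℝ)))
      = (ContinuousMultilinearMap.apply ℝ (fun _ : Fin n => EuclideanSpace ℝ ι) ℝ
      (Fin.tail fun k => EuclideanSpace.single (i k) (1:ℝ))) ∘ iteratedFDeriv ℝ n f := rfl
    rw [h4, h3.fderiv]; rfl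

theorem multilinear_bound {n : ℕ} (T : ContinuousMultilinearMap ℝ (fun _ : Fin n => EuclideanSpace ℝ ι) ℝ)
    {K : ℝ} (hK : ∀ i : Fin n → ι, |T (fun k => EuclideanSpace.single (i k) 1)| ≤ K) (hK0 : 0 ≤ K) :
    ‖T‖ ≤ (Fintype.card ι : ℝ) ^ n * K := by
  refine ContinuousMultilinearMap.opNorm_le_bound (by positivity) fun v => ?_
  have hv : ∀ k, v k = ∑ i, (v k i) • EuclideanSpace.single i (1:ℝ) := by
    intro k
    have := (EuclideanSpace.basisFun ι ℝ).sum_repr (v k)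
    simpa using this.symm
  have e : T v = ∑ i : Fin n → ι, T (fun k => (v k (i k)) • EuclideanSpace.single (i k) (1:ℝ)) := by
    rw [← T.map_sum (fun k i => (v k i) • EuclideanSpace.single i (1:ℝ))]
    congr 1; ext1 k; exact hv k
  rw [e]
  have hb : ∀ k i, ‖v k i‖ ≤ ‖v k‖ := fun k i => PiLp.norm_apply_le (v k) i
  calc _ ≤ ∑ i : Fin n → ι, ‖T (fun k => (v k (i k)) • EuclideanSpace.single (i k) (1:ℝ))‖ := norm_sum_le _ _
    _ ≤ ∑ i : Fin n → ι, (∏ k, ‖v k‖) * K := by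
        refine Finset.sum_le_sum fun i _ => ?_
        rw [T.map_smul_univ, norm_smul, norm_prod]
        gcongr with k
        · exact hb k _
        · exact hK i
    _ = _ := by simp; ring

theorem CRM_CM (hpos : ∀ j, 0 < M j) {U : Set (EuclideanSpace ℝ ι)} (hU : IsOpen U)
    {f : EuclideanSpace ℝ ι → ℝ} (hf : CRM M U f) : ∀ a ∈ U, CM M f a := by
  intro a ha
  have hs : ∀ x ∈ U, ContDiffAt ℝ ∞ f x := fun x hx => hf.1.contDiffAt (hU.mem_nhds hx)
  obtain ⟨K, hKn, hKU, hK⟩ := local_compact_nhds (hU.mem_nhds ha)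
  obtain ⟨A, B, hA, hB, hb⟩ := hf.2 K hKU hK
  refine ⟨A, (Fintype.card ι + 1) * B, hA, by positivity, ?_⟩
  filter_upwards [hKn] with x hx
  refine ⟨hs x (hKU hx), fun n => ?_⟩
  have hMn := hpos n
  have := multilinear_bound (iteratedFDeriv ℝ n f x) (K := A * B ^ n * n ! * M n) (fun i => ?_) (by positivity)
  · refine this.trans ?_
    calc _ ≤ ((Fintype.card ι : ℝ) + 1) ^ n * (A * B ^ n * n ! * M n) := by gcongr; linarith
      _ = _ := by rw [mul_pow]; ring
  · rw [iteratedFDeriv_basis hU hs n i x (hKU hx)]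
    set α : ι → ℕ := fun j => (List.ofFn i).count j with hα
    have hperm : (List.ofFn i).Perm ((Finset.univ : Finset ι).toList.flatMap fun i => List.replicate (α i) i) := by
      rw [List.perm_iff_count]
      intro j
      rw [List.count_flatMap]
      have : (List.map (List.count j ∘ fun i => List.replicate (α i) i) (Finset.univ : Finset ι).toList).sum
        = ∑ k, if k = j then α k else 0 := by
        rw [Finset.sum_map_toList]
        refine Finset.sum_congr rfl fun k _ => ?_
        simp [List.count_replicate]
      rw [this]; simp [hα]
    have hsum : ∑ j, α j = n := by
      have := hperm.length_eq
      rw [List.length_ofFn, List.length_flatMap] at this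
      rw [Finset.sum_map_toList] at this
      simpa using this.symm
    rw [Dl_perm hU hs hperm x (hKU hx), ← mderiv_eq]
    have h1 := hb x hx α
    rw [hsum, one_div, inv_mul_le_iff₀ (by positivity)] at h1
    refine h1.trans ?_
    have h2 : (∏ i, ((α i)! : ℝ)) ≤ n ! := by
      have := Nat.le_of_dvd (Nat.factorial_pos _) (Nat.prod_factorial_dvd_factorial_sum Finset.univ α)
      rw [hsum] at this
      exact_mod_cast this
    calc _ ≤ (n ! : ℝ) * (A * B ^ n * M n) := by gcongr
      _ = _ := by ring

theorem Wt_of (hpos : ∀ j, 0 < M j) (hmono : Monotone M) (hM0 : M 0 = 1)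
    (hlog : ∀ j : ℕ, M (j+1) / M j ≤ M (j+2) / M (j+1))
    (hder : ∃ C : ℝ, ∀ j : ℕ, 1 ≤ j → (M (j+1) / M j) ^ ((1 : ℝ) / j) ≤ C) : Wt M := by
  refine ⟨hpos, hmono, hM0, hlog, ?_⟩
  obtain ⟨C, hC⟩ := hder
  refine ⟨max 1 (max C (M 1)), le_max_left _ _, fun j => ?_⟩
  set D := max 1 (max C (M 1)) with hD
  have hD1 : 1 ≤ D := le_max_left _ _
  rcases Nat.eq_zero_or_pos j with rfl | hj
  · simp [hM0, hD]
  · have h1 := hC j hj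
    have hr : 0 < M (j+1) / M j := div_pos (hpos _) (hpos _)
    have h2 : M (j+1) / M j ≤ D ^ j := by
      calc M (j+1) / M j = ((M (j+1) / M j) ^ ((1 : ℝ) / j)) ^ j := by
            rw [one_div, Real.rpow_inv_natCast_pow hr.le (by omega)]
        _ ≤ D ^ j := by
            gcongr
            exact h1.trans ((le_max_left _ _).trans (le_max_right _ _))
    rw [div_le_iff₀ (hpos _)] at h2
    refine h2.trans ?_
    have := hpos j
    gcongr
    omega

theorem Dv_of (hpos : ∀ j, 0 < M j)
    (hqa : ∑' k : ℕ, ENNReal.ofReal (M k / (((k : ℝ) + 1) * M (k+1))) = ⊤) : Dv M := by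
  by_contra h
  unfold Dv at h
  push Not at h
  obtain ⟨C, hC⟩ := h
  have hn : ∀ k : ℕ, 0 ≤ M k / (((k : ℝ) + 1) * M (k+1)) := fun k => by
    have h1 := hpos k
    have h2 := hpos (k+1)
    positivity
  have hs : Summable fun k : ℕ => M k / (((k : ℝ) + 1) * M (k+1)) :=
    summable_of_sum_range_le hn (fun n => (hC n).le)
  have := ENNReal.ofReal_tsum_of_nonneg hn hs
  rw [hqa] at this
  exact ENNReal.ofReal_ne_top this
end
end QA
end

section
open scoped ContDiff Nat Topology
open Filter Set

namespace QA
section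
variable {E F G : Type} [NormedAddCommGroup E] [NormedSpace ℝ E] [NormedAddCommGroup F]
  [NormedSpace ℝ F] [NormedAddCommGroup G] [NormedSpace ℝ G] {M : ℕ → ℝ}

/-- Germs which become locally monomial after finitely many substitutions. -/
inductive Good (M : ℕ → ℝ) {E : Type} [NormedAddCommGroup E] [NormedSpace ℝ E] : (E → ℝ) → E → Prop
  | mono (f : E → ℝ) (a : E) (n : ℕ) (e : E ≃L[ℝ] (Fin n → ℝ)) (α : Fin n → ℕ) (u : E → ℝ)
      (hu : CM M u a) (hu0 : u a ≠ 0) (h : ∀ᶠ x in 𝓝 a, f x = (∏ j, (e (x - a) j) ^ α j) * u x) :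
      Good M f a
  | cover (f : E → ℝ) (a : E) (ι : Type) (hι : Finite ι) (ph : ι → E → E) (L : ι → Set E)
      (hL : ∀ i, IsCompact (L i)) (hph : ∀ i, ∀ y ∈ L i, CM M (ph i) y)
      (ha : ∀ i, ∀ y ∈ L i, ph i y = a)
      (hcov : ∀ O : ι → Set E, (∀ i, IsOpen (O i)) → (∀ i, L i ⊆ O i) → (⋃ i, ph i '' O i) ∈ 𝓝 a)
      (hG : ∀ i, ∀ y ∈ L i, Good M (fun x => f (ph i x)) y) : Good M f a

theorem Good.congr {f : E → ℝ} {a : E} (h : Good M f a) : ∀ {g : E → ℝ}, f =ᶠ[𝓝 a] g → Good M g a := by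
  induction h with
  | mono f a n e α u hu hu0 h =>
    intro g hg
    refine Good.mono g a n e α u hu hu0 ?_
    filter_upwards [h, hg] with x hx hx2
    rw [← hx2, hx]
  | cover f a ι hι ph L hL hph ha hcov hG ih =>
    intro g hg
    refine Good.cover g a ι hι ph L hL hph ha hcov fun i y hy => ih i y hy ?_
    have hc := (hph i y hy).continuousAt
    refine hc.eventually (p := fun z => f z = g z) ?_
    rw [ha i y hy]; exact hg

theorem Good.transport (hM : Wt M) {f : E → ℝ} {a : E} (h : Good M f a) (T : E ≃L[ℝ] F) :
    Good M (fun y => f (T.symm y)) (T a) := by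
  induction h with
  | mono f a n e α u hu hu0 h =>
    refine Good.mono _ _ n (T.symm.trans e) α (fun y => u (T.symm y)) ?_ (by simpa using hu0) ?_
    · exact CM.comp_of_eq hu (CM_clm (T.symm : F →L[ℝ] E) (T a) hM) (by simp) hM
    · have hc : ContinuousAt T.symm (T a) := T.symm.continuous.continuousAt
      have := hc.eventually (p := fun x => f x = (∏ j, (e (x - a) j) ^ α j) * u x) (by simpa using h)
      filter_upwards [this] with y hy
      rw [hy]; simp
  | cover f a ι hι ph L hL hph ha hcov hG ih =>
    refine Good.cover _ _ ι hι (fun i y => T (ph i (T.symm y))) (fun i => T '' L i)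
      (fun i => (hL i).image T.continuous) ?_ ?_ ?_ ?_
    · rintro i _ ⟨y, hy, rfl⟩
      have h1 : CM M (fun z => ph i (T.symm z)) (T y) :=
        CM.comp_of_eq (hph i y hy) (CM_clm (T.symm : F →L[ℝ] E) (T y) hM) (by simp) hM
      exact h1.clm_comp (T : E →L[ℝ] F) hM
    · rintro i _ ⟨y, hy, rfl⟩
      simp [ha i y hy]
    · intro O hO hLO
      have := hcov (fun i => T ⁻¹' O i) (fun i => (hO i).preimage T.continuous)
        (fun i y hy => hLO i ⟨y, hy, rfl⟩)
      have hc : ContinuousAt T.symm (T a) := T.symm.continuous.continuousAt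
      have h2 := hc.preimage_mem_nhds (by simpa using this)
      filter_upwards [h2] with z hz
      simp only [mem_preimage, mem_iUnion] at hz ⊢
      obtain ⟨i, y, hy, hyz⟩ := hz
      refine ⟨i, T y, hy, ?_⟩
      simp [hyz]
    · rintro i _ ⟨y, hy, rfl⟩
      have := ih i y hy
      simpa using this

def Loj (f : E → ℝ) (V : Set E) (C : ℝ) (ν : ℕ) (x : E) : Prop :=
  (∃ z ∈ V, f z = 0 ∧ C * dist x z ^ ν ≤ |f x|) ∨ C ≤ |f x|

theorem Loj.weaken {f : E → ℝ} {V : Set E} {C C' : ℝ} {ν ν' : ℕ} {x a : E} (h : Loj f V C ν x)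
    (hV : V ⊆ Metric.ball a (1/2)) (hx : x ∈ Metric.ball a (1/2)) (hC : C' ≤ C) (hC' : 0 ≤ C')
    (hν : ν ≤ ν') : Loj f V C' ν' x := by
  rcases h with ⟨z, hz, hz0, h⟩ | h
  · left
    refine ⟨z, hz, hz0, le_trans ?_ h⟩
    have hd : dist x z ≤ 1 := by
      have h1 := hV hz
      rw [Metric.mem_ball] at h1 hx
      have := dist_triangle_right x z a
      linarith
    have := pow_le_pow_of_le_one dist_nonneg hd hν
    have hC0 : 0 ≤ C := hC'.trans hC
    gcongr
  · right; exact hC.trans h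

theorem Good.loj {f : E → ℝ} {a : E} (h : Good M f a) : ∀ V ∈ 𝓝 a, ∃ C > 0, ∃ ν : ℕ, 1 ≤ ν ∧
    ∀ᶠ x in 𝓝 a, Loj f V C ν x := by
  induction h with
  | mono f a n e α u hu hu0 h =>
    intro V hV
    have hu1 : ∀ᶠ x in 𝓝 a, |u a| / 2 < |u x| := by
      have := hu.continuousAt.abs
      exact this.eventually (lt_mem_nhds (by have := abs_pos.2 hu0; linarith))
    have hua := abs_pos.2 hu0
    by_cases hα : ∀ j, α j = 0
    · refine ⟨|u a| / 2, by positivity, 1, le_rfl, ?_⟩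
      filter_upwards [h, hu1] with x hx hx1
      right; rw [hx]; simp [hα]; exact hx1.le
    · push Not at hα
      obtain ⟨j1, hj1⟩ := hα
      set S := Finset.univ.filter fun j => α j ≠ 0 with hS
      have hSn : S.Nonempty := ⟨j1, by simp [hS, hj1]⟩
      set ν := ∑ j, α j with hν
      set Q := ‖(e.symm : (Fin n → ℝ) →L[ℝ] E)‖ + 1 with hQ
      have hQ0 : 0 < Q := by positivity
      have hQb : ∀ y, ‖e.symm y‖ ≤ Q * ‖y‖ := fun y => by
        refine ((e.symm : (Fin n → ℝ) →L[ℝ] E).le_opNorm y).trans ?_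
        gcongr; simp [hQ]
      refine ⟨|u a| / 2 / Q ^ ν, by positivity, ν, ?_, ?_⟩
      · have := Finset.single_le_sum (f := α) (fun j _ => Nat.zero_le _) (Finset.mem_univ j1)
        omega
      · obtain ⟨r, hr, hball⟩ := Metric.eventually_nhds_iff_ball.1 (h.and hV)
        have hsm : ∀ᶠ x in 𝓝 a, Q * ‖e (x - a)‖ < r := by
          have : ContinuousAt (fun x => Q * ‖e (x - a)‖) a := by fun_prop
          exact this.eventually (gt_mem_nhds (by simpa using hr))
        filter_upwards [h, hu1, hsm] with x hx hx1 hx2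
        left
        set y := e (x - a) with hy
        obtain ⟨j, hjS, hj⟩ := S.exists_min_image (fun j => |y j|) hSn
        have hjα : α j ≠ 0 := by simpa [hS] using hjS
        set w := Function.update y j 0 with hw
        have hwn : ‖w‖ ≤ ‖y‖ := by
          rw [pi_norm_le_iff_of_nonneg (norm_nonneg _)]
          intro k
          by_cases hk : k = j
          · subst hk; simp [hw]
          · simp only [hw, Function.update_of_ne hk]; exact norm_le_pi_norm y k
        have hwy : ‖y - w‖ ≤ |y j| := by
          rw [pi_norm_le_iff_of_nonneg (abs_nonneg _)]
          intro k
          by_cases hk : k = j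
          · subst hk; simp [hw]
          · simp [hw, Function.update_of_ne hk]
        set z := a + e.symm w with hz
        have hza : e (z - a) = w := by simp [hz]
        have hzb : z ∈ Metric.ball a r := by
          rw [Metric.mem_ball, dist_eq_norm]
          have : z - a = e.symm w := by simp [hz]
          rw [this]
          refine (hQb w).trans_lt (lt_of_le_of_lt ?_ hx2)
          gcongr
        have hxz : dist x z ≤ Q * |y j| := by
          have : x - z = e.symm (y - w) := by simp [hz, hy]; abel
          rw [dist_eq_norm, this]
          refine (hQb _).trans ?_
          gcongr
        refine ⟨z, (hball z hzb).2, ?_, ?_⟩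
        · rw [(hball z hzb).1, hza]
          have : ∏ k, w k ^ α k = 0 :=
            Finset.prod_eq_zero (Finset.mem_univ j) (by simp [hw, hjα])
          rw [this, zero_mul]
        · rw [hx, abs_mul]
          have hp : |y j| ^ ν ≤ |∏ k, y k ^ α k| := by
            rw [Finset.abs_prod, hν, ← Finset.prod_pow_eq_pow_sum]
            refine Finset.prod_le_prod (fun k _ => by positivity) fun k _ => ?_
            rw [abs_pow]
            by_cases hk : α k = 0
            · simp [hk]
            · exact pow_le_pow_left₀ (abs_nonneg _) (hj k (by simp [hS, hk])) _
          calc |u a| / 2 / Q ^ ν * dist x z ^ ν ≤ |u a| / 2 / Q ^ ν * (Q * |y j|) ^ ν := by gcongr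
            _ = |y j| ^ ν * (|u a| / 2) := by rw [mul_pow]; field_simp
            _ ≤ _ := by gcongr
  | cover f a ι hι ph L hL hph ha hcov hG ih =>
    intro V0 hV0
    set V := V0 ∩ Metric.ball a (1/2) with hVd
    have hV : V ∈ 𝓝 a := inter_mem hV0 (Metric.ball_mem_nhds a (by norm_num))
    have hVb : V ⊆ Metric.ball a (1/2) := inter_subset_right
    have key : ∀ i, ∃ C > 0, ∃ ν : ℕ, 1 ≤ ν ∧ ∃ O, IsOpen O ∧ L i ⊆ O ∧
        ∀ x ∈ O, ph i x ∈ Metric.ball a (1/2) → Loj f V C ν (ph i x) := by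
      intro i
      refine (hL i).induction_on (p := fun S => ∃ C > 0, ∃ ν : ℕ, 1 ≤ ν ∧ ∃ O, IsOpen O ∧ S ⊆ O ∧
        ∀ x ∈ O, ph i x ∈ Metric.ball a (1/2) → Loj f V C ν (ph i x)) ?_ ?_ ?_ ?_
      · exact ⟨1, one_pos, 1, le_rfl, ∅, isOpen_empty, le_rfl, by simp⟩
      · rintro s t hst ⟨C, hC, ν, hν, O, hO, hOs, h⟩
        exact ⟨C, hC, ν, hν, O, hO, hst.trans hOs, h⟩
      · rintro s t ⟨C, hC, ν, hν, O, hO, hOs, h⟩ ⟨C', hC', ν', hν', O', hO', hOs', h'⟩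
        refine ⟨min C C', lt_min hC hC', max ν ν', le_max_of_le_left hν, O ∪ O', hO.union hO',
          union_subset_union hOs hOs', ?_⟩
        rintro x (hx | hx) hxb
        · exact (h x hx hxb).weaken hVb hxb (min_le_left _ _) (lt_min hC hC').le (le_max_left _ _)
        · exact (h' x hx hxb).weaken hVb hxb (min_le_right _ _) (lt_min hC hC').le (le_max_right _ _)
      · intro y hy
        have hc := (hph i y hy).contDiffAt
        obtain ⟨K, t, ht, hK⟩ := (hc.of_le (m := 1) (by exact_mod_cast le_top)).exists_lipschitzOnWith
        have hpre : ph i ⁻¹' V ∈ 𝓝 y := hc.continuousAt.preimage_mem_nhds (by rw [ha i y hy]; exact hV)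
        obtain ⟨C, hC, ν, hν, hev⟩ := ih i y hy (ph i ⁻¹' V ∩ t) (inter_mem hpre ht)
        obtain ⟨O, hOs, hO, hyO⟩ := eventually_nhds_iff.1 (hev.and ht)
        refine ⟨O, mem_nhdsWithin_of_mem_nhds (hO.mem_nhds hyO), C / (K + 1) ^ ν, by positivity, ν, hν,
          O, hO, le_rfl, ?_⟩
        intro x hx _
        have hK1 : (1:ℝ) ≤ (K + 1) ^ ν := one_le_pow₀ (by linarith [K.2])
        rcases (hOs x hx).1 with ⟨z, hz, hz0, hle⟩ | hle
        · left
          refine ⟨ph i z, hz.1, hz0, le_trans ?_ hle⟩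
          have hd := hK.dist_le_mul x (hOs x hx).2 z hz.2
          calc C / (K + 1) ^ ν * dist (ph i x) (ph i z) ^ ν
              ≤ C / (K + 1) ^ ν * ((K + 1) * dist x z) ^ ν := by
                gcongr
                refine hd.trans ?_
                gcongr; linarith
            _ = _ := by rw [mul_pow]; field_simp
        · right
          exact (div_le_self hC.le hK1).trans hle
    choose C hC ν hν O hO hLO hl using key
    have hcv := hcov O hO hLO
    haveI := Fintype.ofFinite ι
    obtain ⟨C0, hC0, hC0le⟩ : ∃ C0 > 0, ∀ i, C0 ≤ C i := by
      rcases isEmpty_or_nonempty ι with h | h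
      · exact ⟨1, one_pos, fun i => (h.false i).elim⟩
      · obtain ⟨i, hi⟩ := Finite.exists_min C
        exact ⟨C i, hC i, hi⟩
    refine ⟨C0, hC0, ∑ i, ν i + 1, by omega, ?_⟩
    filter_upwards [hcv, Metric.ball_mem_nhds a (by norm_num : (0:ℝ) < 1/2)] with x hx hxb
    simp only [mem_iUnion] at hx
    obtain ⟨i, y, hy, rfl⟩ := hx
    have h1 := (hl i y hy hxb).weaken hVb hxb (hC0le i) hC0.le
      (ν' := ∑ i, ν i + 1) ((Finset.single_le_sum (f := ν) (fun j _ => Nat.zero_le _) (Finset.mem_univ i)).trans (Nat.le_succ _))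
    rcases h1 with ⟨z, hz, h⟩ | h
    · exact Or.inl ⟨z, hz.1, h⟩
    · exact Or.inr h
end
end QA
end

section
open scoped ContDiff Nat Topology
open Filter Set

namespace QA
section
variable {E F G : Type} [NormedAddCommGroup E] [NormedSpace ℝ E] [NormedAddCommGroup F]
  [NormedSpace ℝ F] [NormedAddCommGroup G] [NormedSpace ℝ G] {M : ℕ → ℝ} {n : ℕ}

theorem Good.pull {f : E → ℝ} {a b : E} (ph ps : E → E) (hph : CM M ph b) (hb : ph b = a)
    (hps : ContinuousAt ps a) (hpa : ps a = b) (hinv : ∀ᶠ x in 𝓝 a, ph (ps x) = x)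
    (h : Good M (fun x => f (ph x)) b) : Good M f a := by
  refine Good.cover f a Unit inferInstance (fun _ => ph) (fun _ => {b}) (fun _ => isCompact_singleton)
    ?_ ?_ ?_ ?_
  · rintro _ y rfl; exact hph
  · rintro _ y rfl; exact hb
  · intro O hO hL
    have h1 : ps ⁻¹' (O ()) ∈ 𝓝 a := hps.preimage_mem_nhds
      ((hO ()).mem_nhds (by rw [hpa]; exact hL () rfl))
    filter_upwards [h1, hinv] with x hx hx2
    exact mem_iUnion.2 ⟨(), ps x, hx, hx2⟩
  · rintro _ y rfl; exact h

/-- Monomials. -/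
def mon (α : Fin n → ℕ) (x : Fin n → ℝ) : ℝ := ∏ j, x j ^ α j

theorem mon_zero (x : Fin n → ℝ) : mon 0 x = 1 := by simp [mon]

theorem mon_add (α β : Fin n → ℕ) (x : Fin n → ℝ) : mon (α + β) x = mon α x * mon β x := by
  simp [mon, pow_add, Finset.prod_mul_distrib]

theorem mon_smul (k : ℕ) (α : Fin n → ℕ) (x : Fin n → ℝ) : mon (k • α) x = mon α x ^ k := by
  simp only [mon, ← Finset.prod_pow, Pi.smul_apply, smul_eq_mul, ← pow_mul, mul_comm k]

theorem mon_single (j : Fin n) (k : ℕ) (x : Fin n → ℝ) : mon (Pi.single j k) x = x j ^ k := by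
  rw [mon, Finset.prod_eq_single j]
  · simp
  · intro i _ hi; simp [Pi.single_eq_of_ne hi]
  · simp

theorem mon_at_zero {α : Fin n → ℕ} (h : α ≠ 0) : mon α 0 = 0 := by
  obtain ⟨j, hj⟩ := Function.ne_iff.1 h
  exact Finset.prod_eq_zero (Finset.mem_univ j) (by simpa using hj)

theorem mon_eq_zero {α : Fin n → ℕ} {j : Fin n} {x : Fin n → ℝ} (h : α j ≠ 0) (hx : x j = 0) :
    mon α x = 0 :=
  Finset.prod_eq_zero (Finset.mem_univ j) (by rw [hx]; exact zero_pow h)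

theorem mon_ne_zero {α : Fin n → ℕ} {x : Fin n → ℝ} (h : ∀ j, α j ≠ 0 → x j ≠ 0) :
    mon α x ≠ 0 := by
  refine Finset.prod_ne_zero_iff.2 fun j _ => ?_
  by_cases hj : α j = 0
  · simp [hj]
  · exact pow_ne_zero _ (h j hj)

theorem CM_coord (j : Fin n) (a : Fin n → ℝ) (hM : Wt M) : CM M (fun x : Fin n → ℝ => x j) a :=
  CM_clm (ContinuousLinearMap.proj j) a hM

theorem CM_mon (α : Fin n → ℕ) (a : Fin n → ℝ) (hM : Wt M) : CM M (mon α) a :=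
  CM_prod Finset.univ (fun j _ => (CM_coord j a hM).pow hM (α j)) hM

theorem not_coord_zero (j : Fin n) : ¬ ∀ᶠ x : Fin n → ℝ in 𝓝 0, x j = 0 := by
  intro h
  have hc : ContinuousAt (fun t : ℝ => (Pi.single j t : Fin n → ℝ)) 0 :=
    (continuous_single j).continuousAt
  have h2 := hc.eventually (p := fun x => x j = 0) (by simpa using h)
  obtain ⟨r, hr, hb⟩ := Metric.eventually_nhds_iff.1 h2
  have := hb (y := r / 2) (by simp [abs_of_pos hr]; exact hr)
  simp at this; linarith

theorem mon_cancel (hM : Wt M) (hD : Dv M) (γ : Fin n → ℕ) {f : (Fin n → ℝ) → ℝ} (hf : CM M f 0)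
    (h : ∀ᶠ x in 𝓝 0, mon γ x * f x = 0) : ∀ᶠ x in 𝓝 0, f x = 0 := by
  rcases CM_domain hM hD (CM_mon γ 0 hM) hf h with h1 | h1
  · exfalso
    obtain ⟨j, -, hj⟩ := CM_domain_prod hM hD Finset.univ
      (fun j _ => (CM_coord j 0 hM).pow hM (γ j)) h1
    refine not_coord_zero j ?_
    filter_upwards [hj] with x hx
    by_contra h0; exact pow_ne_zero _ h0 hx
  · exact h1

theorem CM_mon_div (hM : Wt M) (hD : Dv M) : ∀ (γ : Fin n → ℕ) {A w v : (Fin n → ℝ) → ℝ},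
    CM M A 0 → CM M w 0 → CM M v 0 → v 0 ≠ 0 → (∀ᶠ x in 𝓝 0, A x * w x = mon γ x * v x) →
    ∃ α : Fin n → ℕ, ∃ A', CM M A' 0 ∧ A' 0 ≠ 0 ∧ ∀ᶠ x in 𝓝 0, A x = mon α x * A' x := by
  suffices H : ∀ (k : ℕ) (γ : Fin n → ℕ), ∑ j, γ j = k → ∀ {A w v : (Fin n → ℝ) → ℝ},
    CM M A 0 → CM M w 0 → CM M v 0 → v 0 ≠ 0 → (∀ᶠ x in 𝓝 0, A x * w x = mon γ x * v x) →
    ∃ α : Fin n → ℕ, ∃ A', CM M A' 0 ∧ A' 0 ≠ 0 ∧ ∀ᶠ x in 𝓝 0, A x = mon α x * A' x from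
    fun γ => H _ γ rfl
  intro k
  induction k with
  | zero =>
    intro γ hγ A w v hA hw hv hv0 h
    have hγ0 : γ = 0 := by
      funext j; exact (Finset.sum_eq_zero_iff.1 hγ) j (Finset.mem_univ j)
    subst hγ0
    refine ⟨0, A, hA, ?_, ?_⟩
    · have := h.self_of_nhds
      rw [mon_zero, one_mul] at this
      intro h0; rw [h0, zero_mul] at this; exact hv0 this.symm
    · exact Eventually.of_forall fun x => by rw [mon_zero, one_mul]
  | succ k ih =>
    intro γ hγ A w v hA hw hv hv0 h
    obtain ⟨j, hj⟩ : ∃ j, γ j ≠ 0 := by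
      by_contra hcon; push Not at hcon; simp [hcon] at hγ
    set γ' := γ - Pi.single j 1 with hγ'
    have hγe : γ = Pi.single j 1 + γ' := by
      rw [hγ', add_tsub_cancel_of_le]
      intro i
      by_cases hi : i = j
      · subst hi; simp; omega
      · simp [Pi.single_eq_of_ne hi]
    have hs : ∑ i, γ' i = k := by
      have : ∑ i, γ i = ∑ i, (Pi.single j 1 : Fin n → ℕ) i + ∑ i, γ' i := by
        rw [← Finset.sum_add_distrib]; conv_lhs => rw [hγe]
        rfl
      rw [Finset.sum_pi_single' ] at this
      simp at this; omega
    have hmon : ∀ x, mon γ x = x j * mon γ' x := fun x => by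
      rw [hγe, mon_add, mon_single, pow_one]
    -- projection
    let π : (Fin n → ℝ) →L[ℝ] (Fin n → ℝ) :=
      ContinuousLinearMap.pi fun i => if i = j then 0 else ContinuousLinearMap.proj i
    have hπ : ∀ x i, π x i = if i = j then 0 else x i := fun x i => by
      simp only [π, ContinuousLinearMap.pi_apply]; split_ifs <;> simp
    have hπ0 : ∀ x : Fin n → ℝ, x j = 0 → π x = x := fun x hx => by
      funext i; rw [hπ]; split_ifs with hi
      · rw [hi, hx]
      · rfl
    have hcπ : ContinuousAt π 0 := π.continuous.continuousAt
    have hpull : ∀ {p : (Fin n → ℝ) → Prop}, (∀ᶠ x in 𝓝 0, p x) → ∀ᶠ x in 𝓝 0, p (π x) :=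
      fun {p} hp => hcπ.eventually (p := p) (by simpa using hp)
    have hCπ : ∀ {B : (Fin n → ℝ) → ℝ}, CM M B 0 → CM M (fun x => B (π x)) 0 := fun hB =>
      CM.comp_of_eq hB (CM_clm π 0 hM) (by simp) hM
    have hdiv : ∀ {B : (Fin n → ℝ) → ℝ}, CM M B 0 → (∀ᶠ x in 𝓝 0, B (π x) = 0) →
        ∃ B', CM M B' 0 ∧ ∀ᶠ x in 𝓝 0, B x = x j * B' x := fun hB h0 =>
      CM_divide hB (ContinuousLinearMap.proj j) (Pi.single j 1) (by simp) (by simp) (by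
        filter_upwards [h0] with x hx hxj
        rwa [hπ0 x hxj] at hx) hM
    have hprod : ∀ᶠ x in 𝓝 0, A (π x) * w (π x) = 0 := by
      filter_upwards [hpull h] with x hx
      rw [hx, hmon, hπ]; simp
    rcases CM_domain hM hD (hCπ hA) (hCπ hw) hprod with h0 | h0
    · obtain ⟨A1, hA1, hA1e⟩ := hdiv hA h0
      have hc : ∀ᶠ x in 𝓝 0, A1 x * w x - mon γ' x * v x = 0 := by
        refine mon_cancel hM hD (Pi.single j 1) ((hA1.mul hw hM).sub ((CM_mon γ' 0 hM).mul hv hM) hM) ?_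
        filter_upwards [h, hA1e] with x hx hx1
        rw [mon_single, pow_one]
        rw [hx1, hmon] at hx
        linear_combination hx
      obtain ⟨α, A', hA', hA'0, he⟩ := ih γ' hs hA1 hw hv hv0 (by
        filter_upwards [hc] with x hx; linarith)
      refine ⟨Pi.single j 1 + α, A', hA', hA'0, ?_⟩
      filter_upwards [hA1e, he] with x hx hx1
      rw [hx, hx1, mon_add, mon_single, pow_one, mul_assoc]
    · obtain ⟨w1, hw1, hw1e⟩ := hdiv hw h0
      have hc : ∀ᶠ x in 𝓝 0, A x * w1 x - mon γ' x * v x = 0 := by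
        refine mon_cancel hM hD (Pi.single j 1) ((hA.mul hw1 hM).sub ((CM_mon γ' 0 hM).mul hv hM) hM) ?_
        filter_upwards [h, hw1e] with x hx hx1
        rw [mon_single, pow_one]
        rw [hx1, hmon] at hx
        linear_combination hx
      exact ih γ' hs hA hw1 hv hv0 (by filter_upwards [hc] with x hx; linarith)

/-- points close to zero with prescribed zero set -/
theorem exists_point {p : (Fin n → ℝ) → Prop} (hp : ∀ᶠ x in 𝓝 0, p x) (S : Set (Fin n)) :
    ∃ x, p x ∧ (∀ i ∈ S, x i = 0) ∧ ∀ i ∉ S, x i ≠ 0 := by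
  classical
  have hc : ContinuousAt (fun t : ℝ => (fun i => if i ∈ S then 0 else t : Fin n → ℝ)) 0 := by
    refine (continuous_pi fun i => ?_).continuousAt
    split_ifs <;> fun_prop
  have h2 := hc.eventually (p := p) (by
    have : (fun i => if i ∈ S then (0:ℝ) else 0 : Fin n → ℝ) = 0 := by funext i; simp
    show ∀ᶠ y in 𝓝 (fun i => if i ∈ S then (0:ℝ) else 0 : Fin n → ℝ), p y
    rw [this]; exact hp)
  obtain ⟨r, hr, hb⟩ := Metric.eventually_nhds_iff.1 h2
  refine ⟨_, hb (y := r / 2) (by simp [abs_of_pos hr]; exact hr), fun i hi => by simp [hi], fun i hi => by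
    simp [hi]; linarith⟩

theorem mon_cmp_aux {α β δ : Fin n → ℕ} {v w z : (Fin n → ℝ) → ℝ} (hv : CM M v 0) (hw : CM M w 0)
    (hz : CM M z 0) (hv0 : v 0 ≠ 0) (hw0 : w 0 ≠ 0) (hz0 : z 0 ≠ 0)
    (hmin : ∀ i, α i = 0 ∨ β i = 0 ∨ δ i = 0)
    (h : ∀ᶠ x in 𝓝 0, mon α x * v x - mon β x * w x = mon δ x * z x) : α ≤ β ∨ β ≤ α := by
  by_contra hcon
  push Not at hcon
  obtain ⟨h1, h2⟩ := hcon
  obtain ⟨j, hj⟩ : ∃ j, β j < α j := by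
    by_contra h'; push Not at h'; exact h1 h'
  obtain ⟨i, hi⟩ : ∃ i, α i < β i := by
    by_contra h'; push Not at h'; exact h2 h'
  have hne := ((hv.continuousAt.eventually_ne hv0).and ((hw.continuousAt.eventually_ne hw0).and
    ((hz.continuousAt.eventually_ne hz0).and h)))
  have hi0 : δ i = 0 := by
    by_contra hδ
    have hα : α i = 0 := by rcases hmin i with h | h | h <;> omega
    obtain ⟨x, ⟨hxv, hxw, hxz, hx⟩, hS, hS'⟩ := exists_point hne {i}
    rw [mon_eq_zero (j := i) (α := β) (by omega) (hS i rfl), mon_eq_zero hδ (hS i rfl)] at hx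
    have : mon α x ≠ 0 := mon_ne_zero fun k hk => hS' k (by rintro rfl; exact hk hα)
    have := mul_ne_zero this hxv
    apply this; linarith
  have hj0 : δ j = 0 := by
    by_contra hδ
    have hβ : β j = 0 := by rcases hmin j with h | h | h <;> omega
    obtain ⟨x, ⟨hxv, hxw, hxz, hx⟩, hS, hS'⟩ := exists_point hne {j}
    rw [mon_eq_zero (j := j) (α := α) (by omega) (hS j rfl), mon_eq_zero hδ (hS j rfl)] at hx
    have : mon β x ≠ 0 := mon_ne_zero fun k hk => hS' k (by rintro rfl; exact hk hβ)
    have := mul_ne_zero this hxw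
    apply this; linarith
  obtain ⟨x, ⟨hxv, hxw, hxz, hx⟩, hS, hS'⟩ := exists_point hne {i, j}
  rw [mon_eq_zero (j := j) (α := α) (by omega) (hS j (by simp)),
    mon_eq_zero (j := i) (α := β) (by omega) (hS i (by simp))] at hx
  have : mon δ x ≠ 0 := mon_ne_zero fun k hk => hS' k (by rintro (rfl | rfl) <;> contradiction)
  have := mul_ne_zero this hxz
  apply this; linarith

theorem mon_cmp_zero {α β : Fin n → ℕ} {v w : (Fin n → ℝ) → ℝ} (hM : Wt M) (hD : Dv M)
    (hv : CM M v 0) (hw : CM M w 0) (hv0 : v 0 ≠ 0) (hw0 : w 0 ≠ 0) 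
    (h : ∀ᶠ x in 𝓝 0, mon α x * v x - mon β x * w x = 0) : α ≤ β ∨ β ≤ α := by
  have hα : α = α ⊓ β + (α - α ⊓ β) := (add_tsub_cancel_of_le inf_le_left).symm
  have hβ : β = α ⊓ β + (β - α ⊓ β) := (add_tsub_cancel_of_le inf_le_right).symm
  generalize hμ : α ⊓ β = μ at hα hβ
  generalize α - μ = α' at hα
  generalize β - μ = β' at hβ
  subst hα hβ
  have hc : ∀ᶠ x in 𝓝 0, mon α' x * v x - mon β' x * w x = 0 := by
    refine mon_cancel hM hD μ (((CM_mon _ 0 hM).mul hv hM).sub ((CM_mon _ 0 hM).mul hw hM) hM) ?_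
    filter_upwards [h] with x hx
    rw [mon_add, mon_add] at hx
    linear_combination hx
  have hmin : ∀ i, α' i = 0 ∨ β' i = 0 := fun i => by
    have := congrFun hμ i
    simp at this; omega
  left
  intro i
  by_contra hi
  simp at hi
  have hne := ((hv.continuousAt.eventually_ne hv0).and ((hw.continuousAt.eventually_ne hw0).and hc))
  obtain ⟨x, ⟨hxv, hxw, hx⟩, hS, hS'⟩ := exists_point hne {i}
  have hβi : β' i = 0 := by rcases hmin i with h | h <;> omega
  rw [mon_eq_zero (j := i) (α := α') (by omega) (hS i rfl)] at hx
  have : mon β' x ≠ 0 := mon_ne_zero fun k hk => hS' k (by rintro rfl; exact hk hβi)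
  have := mul_ne_zero this hxw
  apply this; linarith

theorem mon_cmp {α β δ : Fin n → ℕ} {v w z : (Fin n → ℝ) → ℝ} (hM : Wt M) (hD : Dv M)
    (hv : CM M v 0) (hw : CM M w 0)
    (hz : CM M z 0) (hv0 : v 0 ≠ 0) (hw0 : w 0 ≠ 0) (hz0 : z 0 ≠ 0)
    (h : ∀ᶠ x in 𝓝 0, mon α x * v x - mon β x * w x = mon δ x * z x) : α ≤ β ∨ β ≤ α := by
  have hα : α = α ⊓ β ⊓ δ + (α - α ⊓ β ⊓ δ) :=
    (add_tsub_cancel_of_le (inf_le_left.trans inf_le_left)).symm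
  have hβ : β = α ⊓ β ⊓ δ + (β - α ⊓ β ⊓ δ) :=
    (add_tsub_cancel_of_le (inf_le_left.trans inf_le_right)).symm
  have hδ : δ = α ⊓ β ⊓ δ + (δ - α ⊓ β ⊓ δ) := (add_tsub_cancel_of_le inf_le_right).symm
  generalize hμ : α ⊓ β ⊓ δ = μ at hα hβ hδ
  generalize α - μ = α' at hα
  generalize β - μ = β' at hβ
  generalize δ - μ = δ' at hδ
  subst hα hβ hδ
  have hmin : ∀ i, α' i = 0 ∨ β' i = 0 ∨ δ' i = 0 := fun i => by
    have := congrFun hμ i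
    simp at this; omega
  have hc : ∀ᶠ x in 𝓝 0, mon α' x * v x - mon β' x * w x - mon δ' x * z x = 0 := by
    refine mon_cancel hM hD μ ((((CM_mon _ 0 hM).mul hv hM).sub ((CM_mon _ 0 hM).mul hw hM) hM).sub
      ((CM_mon _ 0 hM).mul hz hM) hM) ?_
    filter_upwards [h] with x hx
    rw [mon_add, mon_add, mon_add] at hx
    linear_combination hx
  have := mon_cmp_aux hv hw hz hv0 hw0 hz0 hmin (by filter_upwards [hc] with x hx; linarith)
  simpa using this
end
end QA
end

section
open scoped ContDiff Nat Topology
open Filter Set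

namespace QA
section
variable {E F G : Type} [NormedAddCommGroup E] [NormedSpace ℝ E] [NormedAddCommGroup F]
  [NormedSpace ℝ F] [NormedAddCommGroup G] [NormedSpace ℝ G] {M : ℕ → ℝ} {n : ℕ}

theorem taylor1 (d : ℕ) (c : ℕ → ℝ) {u f : ℝ → ℝ} (hu : ContDiffAt ℝ ∞ u 0)
    (h : f =ᶠ[𝓝 0] fun t => ∑ i ∈ Finset.range d, c i * t ^ i + t ^ d * u t) :
    (∀ i < d, iteratedDeriv i f 0 = i ! * c i) ∧ iteratedDeriv d f 0 = d ! * u 0 := by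
  have key : ∀ i, iteratedDeriv i f 0 = (∑ k ∈ Finset.range d, c k * (if i = k then (k ! : ℝ) else 0))
      + ∑ k ∈ Finset.range (i + 1), (i.choose k : ℝ) * (if k = d then (d ! : ℝ) else 0) *
        iteratedDeriv (i - k) u 0 := by
    intro i
    have hui : ContDiffAt ℝ i u 0 := hu.of_le (by exact_mod_cast le_top)
    rw [h.iteratedDeriv_eq i, iteratedDeriv_fun_add (by fun_prop) (by fun_prop),
      iteratedDeriv_fun_mul (by fun_prop) hui, iteratedDeriv_fun_sum (by fun_prop)]
    congr 1
    · refine Finset.sum_congr rfl fun k _ => ?_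
      rw [iteratedDeriv_const_mul _ (by fun_prop), iteratedDeriv_fun_pow_zero]; push_cast; rfl
    · refine Finset.sum_congr rfl fun k _ => ?_
      rw [iteratedDeriv_fun_pow_zero]; push_cast; rfl
  constructor
  · intro i hi
    rw [key, Finset.sum_eq_single i, Finset.sum_eq_zero]
    · simp [mul_comm]
    · intro k hk
      have : k ≠ d := by have := Finset.mem_range.1 hk; omega
      simp [this]
    · intro k _ hk; simp [Ne.symm hk]
    · intro hk; exact absurd (Finset.mem_range.2 hi) hk
  · rw [key, Finset.sum_eq_zero, Finset.sum_eq_single d]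
    · simp
    · intro k _ hk; simp [hk]
    · simp
    · intro k hk
      have : d ≠ k := by have := Finset.mem_range.1 hk; omega
      simp [this]

theorem poly_deriv (d : ℕ) (c : ℕ → ℝ) (hc : c d = 0) (U τ : ℝ) :
    iteratedDeriv d (fun t : ℝ => ∑ i ∈ Finset.range (d + 1), c i * t ^ i + t ^ (d + 1) * U) τ
      = ((d + 1)! : ℝ) * τ * U := by
  rw [iteratedDeriv_fun_add (by fun_prop) (by fun_prop), iteratedDeriv_fun_sum (by fun_prop),
    Finset.sum_eq_zero, zero_add]
  · have : (fun t : ℝ => t ^ (d + 1) * U) = fun t => U * t ^ (d + 1) := by funext t; ring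
    rw [this, iteratedDeriv_const_mul _ (by fun_prop), iteratedDeriv_pow]
    have h1 : (d + 1).descFactorial d = (d + 1)! := by
      have := Nat.descFactorial_succ (d + 1) d
      rw [Nat.descFactorial_self] at this
      simpa using this.symm
    rw [h1]; simp; ring
  · intro i hi
    rw [iteratedDeriv_const_mul _ (by fun_prop), iteratedDeriv_pow]
    rcases lt_or_eq_of_le (Nat.lt_succ_iff.1 (Finset.mem_range.1 hi)) with h | h
    · simp [Nat.descFactorial_eq_zero_iff_lt.mpr h]
    · subst h; simp [hc]

theorem CM_fst (p : E × F) (hM : Wt M) : CM M (fun q : E × F => q.1) p :=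
  CM_clm (ContinuousLinearMap.fst ℝ E F) p hM
theorem CM_snd (p : E × F) (hM : Wt M) : CM M (fun q : E × F => q.2) p :=
  CM_clm (ContinuousLinearMap.snd ℝ E F) p hM

theorem CM_taylor (hM : Wt M) {h : E × ℝ → ℝ} {a : E} (hh : CM M h (a, 0)) (d : ℕ) :
    ∃ c : ℕ → E → ℝ, ∃ u : E × ℝ → ℝ, (∀ i, CM M (c i) a) ∧ CM M u (a, 0) ∧
      ∀ᶠ p in 𝓝 (a, (0:ℝ)), h p = ∑ i ∈ Finset.range d, c i p.1 * p.2 ^ i + p.2 ^ d * u p := by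
  induction d with
  | zero => exact ⟨fun _ _ => 0, h, fun i => CM_const 0 a hM, hh, by simp⟩
  | succ d ih =>
    obtain ⟨c, u, hc, hu, he⟩ := ih
    have hu0 : CM M (fun x => u (x, 0)) a :=
      CM.comp_of_eq hu ((CM_id a hM).prodMk (CM_const 0 a hM) hM) rfl hM
    have hu1 : CM M (fun p : E × ℝ => u (p.1, 0)) (a, 0) :=
      CM.comp_of_eq (g := fun x => u (x, 0)) (f := fun p : E × ℝ => p.1) hu0 (CM_fst (a, 0) hM) rfl hM
    obtain ⟨g, hg, hge⟩ := CM_divide (hu.sub hu1 hM) (ContinuousLinearMap.snd ℝ E ℝ) (0, 1) (by simp)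
      (by simp) (Eventually.of_forall fun p hp => by
        have : p = (p.1, 0) := Prod.ext rfl hp
        rw [this]; simp) hM
    refine ⟨Function.update c d fun x => u (x, 0), g, ?_, hg, ?_⟩
    · intro i
      by_cases hi : i = d
      · subst hi; simpa using hu0
      · simpa [Function.update_of_ne hi] using hc i
    · filter_upwards [he, hge] with p hp hp1
      rw [hp, Finset.sum_range_succ]
      have h1 : ∑ i ∈ Finset.range d, Function.update c d (fun x => u (x, 0)) i p.1 * p.2 ^ i
          = ∑ i ∈ Finset.range d, c i p.1 * p.2 ^ i :=
        Finset.sum_congr rfl fun i hi => by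
          rw [Function.update_of_ne (by have := Finset.mem_range.1 hi; omega)]
      rw [h1]
      have h2 : u p = u (p.1, 0) + p.2 * g p := by
        have : u p - u (p.1, 0) = p.2 * g p := hp1
        linarith
      rw [h2]; simp; ring

/-- monomial times unit is good, even away from the origin -/
theorem Good_monomial (hM : Wt M) (μ : Fin n → ℕ) (ρ : ℕ) (a : Fin n → ℝ) (b : ℝ)
    {u F : (Fin n → ℝ) × ℝ → ℝ} (hu : CM M u (a, b)) (hu0 : u (a, b) ≠ 0)
    (h : ∀ᶠ p in 𝓝 (a, b), F p = mon μ p.1 * p.2 ^ ρ * u p) : Good M F (a, b) := by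
  classical
  let e : ((Fin n → ℝ) × ℝ) ≃L[ℝ] (Fin (n + 1) → ℝ) :=
    (ContinuousLinearEquiv.prodComm ℝ (Fin n → ℝ) ℝ).trans (Fin.consEquivL ℝ fun _ => ℝ)
  have he0 : ∀ p, e p 0 = p.2 := fun p => rfl
  have hes : ∀ p (i : Fin n), e p i.succ = p.1 i := fun p i => rfl
  let α : Fin (n + 1) → ℕ := Fin.cons (if b = 0 then ρ else 0) fun i => if a i = 0 then μ i else 0
  let w : (Fin n → ℝ) × ℝ → ℝ := fun p => (if b = 0 then 1 else p.2 ^ ρ) *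
    (∏ i, if a i = 0 then 1 else p.1 i ^ μ i) * u p
  refine Good.mono F (a, b) (n + 1) e α w ?_ ?_ ?_
  · refine CM.mul (CM.mul ?_ ?_ hM) hu hM
    · split_ifs
      · exact CM_const _ _ hM
      · exact (CM_snd _ hM).pow hM ρ
    · refine CM_prod _ (fun i _ => ?_) hM
      split_ifs
      · exact CM_const _ _ hM
      · exact (CM.comp_of_eq (CM_coord i a hM) (CM_fst (a, b) hM) rfl hM).pow hM _
  · refine mul_ne_zero (mul_ne_zero ?_ (Finset.prod_ne_zero_iff.2 fun i _ => ?_)) hu0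
    · split_ifs with hb
      · exact one_ne_zero
      · exact pow_ne_zero _ hb
    · split_ifs with hb
      · exact one_ne_zero
      · exact pow_ne_zero _ hb
  · filter_upwards [h] with p hp
    rw [hp, Fin.prod_univ_succ]
    simp only [he0, hes, α, w, Fin.cons_zero, Fin.cons_succ, Prod.fst_sub, Prod.snd_sub, Pi.sub_apply]
    have h1 : mon μ p.1 = (∏ i, (p.1 i - a i) ^ (if a i = 0 then μ i else 0)) *
        ∏ i, if a i = 0 then 1 else p.1 i ^ μ i := by
      rw [mon, ← Finset.prod_mul_distrib]
      refine Finset.prod_congr rfl fun i _ => ?_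
      split_ifs with hi <;> simp [hi]
    have h2 : p.2 ^ ρ = (p.2 - b) ^ (if b = 0 then ρ else 0) * (if b = 0 then 1 else p.2 ^ ρ) := by
      split_ifs with hi <;> simp [hi]
    rw [h1]; conv_lhs => rw [h2]
    ring
end
end QA
end

section
open scoped ContDiff Nat Topology
open Filter Set

namespace QA
section
variable {E F G : Type} [NormedAddCommGroup E] [NormedSpace ℝ E] [NormedAddCommGroup F]
  [NormedSpace ℝ F] [NormedAddCommGroup G] [NormedSpace ℝ G] {M : ℕ → ℝ} {n : ℕ}

def TT (M : ℕ → ℝ) (n d : ℕ) : Prop := ∀ (a : Fin n → ℝ) (b : ℝ) (m : (Fin n → ℝ) → ℝ)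
  (h : (Fin n → ℝ) × ℝ → ℝ), CM M m a → (¬ ∀ᶠ x in 𝓝 a, m x = 0) → CM M h (a, b) →
  iteratedDeriv d (fun t => h (a, t)) b ≠ 0 → Good M (fun p => m p.1 * h p) (a, b)

theorem mon_scale (α : Fin n → ℕ) (σ : Fin n → ℝ) (j : Fin n) (t : ℝ) :
    mon α (Function.update σ j (t * σ j)) = t ^ α j * mon α σ := by
  have : t ^ α j = ∏ i, (if i = j then t else 1) ^ α i := by
    rw [Finset.prod_eq_single j] <;> simp +contextual
  rw [this, mon, mon, ← Finset.prod_mul_distrib]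
  refine Finset.prod_congr rfl fun i _ => ?_
  by_cases hi : i = j
  · subst hi; simp [mul_pow]
  · simp [hi]

theorem split_single {γ : Fin n → ℕ} {j : Fin n} (hj : γ j ≠ 0) :
    γ = Pi.single j 1 + (γ - Pi.single j 1) := by
  rw [add_tsub_cancel_of_le]
  intro i
  by_cases hi : i = j
  · subst hi; simp; omega
  · simp [Pi.single_eq_of_ne hi]

theorem mon_abs_le {γ : Fin n → ℕ} {j : Fin n} (hj : γ j ≠ 0) {x : Fin n → ℝ} {δ : ℝ}
    (hx : ∀ i, |x i| ≤ 1) (hxj : |x j| ≤ δ) : |mon γ x| ≤ δ := by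
  rw [split_single hj, mon_add, mon_single, pow_one, abs_mul]
  have : |mon (γ - Pi.single j 1) x| ≤ 1 := by
    rw [mon, Finset.abs_prod]
    refine Finset.prod_le_one (fun i _ => abs_nonneg _) fun i _ => ?_
    rw [abs_pow]; exact pow_le_one₀ (abs_nonneg _) (hx i)
  calc |x j| * _ ≤ |x j| * 1 := by gcongr
    _ ≤ δ := by simpa using hxj

theorem mon_unit_not_zero (hM : Wt M) (hD : Dv M) (μ : Fin n → ℕ) {v : (Fin n → ℝ) → ℝ}
    (hv : CM M v 0) (hv0 : v 0 ≠ 0) : ¬ ∀ᶠ x in 𝓝 0, mon μ x * v x = 0 := by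
  intro h
  exact hv0 (mon_cancel hM hD μ hv h).self_of_nhds

/-- the form of the functions in the blow-up induction -/
def hform (d : ℕ) (β : Fin n → ℕ) (c : ℕ → (Fin n → ℝ) → ℝ) (u : (Fin n → ℝ) × ℝ → ℝ)
    (p : (Fin n → ℝ) × ℝ) : ℝ :=
  ∑ i ∈ Finset.range d, mon ((d - i) • β) p.1 * c i p.1 * p.2 ^ i + p.2 ^ d * u p

theorem CM_lift (hM : Wt M) {f : E → ℝ} {a : E} (b : F) (hf : CM M f a) :
    CM M (fun p : E × F => f p.1) (a, b) :=
  CM.comp_of_eq (f := fun p : E × F => p.1) hf (CM_fst (a, b) hM) rfl hM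

theorem CM_hform (hM : Wt M) (d : ℕ) (β : Fin n → ℕ) {c : ℕ → (Fin n → ℝ) → ℝ}
    {u : (Fin n → ℝ) × ℝ → ℝ} {a : Fin n → ℝ} {b : ℝ} (hc : ∀ i, CM M (c i) a) (hu : CM M u (a, b)) :
    CM M (hform d β c u) (a, b) := by
  refine CM.add (CM_sum _ (fun i _ => ?_) hM) (((CM_snd _ hM).pow hM d).mul hu hM) hM
  exact ((CM_lift hM b (CM_mon _ a hM)).mul (CM_lift hM b (hc i)) hM).mul ((CM_snd _ hM).pow hM i) hM

theorem chartA_eq (d : ℕ) (β μ : Fin n → ℕ) (j : Fin n) (hj : β j ≠ 0) (c : ℕ → (Fin n → ℝ) → ℝ)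
    (u : (Fin n → ℝ) × ℝ → ℝ) (s : Fin n → ℝ) (t : ℝ) :
    mon μ s * hform d β c u (s, s j * t) = mon (μ + d • Pi.single j 1) s *
      hform d (β - Pi.single j 1) c (fun p => u (p.1, p.1 j * p.2)) (s, t) := by
  rw [mon_add, mul_assoc]; congr 1
  simp only [hform, mon_smul, mon_single, pow_one, mul_add, Finset.mul_sum]
  congr 1
  · refine Finset.sum_congr rfl fun i hi => ?_
    have hi := Finset.mem_range.1 hi
    have h1 : mon β s = s j * mon (β - Pi.single j 1) s := by
      conv_lhs => rw [split_single hj]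
      rw [mon_add, mon_single, pow_one]
    have h2 : s j ^ d = s j ^ (d - i) * s j ^ i := by rw [← pow_add]; congr 1; omega
    rw [h1, h2]; ring
  · ring

theorem chartB_eq (d : ℕ) (β μ : Fin n → ℕ) (j : Fin n) (hj : β j ≠ 0) (c : ℕ → (Fin n → ℝ) → ℝ)
    (u : (Fin n → ℝ) × ℝ → ℝ) (s : Fin n → ℝ) (t : ℝ) :
    mon μ (Function.update s j (t * s j)) * hform d β c u (Function.update s j (t * s j), t) =
      mon μ s * t ^ (μ j + d) * (∑ i ∈ Finset.range d, mon ((d - i) • β) s * t ^ ((d - i) * (β j - 1)) *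
        c i (Function.update s j (t * s j)) + u (Function.update s j (t * s j), t)) := by
  simp only [hform, mon_scale, mul_add, Finset.mul_sum]
  congr 1
  · refine Finset.sum_congr rfl fun i hi => ?_
    have hi := Finset.mem_range.1 hi
    have h2 : t ^ (((d - i) • β) j) * t ^ i = t ^ d * t ^ ((d - i) * (β j - 1)) := by
      rw [← pow_add, ← pow_add]; congr 1
      obtain ⟨b, hb⟩ := Nat.exists_eq_succ_of_ne_zero hj
      obtain ⟨k, hk⟩ := Nat.exists_eq_add_of_le hi.le
      simp [hb, hk]; ring
    rw [pow_add]; linear_combination (t ^ μ j * mon μ s * mon ((d - i) • β) s *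
      c i (Function.update s j (t * s j))) * h2
  · rw [pow_add]; ring

set_option maxHeartbeats 400000 in
theorem claimB (hM : Wt M) (hD : Dv M) (d : ℕ) (hT : ∀ d' < d, TT M n d') :
    ∀ (k : ℕ) (β : Fin n → ℕ), ∑ j, β j = k → ∀ (μ : Fin n → ℕ) (v : (Fin n → ℝ) → ℝ)
    (c : ℕ → (Fin n → ℝ) → ℝ) (u : (Fin n → ℝ) × ℝ → ℝ), CM M v 0 → v 0 ≠ 0 → (∀ i, CM M (c i) 0) →
    CM M u (0, 0) → u (0, 0) ≠ 0 → (∀ i, i + 1 = d → c i 0 = 0) → (∃ i < d, c i 0 ≠ 0) →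
    Good M (fun p => mon μ p.1 * v p.1 * hform d β c u p) (0, 0) := by
  intro k
  induction k with
  | zero =>
    intro β hβ μ v c u hv hv0 hc hu hu0 hcd ⟨i0, hi0, hci0⟩
    have hβ0 : β = 0 := by
      funext j; exact (Finset.sum_eq_zero_iff.1 hβ) j (Finset.mem_univ j)
    subst hβ0
    refine hT i0 hi0 0 0 (fun x => mon μ x * v x) _ ((CM_mon μ 0 hM).mul hv hM)
      (mon_unit_not_zero hM hD μ hv hv0) (CM_hform hM d 0 hc hu) ?_
    have hu1 : ContDiffAt ℝ ∞ (fun t : ℝ => u (0, t)) 0 :=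
      hu.contDiffAt.comp (0 : ℝ) (by fun_prop : ContDiffAt ℝ ∞ (fun t : ℝ => ((0 : Fin n → ℝ), t)) 0)
    have := (taylor1 d (fun i => c i 0) (f := fun t => hform d 0 c u (0, t)) hu1
      (Eventually.of_forall fun t => by simp [hform, mon_zero])).1 i0 hi0
    rw [this]
    exact mul_ne_zero (by positivity) hci0
  | succ k ih =>
    intro β hβ μ v c u hv hv0 hc hu hu0 hcd hex
    obtain ⟨j, hj⟩ : ∃ j, β j ≠ 0 := by
      by_contra hcon; push Not at hcon; simp [hcon] at hβ
    have hβ' : ∑ i, (β - Pi.single j 1 : Fin n → ℕ) i = k := by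
      have : ∑ i, β i = ∑ i, (Pi.single j 1 : Fin n → ℕ) i + ∑ i, (β - Pi.single j 1 : Fin n → ℕ) i := by
        rw [← Finset.sum_add_distrib]; conv_lhs => rw [split_single hj]
        rfl
      rw [Finset.sum_pi_single'] at this
      simp only [Finset.mem_univ, if_true] at this; omega
    set S := ∑ i ∈ Finset.range d, |c i 0| with hS
    have hS0 : 0 ≤ S := Finset.sum_nonneg fun i _ => abs_nonneg _
    have hua := abs_pos.2 hu0
    obtain ⟨δ, hδ0, hδ1, hδ⟩ : ∃ δ > 0, δ ≤ 1 ∧ S * δ < |u (0, 0)| := by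
      refine ⟨min 1 (|u (0, 0)| / (2 * (S + 1))), by positivity, min_le_left _ _, ?_⟩
      calc S * min 1 (|u (0, 0)| / (2 * (S + 1))) ≤ S * (|u (0, 0)| / (2 * (S + 1))) := by
            gcongr; exact min_le_right _ _
        _ = |u (0, 0)| * (S / (2 * (S + 1))) := by ring
        _ < |u (0, 0)| * 1 := by
            gcongr
            rw [div_lt_one (by positivity)]; linarith
        _ = _ := mul_one _
    let phA : (Fin n → ℝ) × ℝ → (Fin n → ℝ) × ℝ := fun p => (p.1, p.1 j * p.2)
    let phB : (Fin n → ℝ) × ℝ → (Fin n → ℝ) × ℝ := fun p => (Function.update p.1 j (p.2 * p.1 j), p.2)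
    have hphA : ∀ y, CM M phA y := fun y =>
      (CM_fst y hM).prodMk ((CM_lift hM y.2 (CM_coord j y.1 hM)).mul (CM_snd y hM) hM) hM
    have hphB1 : ∀ y : (Fin n → ℝ) × ℝ, CM M (fun p : (Fin n → ℝ) × ℝ => Function.update p.1 j (p.2 * p.1 j)) y := by
      intro y
      refine CM_pi (fun i => ?_) hM
      by_cases hi : i = j
      · subst hi
        simp only [Function.update_self]
        exact (CM_snd y hM).mul (CM_lift hM y.2 (CM_coord i y.1 hM)) hM
      · simp only [Function.update_of_ne hi]
        exact CM_lift hM y.2 (CM_coord i y.1 hM)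
    have hphB : ∀ y, CM M phB y := fun y => (hphB1 y).prodMk (CM_snd y hM) hM
    have hLB0 : ∀ r : ℝ, Function.update (Pi.single j r : Fin n → ℝ) j (0 * (Pi.single j r : Fin n → ℝ) j) = 0 := by
      intro r; funext i
      by_cases hi : i = j
      · subst hi; simp
      · simp [hi]
    let LA : Set ((Fin n → ℝ) × ℝ) := (fun τ : ℝ => ((0 : Fin n → ℝ), τ)) '' Icc (-δ⁻¹) δ⁻¹
    let LB : Set ((Fin n → ℝ) × ℝ) := (fun r : ℝ => ((Pi.single j r : Fin n → ℝ), (0:ℝ))) '' Icc (-δ) δ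
    have hcs : Continuous fun r : ℝ => (Pi.single j r : Fin n → ℝ) := continuous_single (A := fun _ : Fin n => ℝ) j
    refine Good.cover _ _ Bool inferInstance (fun b => if b then phA else phB)
      (fun b => if b then LA else LB) ?_ ?_ ?_ ?_ ?_
    · intro b
      cases b
      · exact isCompact_Icc.image (by fun_prop)
      · exact isCompact_Icc.image (by fun_prop)
    · intro b y _
      cases b
      · exact hphB y
      · exact hphA y
    · intro b y hy
      cases b
      · obtain ⟨r, hr, rfl⟩ := hy
        show (_, _) = _
        simp only [hLB0]
      · obtain ⟨r, hr, rfl⟩ := hy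
        show (_, _) = _
        simp
    · intro O hO hLO
      have hA : ∀ᶠ s : Fin n → ℝ in 𝓝 0, ∀ τ ∈ Icc (-δ⁻¹) δ⁻¹, (s, τ) ∈ O true := by
        refine isCompact_Icc.eventually_forall_of_forall_eventually fun τ hτ => ?_
        exact (hO true).mem_nhds (hLO true ⟨τ, hτ, rfl⟩)
      have hB : ∀ᶠ p : (Fin n → ℝ) × ℝ in 𝓝 (0, 0), ∀ r ∈ Icc (-δ) δ,
          (Function.update p.1 j r, p.2) ∈ O false := by
        refine isCompact_Icc.eventually_forall_of_forall_eventually fun r hr => ?_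
        have hcont : Continuous fun z : ((Fin n → ℝ) × ℝ) × ℝ => (Function.update z.1.1 j z.2, z.1.2) := by
          refine Continuous.prodMk (Continuous.update (by fun_prop) j (by fun_prop)) (by fun_prop)
        refine hcont.continuousAt.preimage_mem_nhds ((hO false).mem_nhds ?_)
        exact hLO false ⟨r, hr, rfl⟩
      have hA' : ∀ᶠ p : (Fin n → ℝ) × ℝ in 𝓝 (0, 0), ∀ τ ∈ Icc (-δ⁻¹) δ⁻¹, (p.1, τ) ∈ O true :=
        continuousAt_fst.eventually (p := fun s => ∀ τ ∈ Icc (-δ⁻¹) δ⁻¹, (s, τ) ∈ O true) hA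
      filter_upwards [hA', hB] with p hpA hpB
      rw [mem_iUnion]
      by_cases hcase : |p.2| ≤ δ⁻¹ * |p.1 j|
      · refine ⟨true, (p.1, p.2 / p.1 j), hpA _ ?_, ?_⟩
        · rw [mem_Icc, ← abs_le, abs_div]
          exact div_le_of_le_mul₀ (abs_nonneg _) (by positivity) hcase
        · show (p.1, p.1 j * (p.2 / p.1 j)) = p
          refine Prod.ext rfl ?_
          show p.1 j * (p.2 / p.1 j) = p.2
          by_cases h0 : p.1 j = 0
          · have : p.2 = 0 := by simpa [h0] using hcase
            rw [h0, this]; simp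
          · field_simp
      · push Not at hcase
        have hp2 : p.2 ≠ 0 := by
          intro h0; rw [h0, abs_zero] at hcase
          have : 0 ≤ δ⁻¹ * |p.1 j| := by positivity
          linarith
        refine ⟨false, (Function.update p.1 j (p.1 j / p.2), p.2), hpB _ ?_, ?_⟩
        · rw [mem_Icc, ← abs_le, abs_div, div_le_iff₀ (abs_pos.2 hp2)]
          have := mul_le_mul_of_nonneg_left hcase.le hδ0.le
          rwa [← mul_assoc, mul_inv_cancel₀ hδ0.ne', one_mul] at this
        · show (Function.update (Function.update p.1 j (p.1 j / p.2)) j (p.2 * Function.update p.1 j (p.1 j / p.2) j), p.2) = p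
          refine Prod.ext ?_ rfl
          simp only [Function.update_self, Function.update_idem]
          rw [mul_div_cancel₀ _ hp2, Function.update_eq_self]
    · intro b y hy
      cases b
      · obtain ⟨r, hr, rfl⟩ := hy
        have hps := hphB1 (Pi.single j r, 0)
        refine Good_monomial hM μ (μ j + d) (Pi.single j r) 0 (u := fun p =>
          v (Function.update p.1 j (p.2 * p.1 j)) * (∑ i ∈ Finset.range d, mon ((d - i) • β) p.1 *
            p.2 ^ ((d - i) * (β j - 1)) * c i (Function.update p.1 j (p.2 * p.1 j)) +
            u (Function.update p.1 j (p.2 * p.1 j), p.2))) ?_ ?_ ?_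
        · refine CM.mul (CM.comp_of_eq hv hps (hLB0 r) hM) (CM.add (CM_sum _ (fun i _ => ?_) hM)
            (CM.comp_of_eq hu (hphB (Pi.single j r, 0)) (by show (_, _) = _; simp only [hLB0]) hM) hM) hM
          exact ((CM_lift hM _ (CM_mon _ _ hM)).mul ((CM_snd _ hM).pow hM _) hM).mul
            (CM.comp_of_eq (hc i) hps (hLB0 r) hM) hM
        · simp only [hLB0]
          refine mul_ne_zero hv0 ?_
          intro h0
          have hle : |∑ i ∈ Finset.range d, mon ((d - i) • β) (Pi.single j r : Fin n → ℝ) *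
              (0:ℝ) ^ ((d - i) * (β j - 1)) * c i 0| ≤ S * δ := by
            rw [hS, Finset.sum_mul]
            refine (Finset.abs_sum_le_sum_abs _ _).trans (Finset.sum_le_sum fun i hi => ?_)
            have hi := Finset.mem_range.1 hi
            have hrδ : |r| ≤ δ := abs_le.2 hr
            have h1 : |mon ((d - i) • β) (Pi.single j r : Fin n → ℝ)| ≤ δ := by
              refine mon_abs_le (j := j) ?_ ?_ (by simpa using hrδ)
              · simp; omega
              · intro l
                by_cases hl : l = j
                · subst hl; simpa using hrδ.trans hδ1
                · simp [hl]
            have h2 : |(0:ℝ) ^ ((d - i) * (β j - 1))| ≤ 1 := by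
              rw [abs_pow]; exact pow_le_one₀ (abs_nonneg _) (by simp)
            rw [abs_mul, abs_mul]
            calc _ ≤ δ * 1 * |c i 0| := by gcongr
              _ = _ := by ring
          have : |u (0, 0)| ≤ S * δ := by
            refine le_trans (le_of_eq ?_) hle
            rw [eq_neg_of_add_eq_zero_left h0, abs_neg]
          linarith
        · refine Eventually.of_forall fun p => ?_
          have := chartB_eq d β μ j hj c u p.1 p.2
          show mon μ (Function.update p.1 j (p.2 * p.1 j)) * v (Function.update p.1 j (p.2 * p.1 j)) *
            hform d β c u (Function.update p.1 j (p.2 * p.1 j), p.2) = _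
          linear_combination v (Function.update p.1 j (p.2 * p.1 j)) * this
      · obtain ⟨τ, hτ, rfl⟩ := hy
        have heq : (fun p : (Fin n → ℝ) × ℝ => mon (μ + d • Pi.single j 1) p.1 * v p.1 *
            hform d (β - Pi.single j 1) c (fun p => u (p.1, p.1 j * p.2)) p) =
            (fun p => mon μ (phA p).1 * v (phA p).1 * hform d β c u (phA p)) := by
          funext p
          have := chartA_eq d β μ j hj c u p.1 p.2
          show _ = mon μ p.1 * v p.1 * hform d β c u (p.1, p.1 j * p.2)
          linear_combination - v p.1 * this
        show Good M (fun p => mon μ (phA p).1 * v (phA p).1 * hform d β c u (phA p)) (0, τ)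
        rw [← heq]
        have huA : CM M (fun p : (Fin n → ℝ) × ℝ => u (p.1, p.1 j * p.2)) (0, τ) :=
          CM.comp_of_eq hu (hphA (0, τ)) (by show (_, _) = _; simp) hM
        clear heq
        generalize (μ + d • Pi.single j 1 : Fin n → ℕ) = γ
        generalize (β - Pi.single j 1 : Fin n → ℕ) = β' at hβ' ⊢
        by_cases hτ0 : τ = 0
        · subst hτ0
          exact ih _ hβ' _ v c _ hv hv0 hc huA (by simpa using hu0) hcd hex
        · obtain ⟨i0, hi0, -⟩ := hex
          obtain ⟨d', rfl⟩ : ∃ d', d = d' + 1 := ⟨d - 1, by omega⟩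
          have h2 : (fun t : ℝ => hform (d' + 1) β' c (fun p => u (p.1, p.1 j * p.2)) (0, t))
            = (fun t : ℝ => ∑ i ∈ Finset.range (d' + 1), (mon ((d' + 1 - i) • β') 0 * c i 0) * t ^ i
              + t ^ (d' + 1) * u (0, 0)) := by
            funext t; simp [hform]
          have h3 := poly_deriv d' (fun i => mon ((d' + 1 - i) • β') 0 * c i 0)
            (by show _ * c d' 0 = 0; rw [hcd d' rfl, mul_zero]) (u (0, 0)) τ
          have h4 := hT d' (Nat.lt_succ_self d') 0 τ (fun x => mon γ x * v x)
            (hform (d' + 1) β' c (fun p => u (p.1, p.1 j * p.2)))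
            ((CM_mon γ 0 hM).mul hv hM) (mon_unit_not_zero hM hD γ hv hv0)
            (CM_hform hM (d' + 1) β' hc huA) (by
              rw [h2, h3]
              exact mul_ne_zero (mul_ne_zero (by positivity) hτ0) hu0)
          exact h4
end
end QA
end

section
open scoped ContDiff Nat Topology
open Filter Set

namespace QA
section
variable {E F G : Type} [NormedAddCommGroup E] [NormedSpace ℝ E] [NormedAddCommGroup F]
  [NormedSpace ℝ F] [NormedAddCommGroup G] [NormedSpace ℝ G] {M : ℕ → ℝ} {n : ℕ}

def Dvd0 (M : ℕ → ℝ) (P A : E → ℝ) (a : E) : Prop :=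
  (∀ᶠ x in 𝓝 a, A x = 0) ∨ ∃ w, CM M w a ∧ ∀ᶠ x in 𝓝 a, P x = A x * w x

theorem Dvd0.pull {P A : E → ℝ} {a b : E} (h : Dvd0 M P A a) {ph : E → E} (hph : CM M ph b)
    (hb : ph b = a) (hM : Wt M) : Dvd0 M (fun x => P (ph x)) (fun x => A (ph x)) b := by
  have hc := hph.continuousAt
  subst hb
  rcases h with h | ⟨w, hw, h⟩
  · exact Or.inl (hc.eventually h)
  · exact Or.inr ⟨fun x => w (ph x), hw.comp hph hM, hc.eventually h⟩

structure Rel (M : ℕ → ℝ) (d : ℕ) (P m : E → ℝ) (c : ℕ → E → ℝ) (u : E × ℝ → ℝ) (a : E) : Prop where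
  hm : CM M m a
  hmP : ∃ w, CM M w a ∧ ∀ᶠ x in 𝓝 a, P x = m x * w x
  hc : ∀ i, CM M (c i) a
  hcP : ∀ i < d, Dvd0 M P (c i) a
  hdP : ∀ i < d, ∀ j < d, Dvd0 M P (fun x => c i x ^ (d ! / (d - i)) - c j x ^ (d ! / (d - j))) a
  hu : CM M u (a, 0)
  hu0 : u (a, 0) ≠ 0
  hl : ∀ i, i + 1 = d → ∀ᶠ x in 𝓝 a, c i x = 0

theorem Rel.pull {d : ℕ} {P m : E → ℝ} {c : ℕ → E → ℝ} {u : E × ℝ → ℝ} {a b : E}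
    (h : Rel M d P m c u a) {ph : E → E} (hph : CM M ph b) (hb : ph b = a) (hM : Wt M) :
    Rel M d (fun x => P (ph x)) (fun x => m (ph x)) (fun i x => c i (ph x))
      (fun p => u (ph p.1, p.2)) b := by
  have hcon := hph.continuousAt
  subst hb
  refine ⟨h.hm.comp hph hM, ?_, fun i => (h.hc i).comp hph hM, fun i hi => (h.hcP i hi).pull hph rfl hM,
    fun i hi j hj => (h.hdP i hi j hj).pull hph rfl hM, ?_, h.hu0, fun i hi => hcon.eventually (h.hl i hi)⟩
  · obtain ⟨w, hw, he⟩ := h.hmP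
    exact ⟨fun x => w (ph x), hw.comp hph hM, hcon.eventually he⟩
  · refine CM.comp_of_eq (f := fun p : E × ℝ => (ph p.1, p.2)) h.hu ?_ rfl hM
    refine CM.prodMk ?_ (CM_snd _ hM) hM
    exact CM.comp_of_eq (f := fun p : E × ℝ => p.1) hph (CM_fst _ hM) rfl hM

def bform (d : ℕ) (m : E → ℝ) (c : ℕ → E → ℝ) (u : E × ℝ → ℝ) (p : E × ℝ) : ℝ :=
  m p.1 * (∑ i ∈ Finset.range d, c i p.1 * p.2 ^ i + p.2 ^ d * u p)

theorem mon_mul (α : Fin n → ℕ) (x y : Fin n → ℝ) : mon α (x * y) = mon α x * mon α y := by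
  simp [mon, mul_pow, Finset.prod_mul_distrib]

theorem mon_powvec (α : Fin n → ℕ) (D : ℕ) (y : Fin n → ℝ) : mon α (y ^ D) = mon (D • α) y := by
  simp [mon, ← pow_mul]

/-- common substitution -/
theorem base_chart (D : ℕ) (hD0 : D ≠ 0) (hM : Wt M) (f : (Fin n → ℝ) × ℝ → ℝ)
    (H : ∀ g : Fin n → ℝ, (∀ k, g k ≠ 0) → Good M (fun p => f (g * p.1 ^ D, p.2)) (0, 0)) :
    Good M f (0, 0) := by
  let sg : (Fin n → Bool) → Fin n → ℝ := fun ε k => if ε k then 1 else -1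
  have hsg : ∀ ε k, sg ε k ≠ 0 := fun ε k => by simp only [sg]; split_ifs <;> norm_num
  refine Good.cover f _ (Fin n → Bool) inferInstance (fun ε p => (sg ε * p.1 ^ D, p.2))
    (fun _ => {(0, 0)}) (fun _ => isCompact_singleton) ?_ ?_ ?_ ?_
  · rintro ε y -
    refine CM.prodMk (CM_pi (fun k => ?_) hM) (CM_snd y hM) hM
    exact (CM_const (sg ε k) y hM).mul ((CM_lift hM y.2 (CM_coord k y.1 hM)).pow hM D) hM
  · rintro ε y rfl
    simp [hD0]
  · intro O hO hL
    let r : (Fin n → ℝ) × ℝ → (Fin n → ℝ) × ℝ := fun p => (fun k => |p.1 k| ^ ((D:ℝ)⁻¹), p.2)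
    have hDpos : (0:ℝ) < (D:ℝ)⁻¹ := by
      have : 0 < D := Nat.pos_of_ne_zero hD0
      positivity
    have hr : Continuous r := by
      refine Continuous.prodMk (continuous_pi fun k => ?_) continuous_snd
      exact Continuous.rpow_const (by fun_prop) fun _ => Or.inr hDpos.le
    have hr0 : r (0, 0) = (0, 0) := by
      refine Prod.ext (funext fun k => ?_) rfl
      simp [r, Real.zero_rpow hDpos.ne']
    have hev : ∀ᶠ p in 𝓝 ((0 : Fin n → ℝ), (0:ℝ)), ∀ ε, r p ∈ O ε := by
      rw [eventually_all]
      intro ε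
      refine hr.continuousAt.preimage_mem_nhds ((hO ε).mem_nhds ?_)
      rw [hr0]; exact hL ε rfl
    filter_upwards [hev] with p hp
    refine mem_iUnion.2 ⟨fun k => decide (0 ≤ p.1 k), r p, hp _, ?_⟩
    refine Prod.ext (funext fun k => ?_) rfl
    simp only [r, Pi.mul_apply, Pi.pow_apply]
    rw [Real.rpow_inv_natCast_pow (abs_nonneg _) hD0]
    by_cases h : 0 ≤ p.1 k
    · simp [sg, h, abs_of_nonneg h]
    · simp [sg, h, abs_of_neg (not_le.1 h)]
  · rintro ε y rfl
    exact H (sg ε) (hsg ε)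

set_option maxHeartbeats 400000 in
theorem base (hM : Wt M) (hD : Dv M) (d : ℕ) (hT : ∀ d' < d, TT M n d') {P m : (Fin n → ℝ) → ℝ}
    {c : ℕ → (Fin n → ℝ) → ℝ} {u : (Fin n → ℝ) × ℝ → ℝ} (h : Rel M d P m c u 0)
    (γ : Fin n → ℕ) {v : (Fin n → ℝ) → ℝ} (hv : CM M v 0) (hv0 : v 0 ≠ 0)
    (hP : ∀ᶠ x in 𝓝 0, P x = mon γ x * v x) : Good M (bform d m c u) (0, 0) := by
  classical
  have hdvd : ∀ {A : (Fin n → ℝ) → ℝ}, CM M A 0 → (∃ w, CM M w 0 ∧ ∀ᶠ x in 𝓝 0, P x = A x * w x) →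
      ∃ α : Fin n → ℕ, ∃ A', CM M A' 0 ∧ A' 0 ≠ 0 ∧ ∀ᶠ x in 𝓝 0, A x = mon α x * A' x := by
    rintro A hA ⟨w, hw, he⟩
    refine CM_mon_div hM hD γ hA hw hv hv0 ?_
    filter_upwards [he, hP] with x h1 h2
    rw [← h1, h2]
  obtain ⟨μ, m', hm', hm'0, hme⟩ := hdvd h.hm h.hmP
  have hex : ∀ i, ∃ α : Fin n → ℕ, ∃ A', CM M A' 0 ∧ (i < d → (¬ ∀ᶠ x in 𝓝 0, c i x = 0) →
      A' 0 ≠ 0 ∧ ∀ᶠ x in 𝓝 0, c i x = mon α x * A' x) := by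
    intro i
    by_cases hi : i < d ∧ ¬ ∀ᶠ x in 𝓝 0, c i x = 0
    · obtain ⟨α, A', h1, h2, h3⟩ := hdvd (h.hc i) ((h.hcP i hi.1).resolve_left hi.2)
      exact ⟨α, A', h1, fun _ _ => ⟨h2, h3⟩⟩
    · exact ⟨0, fun _ => 0, CM_const 0 0 hM, fun h1 h2 => absurd ⟨h1, h2⟩ hi⟩
  choose α c' hc' hcc' using hex
  set S := (Finset.range d).filter fun i => ¬ ∀ᶠ x in 𝓝 0, c i x = 0 with hS
  have hSd : ∀ i ∈ S, i < d := fun i hi => Finset.mem_range.1 (Finset.mem_filter.1 hi).1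
  have hSc : ∀ i ∈ S, c' i 0 ≠ 0 ∧ ∀ᶠ x in 𝓝 0, c i x = mon (α i) x * c' i x := fun i hi =>
    hcc' i (hSd i hi) (Finset.mem_filter.1 hi).2
  have hnS : ∀ i < d, i ∉ S → ∀ᶠ x in 𝓝 0, c i x = 0 := fun i hi hiS => by
    by_contra hcon
    exact hiS (Finset.mem_filter.2 ⟨Finset.mem_range.2 hi, hcon⟩)
  have hfst : ∀ {p : (Fin n → ℝ) → Prop}, (∀ᶠ x in 𝓝 0, p x) →
      ∀ᶠ z in 𝓝 ((0 : Fin n → ℝ), (0:ℝ)), p z.1 := fun hp => continuousAt_fst.eventually hp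
  rcases S.eq_empty_or_nonempty with hSe | hSn
  · refine Good_monomial hM μ d 0 0 ((CM_lift hM 0 hm').mul h.hu hM) (mul_ne_zero hm'0 h.hu0) ?_
    have h1 : ∀ᶠ x in 𝓝 0, ∀ i ∈ Finset.range d, c i x = 0 := by
      rw [eventually_all_finset]
      intro i hi
      exact hnS i (Finset.mem_range.1 hi) (by simp [hSe])
    filter_upwards [hfst hme, hfst h1] with p hp hp1
    rw [bform, Finset.sum_eq_zero fun i hi => by rw [hp1 i hi, zero_mul], hp]
    ring
  · set e : ℕ → ℕ := fun i => d ! / (d - i) with he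
    have hed : ∀ i < d, d ! = (d - i) * e i := fun i hi =>
      (Nat.mul_div_cancel' (Nat.dvd_factorial (by omega) (by omega))).symm
    have hcmp : ∀ i ∈ S, ∀ j ∈ S, e i • α i ≤ e j • α j ∨ e j • α j ≤ e i • α i := by
      intro i hi j hj
      have hpi := (hc' i).pow hM (e i)
      have hpj := (hc' j).pow hM (e j)
      have h0i := pow_ne_zero (e i) (hSc i hi).1
      have h0j := pow_ne_zero (e j) (hSc j hj).1
      have hde : ∀ᶠ x in 𝓝 0, c i x ^ e i - c j x ^ e j =
          mon (e i • α i) x * c' i x ^ e i - mon (e j • α j) x * c' j x ^ e j := by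
        filter_upwards [(hSc i hi).2, (hSc j hj).2] with x h1 h2
        rw [h1, h2, mon_smul, mon_smul, mul_pow, mul_pow]
      rcases h.hdP i (hSd i hi) j (hSd j hj) with h1 | h1
      · refine mon_cmp_zero hM hD hpi hpj h0i h0j ?_
        filter_upwards [h1, hde] with x h2 h3
        rw [← h3]; exact h2
      · obtain ⟨δ, z, hz, hz0, hze⟩ := hdvd (((h.hc i).pow hM _).sub ((h.hc j).pow hM _) hM) h1
        refine mon_cmp hM hD hpi hpj hz h0i h0j hz0 (δ := δ) ?_
        filter_upwards [hze, hde] with x h2 h3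
        rw [← h3]; exact h2
    obtain ⟨i0, hi0, hmin⟩ := S.exists_min_image (fun i => ∑ k, (e i • α i) k) hSn
    have hle : ∀ j ∈ S, e i0 • α i0 ≤ e j • α j := by
      intro j hj
      rcases hcmp i0 hi0 j hj with h1 | h1
      · exact h1
      · have h2 := hmin j hj
        have h3 : ∑ k, (e j • α j) k = ∑ k, (e i0 • α i0) k :=
          le_antisymm (Finset.sum_le_sum fun k _ => h1 k) h2
        have h4 := (Finset.sum_eq_sum_iff_of_le (fun k _ => h1 k)).1 h3
        exact fun k => (h4 k (Finset.mem_univ k)).ge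
    set β := e i0 • α i0 with hβ
    have hDne : d ! ≠ 0 := Nat.factorial_ne_zero d
    refine base_chart (d !) hDne hM _ fun g hg => ?_
    let q : (Fin n → ℝ) → (Fin n → ℝ) := fun s => g * s ^ (d !)
    have hq : ∀ s, CM M q s := fun s => CM_pi (fun k =>
      (CM_const (g k) s hM).mul ((CM_coord k s hM).pow hM (d !)) hM) hM
    have hq0 : q 0 = 0 := by simp [q, hDne]
    have hmonq : ∀ α s, mon α (q s) = mon α g * mon (d ! • α) s := fun α s => by
      simp only [q]; rw [mon_mul, mon_powvec]
    have hmg : ∀ α, mon α g ≠ 0 := fun α => mon_ne_zero fun k _ => hg k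
    have hqe : ∀ {p : (Fin n → ℝ) → Prop}, (∀ᶠ x in 𝓝 0, p x) → ∀ᶠ x in 𝓝 0, p (q x) :=
      fun {p} hp => (hq 0).continuousAt.eventually (p := p) (by rw [hq0]; exact hp)
    let c2 : ℕ → (Fin n → ℝ) → ℝ := fun i s => if i ∈ S then
      mon (α i) g * mon ((d - i) • (e i • α i - β)) s * c' i (q s) else 0
    have hc2 : ∀ i, CM M (c2 i) 0 := by
      intro i
      by_cases hi : i ∈ S
      · simp only [c2, hi, if_true]
        exact ((CM_const _ 0 hM).mul (CM_mon _ 0 hM) hM).mul (CM.comp_of_eq (hc' i) (hq 0) hq0 hM) hM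
      · simp only [c2, hi, if_false]
        exact CM_const 0 0 hM
    have hc2e : ∀ᶠ s in 𝓝 0, ∀ i ∈ Finset.range d, c i (q s) = mon ((d - i) • β) s * c2 i s := by
      rw [eventually_all_finset]
      intro i hi
      have hid := Finset.mem_range.1 hi
      by_cases hiS : i ∈ S
      · filter_upwards [hqe (hSc i hiS).2] with s hs
        have h1 : d ! • α i = (d - i) • β + (d - i) • (e i • α i - β) := by
          rw [← smul_add, add_tsub_cancel_of_le (hle i hiS), smul_smul, ← hed i hid]
        rw [hs, hmonq, h1, mon_add]
        simp only [c2, hiS, if_true]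
        ring
      · filter_upwards [hqe (hnS i hid hiS)] with s hs
        rw [hs]; simp [c2, hiS]
    have hB := claimB hM hD d hT _ β rfl (d ! • μ) (fun s => mon μ g * m' (q s)) c2
      (fun p => u (q p.1, p.2)) ((CM_const _ 0 hM).mul (CM.comp_of_eq hm' (hq 0) hq0 hM) hM)
      (mul_ne_zero (hmg μ) (by rw [hq0]; exact hm'0)) hc2
      (CM.comp_of_eq (f := fun p : (Fin n → ℝ) × ℝ => (q p.1, p.2)) h.hu
        ((CM.comp_of_eq (f := fun p : (Fin n → ℝ) × ℝ => p.1) (hq 0) (CM_fst _ hM) rfl hM).prodMk (CM_snd _ hM) hM)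
        (by simp only [hq0]) hM)
      (by simp only [hq0]; exact h.hu0)
      (fun i hi => by
        have : i ∉ S := fun hiS => (Finset.mem_filter.1 hiS).2 (h.hl i hi)
        simp [c2, this])
      ⟨i0, hSd i0 hi0, by
        simp only [c2, hi0, if_true, hq0]
        rw [← hβ, tsub_self, smul_zero, mon_zero]
        exact mul_ne_zero (mul_ne_zero (hmg _) one_ne_zero) (hSc i0 hi0).1⟩
    refine hB.congr ?_
    filter_upwards [hfst (hqe hme), hfst hc2e] with p hp hp2
    show _ = m (q p.1) * (∑ i ∈ Finset.range d, c i (q p.1) * p.2 ^ i + p.2 ^ d * u (q p.1, p.2))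
    rw [hp, hmonq, hform, Finset.sum_congr (g := fun i => mon ((d - i) • β) p.1 * c2 i p.1 * p.2 ^ i) (f := fun i => c i (q p.1) * p.2 ^ i) rfl fun i hi => by rw [hp2 i hi]]
    ring
end
end QA
end

section
open scoped ContDiff Nat Topology
open Filter Set

namespace QA
section
variable {E F G : Type} [NormedAddCommGroup E] [NormedSpace ℝ E] [NormedAddCommGroup F]
  [NormedSpace ℝ F] [NormedAddCommGroup G] [NormedSpace ℝ G] {M : ℕ → ℝ} {n : ℕ}

theorem CM_prodid (hM : Wt M) {ph : E → E} {y : E} (b : ℝ) (h : CM M ph y) :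
    CM M (fun p : E × ℝ => (ph p.1, p.2)) (y, b) :=
  (CM.comp_of_eq (f := fun p : E × ℝ => p.1) h (CM_fst _ hM) rfl hM).prodMk (CM_snd _ hM) hM

theorem Good.lift (hM : Wt M) (hD : Dv M) (d : ℕ) (hT : ∀ d' < d, TT M n d')
    {P : (Fin n → ℝ) → ℝ} {a : Fin n → ℝ} (h : Good M P a) : ∀ {m : (Fin n → ℝ) → ℝ}
    {c : ℕ → (Fin n → ℝ) → ℝ} {u : (Fin n → ℝ) × ℝ → ℝ}, Rel M d P m c u a →
    Good M (bform d m c u) (a, 0) := by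
  induction h with
  | mono P a k e α w hw hw0 hP =>
    intro m c u hR
    have hk : n = k := by simpa using e.toLinearEquiv.finrank_eq
    subst hk
    let ph1 : (Fin n → ℝ) → (Fin n → ℝ) := fun s => e.symm s + a
    have hph1 : CM M ph1 0 := (CM_clm (e.symm : (Fin n → ℝ) →L[ℝ] (Fin n → ℝ)) 0 hM).add
      (CM_const a 0 hM) hM
    have h10 : ph1 0 = a := by simp [ph1]
    have hB := base hM hD d hT (hR.pull hph1 h10 hM) α (v := fun s => w (ph1 s))
      (CM.comp_of_eq hw hph1 h10 hM) (by rw [h10]; exact hw0) (by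
        have := hph1.continuousAt.eventually (p := fun x => P x = (∏ j, (e (x - a) j) ^ α j) * w x)
          (by rw [h10]; exact hP)
        filter_upwards [this] with s hs
        rw [hs]; simp [ph1, mon])
    refine Good.pull (b := (0, 0)) (fun p => (ph1 p.1, p.2)) (fun p => (e (p.1 - a), p.2))
      (CM_prodid hM 0 hph1) (by simp only [h10]) (by fun_prop) (by simp) ?_ hB
    exact Eventually.of_forall fun p => by simp [ph1]
  | cover P a ι hι ph L hL hph ha hcov hG ih =>
    intro m c u hR
    refine Good.cover _ _ ι hι (fun i p => (ph i p.1, p.2)) (fun i => L i ×ˢ {0})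
      (fun i => (hL i).prod isCompact_singleton) ?_ ?_ ?_ ?_
    · rintro i ⟨y, t⟩ ⟨hy, ht⟩
      exact CM_prodid hM t (hph i y hy)
    · rintro i ⟨y, t⟩ ⟨hy, ht⟩
      have ht : t = 0 := ht
      subst ht
      simp only [ha i y hy]
    · intro O hO hLO
      have htube : ∀ i, ∃ U V, IsOpen U ∧ IsOpen V ∧ L i ⊆ U ∧ (0:ℝ) ∈ V ∧ U ×ˢ V ⊆ O i := by
        intro i
        obtain ⟨U, V, hU, hV, h1, h2, h3⟩ := generalized_tube_lemma (hL i)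
          (isCompact_singleton (x := (0:ℝ))) (hO i) (hLO i)
        exact ⟨U, V, hU, hV, h1, h2 rfl, h3⟩
      choose U V hU hV hLU h0V hUV using htube
      have h1 := hcov U hU hLU
      have h2 : ∀ᶠ t in 𝓝 (0:ℝ), ∀ i, t ∈ V i :=
        eventually_all.2 fun i => (hV i).mem_nhds (h0V i)
      rw [nhds_prod_eq]
      filter_upwards [prod_mem_prod h1 h2] with p hp
      obtain ⟨hp1, hp2⟩ := hp
      obtain ⟨i, y, hy, hyp⟩ := mem_iUnion.1 hp1
      exact mem_iUnion.2 ⟨i, (y, p.2), hUV i ⟨hy, hp2 i⟩, Prod.ext hyp rfl⟩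
    · rintro i ⟨y, t⟩ ⟨hy, ht⟩
      have ht : t = 0 := ht
      subst ht
      exact ih i y hy (hR.pull (hph i y hy) (ha i y hy) hM)

theorem Dvd0.mul_right {P Q A : E → ℝ} {a : E} (h : Dvd0 M P A a) (hQ : CM M Q a) (hM : Wt M) :
    Dvd0 M (fun x => P x * Q x) A a := by
  rcases h with h | ⟨w, hw, h⟩
  · exact Or.inl h
  · refine Or.inr ⟨fun x => w x * Q x, hw.mul hQ hM, ?_⟩
    filter_upwards [h] with x hx; rw [hx, mul_assoc]

theorem Dvd0.mul_left {P Q A : E → ℝ} {a : E} (h : Dvd0 M P A a) (hQ : CM M Q a) (hM : Wt M) :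
    Dvd0 M (fun x => Q x * P x) A a := by
  have := h.mul_right hQ hM
  simpa only [mul_comm] using this

theorem exists_common (hM : Wt M) (hD : Dv M) {ι : Type} (s : Finset ι) {A : ι → E → ℝ} {a : E}
    (hA : ∀ i, CM M (A i) a) : ∃ P, CM M P a ∧ (¬ ∀ᶠ x in 𝓝 a, P x = 0) ∧
      ∀ i ∈ s, Dvd0 M P (A i) a := by
  classical
  refine ⟨fun x => ∏ i ∈ s.filter fun i => ¬ ∀ᶠ x in 𝓝 a, A i x = 0, A i x,
    CM_prod _ (fun i _ => hA i) hM, ?_, ?_⟩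
  · intro h
    obtain ⟨i, hi, h1⟩ := CM_domain_prod hM hD _ (fun i _ => hA i) h
    exact (Finset.mem_filter.1 hi).2 h1
  · intro i hi
    by_cases h : ∀ᶠ x in 𝓝 a, A i x = 0
    · exact Or.inl h
    · refine Or.inr ⟨fun x => ∏ j ∈ (s.filter fun i => ¬ ∀ᶠ x in 𝓝 a, A i x = 0).erase i, A j x,
        CM_prod _ (fun i _ => hA i) hM, Eventually.of_forall fun x => ?_⟩
      exact (Finset.mul_prod_erase _ (fun j => A j x) (Finset.mem_filter.2 ⟨hi, h⟩)).symm

theorem normal_form (hM : Wt M) {a : Fin n → ℝ} {b : ℝ} {h : (Fin n → ℝ) × ℝ → ℝ}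
    (hh : CM M h (a, b)) (d : ℕ) (hd : iteratedDeriv d (fun t => h (a, t)) b ≠ 0)
    (hd' : ∀ i, i + 1 = d → iteratedDeriv i (fun t => h (a, t)) b = 0) :
    ∃ (g : (Fin n → ℝ) → ℝ) (c : ℕ → (Fin n → ℝ) → ℝ) (u : (Fin n → ℝ) × ℝ → ℝ),
      CM M g a ∧ g a = b ∧ (∀ i, CM M (c i) a) ∧ CM M u (a, 0) ∧ u (a, 0) ≠ 0 ∧
      (∀ i, i + 1 = d → ∀ᶠ x in 𝓝 a, c i x = 0) ∧
      ∀ᶠ p in 𝓝 (a, (0:ℝ)), h (p.1, g p.1 + p.2) =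
        ∑ i ∈ Finset.range d, c i p.1 * p.2 ^ i + p.2 ^ d * u p := by
  cases d with
  | zero =>
    refine ⟨fun _ => b, fun _ _ => 0, fun p => h (p.1, b + p.2), CM_const b a hM, rfl,
      fun i => CM_const 0 a hM, ?_, by simpa using hd, by simp, by simp⟩
    exact CM.comp_of_eq (f := fun p : (Fin n → ℝ) × ℝ => (p.1, b + p.2)) hh
      ((CM_fst _ hM).prodMk ((CM_const b _ hM).add (CM_snd _ hM) hM) hM) (by simp) hM
  | succ k =>
    have hk := hd' k rfl
    let H : ((Fin n → ℝ) × ℝ) × ℝ → ℝ := fun p => h (p.1.1, p.1.2 + p.2)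
    have hH : CM M H ((a, b), 0) := by
      refine CM.comp_of_eq (f := fun p : ((Fin n → ℝ) × ℝ) × ℝ => (p.1.1, p.1.2 + p.2)) hh ?_ (by simp) hM
      exact (CM_clm ((ContinuousLinearMap.fst ℝ (Fin n → ℝ) ℝ).comp (ContinuousLinearMap.fst ℝ ((Fin n → ℝ) × ℝ) ℝ)) _ hM).prodMk (CM.add (CM_lift hM 0 (CM_snd _ hM)) (CM_snd _ hM) hM) hM
    obtain ⟨c, u, hc, hu, he⟩ := CM_taylor hM hH (k + 1)
    have hev : ∀ᶠ y in 𝓝 (a, b), (∀ i < k + 1, iteratedDeriv i (fun t => h (y.1, t)) y.2 = i ! * c i y) ∧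
        iteratedDeriv (k + 1) (fun t => h (y.1, t)) y.2 = (k + 1)! * u (y, 0) := by
      have hu2 : ∀ᶠ y in 𝓝 (a, b), CM M u (y, 0) := by
        have hcy : ContinuousAt (fun y : (Fin n → ℝ) × ℝ => (y, (0:ℝ))) (a, b) := by fun_prop
        exact hcy.eventually (p := fun z => CM M u z) hu.eventually
      filter_upwards [he.curry_nhds, hu2] with y hy hyu
      have hu1 : ContDiffAt ℝ ∞ (fun t : ℝ => u (y, t)) 0 :=
        hyu.contDiffAt.comp (0 : ℝ) (by fun_prop : ContDiffAt ℝ ∞ (fun t : ℝ => (y, t)) 0)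
      have ht := taylor1 (k + 1) (fun i => c i y) (f := fun t => h (y.1, y.2 + t)) hu1 hy
      have hsh : ∀ i, iteratedDeriv i (fun t => h (y.1, y.2 + t)) 0 =
          iteratedDeriv i (fun t => h (y.1, t)) y.2 := fun i => by
        have := congrFun (iteratedDeriv_comp_const_add i (fun t => h (y.1, t)) y.2) 0
        simpa using this
      simpa only [hsh] using ht
    have hab := hev.self_of_nhds
    have hfac : ∀ i : ℕ, (i ! : ℝ) ≠ 0 := fun i => by positivity
    have hq0 : c k (a, b) = 0 := by
      have := hab.1 k (Nat.lt_succ_self k)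
      simp only [hk] at this
      exact (mul_eq_zero.1 this.symm).resolve_left (hfac k)
    have hu0 : u ((a, b), 0) ≠ 0 := by
      intro h0
      apply hd
      have := hab.2
      simp only [h0, mul_zero] at this
      exact this
    have hder : fderiv ℝ (c k) (a, b) (0, 1) ≠ 0 := by
      have hdiff : DifferentiableAt ℝ (c k) (a, b) :=
        (hc k).contDiffAt.differentiableAt (by simp)
      have hl : HasDerivAt (fun s : ℝ => (a, s)) ((0 : Fin n → ℝ), (1:ℝ)) b :=
        (hasDerivAt_const b a).prodMk (hasDerivAt_id b)
      have h1 : HasDerivAt (fun s : ℝ => c k (a, s)) (fderiv ℝ (c k) (a, b) (0, 1)) b :=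
        hdiff.hasFDerivAt.comp_hasDerivAt b hl
      have hcs : ContinuousAt (fun s : ℝ => (a, s)) b := by fun_prop
      have h2 : (fun s => iteratedDeriv k (fun t => h (a, t)) s) =ᶠ[𝓝 b] fun s => k ! * c k (a, s) := by
        filter_upwards [hcs.eventually hev] with s hs
        exact hs.1 k (Nat.lt_succ_self k)
      have h3 : iteratedDeriv (k + 1) (fun t => h (a, t)) b = k ! * fderiv ℝ (c k) (a, b) (0, 1) := by
        rw [iteratedDeriv_succ]
        exact (h2.deriv_eq).trans (h1.const_mul _).deriv
      intro h0
      rw [h0, mul_zero] at h3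
      exact hd h3
    obtain ⟨g, hg, hga, hgz⟩ := CM_implicit (hc k) hq0 hder hM
    have hxg : CM M (fun x => (x, g x)) a := (CM_id a hM).prodMk hg hM
    refine ⟨g, fun i x => c i (x, g x), fun p => u ((p.1, g p.1), p.2), hg, hga, ?_, ?_, ?_, ?_, ?_⟩
    · intro i
      exact CM.comp_of_eq (hc i) hxg (by simp only [hga]) hM
    · refine CM.comp_of_eq (f := fun p : (Fin n → ℝ) × ℝ => ((p.1, g p.1), p.2)) hu ?_ (by simp only [hga]) hM
      exact (CM.comp_of_eq (f := fun p : (Fin n → ℝ) × ℝ => p.1) hxg (CM_fst _ hM) rfl hM).prodMk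
        (CM_snd _ hM) hM
    · simp only [hga]; exact hu0
    · intro i hi
      obtain rfl : i = k := by omega
      exact hgz
    · have hcg : ContinuousAt (fun p : (Fin n → ℝ) × ℝ => ((p.1, g p.1), p.2)) (a, 0) := by
        have := hg.continuousAt
        have h2 : ContinuousAt (fun p : (Fin n → ℝ) × ℝ => g p.1) (a, 0) :=
          ContinuousAt.comp (f := fun p : (Fin n → ℝ) × ℝ => p.1) this continuousAt_fst
        fun_prop
      exact hcg.eventually (by simp only [hga]; exact he)

theorem TT_all (hM : Wt M) (hD : Dv M) (hS : ∀ (P : (Fin n → ℝ) → ℝ) (a : Fin n → ℝ), CM M P a →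
    (¬ ∀ᶠ x in 𝓝 a, P x = 0) → Good M P a) (d : ℕ) : TT M n d := by
  induction d using Nat.strong_induction_on with
  | _ d hT =>
    intro a b m h hm hm0 hh hd
    by_cases hd' : ∀ i, i + 1 = d → iteratedDeriv i (fun t => h (a, t)) b = 0
    · obtain ⟨g, c, u, hg, hga, hc, hu, hu0, hl, he⟩ := normal_form hM hh d hd hd'
      obtain ⟨P1, hP1, hP1z, hP1d⟩ := exists_common hM hD (Finset.range d) hc
      obtain ⟨P2, hP2, hP2z, hP2d⟩ := exists_common hM hD (Finset.range d ×ˢ Finset.range d)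
        (A := fun (ij : ℕ × ℕ) x => c ij.1 x ^ (d ! / (d - ij.1)) - c ij.2 x ^ (d ! / (d - ij.2)))
        (fun ij => ((hc ij.1).pow hM _).sub ((hc ij.2).pow hM _) hM)
      have hP12 := hP1.mul hP2 hM
      have hPz : ¬ ∀ᶠ x in 𝓝 a, m x * (P1 x * P2 x) = 0 := by
        intro h0
        rcases CM_domain hM hD hm hP12 h0 with h1 | h1
        · exact hm0 h1
        · rcases CM_domain hM hD hP1 hP2 h1 with h2 | h2
          · exact hP1z h2
          · exact hP2z h2
      have hR : Rel M d (fun x => m x * (P1 x * P2 x)) m c u a := by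
        refine ⟨hm, ⟨_, hP12, Eventually.of_forall fun x => rfl⟩, hc, ?_, ?_, hu, hu0, hl⟩
        · intro i hi
          exact ((hP1d i (Finset.mem_range.2 hi)).mul_right hP2 hM).mul_left hm hM
        · intro i hi j hj
          exact ((hP2d (i, j) (Finset.mem_product.2 ⟨Finset.mem_range.2 hi, Finset.mem_range.2 hj⟩)).mul_left
            hP1 hM).mul_left hm hM
      have hG := (hS _ a (hm.mul hP12 hM) hPz).lift hM hD d hT hR
      refine Good.pull (b := (a, 0)) (fun p => (p.1, g p.1 + p.2)) (fun p => (p.1, p.2 - g p.1)) ?_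
        (by simp only [hga, add_zero]) ?_ (by simp only [hga, sub_self]) ?_ ?_
      · exact (CM_fst _ hM).prodMk ((CM_lift hM 0 hg).add (CM_snd _ hM) hM) hM
      · have h2 : ContinuousAt (fun p : (Fin n → ℝ) × ℝ => g p.1) (a, b) :=
          ContinuousAt.comp (f := fun p : (Fin n → ℝ) × ℝ => p.1) hg.continuousAt continuousAt_fst
        exact continuousAt_fst.prodMk (continuousAt_snd.sub h2)
      · exact Eventually.of_forall fun p => by simp
      · refine hG.congr ?_
        filter_upwards [he] with p hp
        simp only [bform, hp]
    · push Not at hd'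
      obtain ⟨i, hi, hne⟩ := hd'
      exact hT i (by omega) a b m h hm hm0 hh hne

theorem Good_unit {F : (Fin n → ℝ) → ℝ} {a : Fin n → ℝ} (hF : CM M F a) (h : F a ≠ 0) : Good M F a :=
  Good.mono F a n (ContinuousLinearEquiv.refl ℝ _) 0 F hF h (Eventually.of_forall fun x => by simp)

theorem Good_all (hM : Wt M) (hD : Dv M) (n : ℕ) : ∀ (P : (Fin n → ℝ) → ℝ) (a : Fin n → ℝ), CM M P a →
    (¬ ∀ᶠ x in 𝓝 a, P x = 0) → Good M P a := by
  induction n with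
  | zero =>
    intro P a hP hz
    refine Good_unit hP fun h0 => hz (Eventually.of_forall fun x => ?_)
    rw [Subsingleton.elim x a, h0]
  | succ n ih =>
    intro P a hP hz
    by_cases hPa : P a = 0
    swap
    · exact Good_unit hP hPa
    obtain ⟨v, d, hd⟩ := exists_iteratedDeriv_ne hM hD hP hz
    have hv : v ≠ 0 := by
      rintro rfl
      apply hd
      have : (fun t : ℝ => P (a + t • (0 : Fin (n + 1) → ℝ))) = fun _ => 0 := by
        funext t; simp [hPa]
      rw [this, iteratedDeriv_fun_const_zero]
    let e0 : ((Fin n → ℝ) × ℝ) ≃L[ℝ] (Fin (n + 1) → ℝ) :=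
      (ContinuousLinearEquiv.prodComm ℝ (Fin n → ℝ) ℝ).trans (Fin.consEquivL ℝ fun _ => ℝ)
    have hne : e0 (0, 1) ≠ 0 := by simp
    obtain ⟨T, hTv⟩ := SeparatingDual.exists_continuousLinearEquiv_apply_eq (R := ℝ) hne hv
    let e := e0.trans T
    have hev : e (0, 1) = v := hTv
    obtain ⟨⟨a', b⟩, hab⟩ : ∃ y, e y = a := ⟨e.symm a, by simp⟩
    have hline : ∀ t, e (a', t) = a + (t - b) • v := by
      intro t
      rw [← hab, ← hev, ← map_smul, ← map_add]
      simp
    have hG := TT_all hM hD ih d a' b (fun _ => 1) (fun p => P (e p)) (CM_const 1 a' hM)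
      (fun h => one_ne_zero h.self_of_nhds)
      (CM.comp_of_eq hP (CM_clm (e : ((Fin n → ℝ) × ℝ) →L[ℝ] (Fin (n + 1) → ℝ)) (a', b) hM) hab hM) (by
        have h1 : (fun t => P (e (a', t))) = fun t => (fun s : ℝ => P (a + s • v)) (t - b) := by
          funext t
          simp only [hline]
        rw [h1, iteratedDeriv_comp_sub_const d (fun s : ℝ => P (a + s • v)) b]
        simpa using hd)
    have hG2 := hG.transport hM e
    rw [hab] at hG2
    refine hG2.congr (Eventually.of_forall fun y => ?_)
    simp
end
end QA
end

section
open scoped ContDiff Nat Topology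
open Filter Set

namespace QA
section
variable {M : ℕ → ℝ}

theorem final {N : ℕ} (hM : Wt M) (hD : Dv M)
    (U : Set (EuclideanSpace ℝ (Fin N))) (hUopen : IsOpen U) (hUconn : IsConnected U)
    (f : EuclideanSpace ℝ (Fin N) → ℝ) (hf : ∀ a ∈ U, CM M f a)
    (Z : Set (EuclideanSpace ℝ (Fin N))) (hZ : Z = {x ∈ U | f x = 0})
    (K : Set (EuclideanSpace ℝ (Fin N))) (hKcpt : IsCompact K) (hKU : K ⊆ U) :
    ∃ C : ℝ, 0 < C ∧ ∃ ν : ℝ, 1 ≤ ν ∧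
      ∃ W : Set (EuclideanSpace ℝ (Fin N)), IsOpen W ∧ K ⊆ W ∧ W ⊆ U ∧
        ∀ x ∈ W, C * Metric.infDist x Z ^ ν ≤ |f x| := by
  by_cases hz : ∃ a ∈ U, ∀ᶠ x in 𝓝 a, f x = 0
  · obtain ⟨a, ha, h⟩ := hz
    have h0 := CM_connected hM hD hUconn.isPreconnected hf ha h
    refine ⟨1, one_pos, 1, le_rfl, U, hUopen, hKU, Subset.rfl, fun x hx => ?_⟩
    have hxZ : x ∈ Z := by rw [hZ]; exact ⟨hx, h0 x hx⟩
    rw [Metric.infDist_zero_of_mem hxZ]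
    simp
  push Not at hz
  let r : EuclideanSpace ℝ (Fin N) → ℝ := fun x => min (Metric.infDist x Z) 1
  have hr0 : ∀ x, 0 ≤ r x := fun x => le_min Metric.infDist_nonneg zero_le_one
  have hr1 : ∀ x, r x ≤ 1 := fun x => min_le_right _ _
  have hloc : ∀ a ∈ U, ∃ C : ℝ, 0 < C ∧ ∃ ν : ℕ, 1 ≤ ν ∧ ∀ᶠ x in 𝓝 a, C * r x ^ ν ≤ |f x| := by
    intro a ha
    let e := EuclideanSpace.equiv (Fin N) ℝ
    have hG : Good M (fun y => f (e.symm y)) (e a) := by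
      refine Good_all hM hD N _ _ ?_ ?_
      · exact CM.comp_of_eq (hf a ha)
          (CM_clm (e.symm : (Fin N → ℝ) →L[ℝ] EuclideanSpace ℝ (Fin N)) (e a) hM) (by simp) hM
      · intro h
        apply hz a ha
        have := e.continuous.continuousAt.eventually h
        simpa using this
    have hG2 := hG.transport hM e.symm
    have hG3 : Good M f a := by simpa using hG2
    obtain ⟨C, hC, ν, hν, h⟩ := hG3.loj U (hUopen.mem_nhds ha)
    refine ⟨C, hC, ν, hν, ?_⟩
    filter_upwards [h] with x hx
    rcases hx with ⟨z, hzU, hfz, hx⟩ | hx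
    · refine le_trans ?_ hx
      have hzZ : z ∈ Z := by rw [hZ]; exact ⟨hzU, hfz⟩
      have : r x ≤ dist x z := (min_le_left _ _).trans (Metric.infDist_le_dist_of_mem hzZ)
      have := hr0 x
      gcongr
    · refine le_trans ?_ hx
      exact mul_le_of_le_one_right hC.le (pow_le_one₀ (hr0 x) (hr1 x))
  have hcomp : ∃ C : ℝ, 0 < C ∧ ∃ ν : ℕ, 1 ≤ ν ∧ ∃ W : Set (EuclideanSpace ℝ (Fin N)),
      IsOpen W ∧ K ⊆ W ∧ W ⊆ U ∧ ∀ x ∈ W, C * r x ^ ν ≤ |f x| := by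
    refine hKcpt.induction_on (p := fun S => ∃ C : ℝ, 0 < C ∧ ∃ ν : ℕ, 1 ≤ ν ∧
      ∃ W : Set (EuclideanSpace ℝ (Fin N)),
      IsOpen W ∧ S ⊆ W ∧ W ⊆ U ∧ ∀ x ∈ W, C * r x ^ ν ≤ |f x|) ?_ ?_ ?_ ?_
    · exact ⟨1, one_pos, 1, le_rfl, ∅, isOpen_empty, Subset.rfl, empty_subset _, by simp⟩
    · rintro s t hst ⟨C, hC, ν, hν, W, h1, h2, h3⟩
      exact ⟨C, hC, ν, hν, W, h1, hst.trans h2, h3⟩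
    · rintro s t ⟨C, hC, ν, hν, W, h1, h2, h3, h4⟩ ⟨C', hC', ν', hν', W', h1', h2', h3', h4'⟩
      refine ⟨min C C', lt_min hC hC', max ν ν', hν.trans (le_max_left _ _), W ∪ W', h1.union h1',
        union_subset_union h2 h2', union_subset h3 h3', ?_⟩
      rintro x (hx | hx)
      · refine le_trans ?_ (h4 x hx)
        exact mul_le_mul (min_le_left _ _) (pow_le_pow_of_le_one (hr0 x) (hr1 x) (le_max_left _ _))
          (pow_nonneg (hr0 x) _) hC.le
      · refine le_trans ?_ (h4' x hx)
        exact mul_le_mul (min_le_right _ _) (pow_le_pow_of_le_one (hr0 x) (hr1 x) (le_max_right _ _))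
          (pow_nonneg (hr0 x) _) hC'.le
    · intro a ha
      obtain ⟨C, hC, ν, hν, h⟩ := hloc a (hKU ha)
      obtain ⟨W, hW, hWo, haW⟩ := eventually_nhds_iff.1 (h.and (hUopen.mem_nhds (hKU ha)))
      exact ⟨W, mem_nhdsWithin_of_mem_nhds (hWo.mem_nhds haW), C, hC, ν, hν, W, hWo, Subset.rfl,
        fun x hx => (hW x hx).2, fun x hx => (hW x hx).1⟩
  obtain ⟨C, hC, ν, hν, W, hWo, hKW, hWU, hW⟩ := hcomp
  obtain ⟨B0, hB0⟩ := hKcpt.bddAbove_image (f := fun x => Metric.infDist x Z)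
    (Metric.continuous_infDist_pt Z).continuousOn
  let B := max B0 0 + 1
  have hB : 1 ≤ B := by simp [B]
  have hBp : 0 < B := by linarith
  refine ⟨C / B ^ ν, by positivity, ν, by exact_mod_cast hν, W ∩ {x | Metric.infDist x Z < B},
    hWo.inter (isOpen_lt (Metric.continuous_infDist_pt Z) continuous_const), ?_,
    inter_subset_left.trans hWU, ?_⟩
  · intro x hx
    refine ⟨hKW hx, ?_⟩
    have h1 : Metric.infDist x Z ≤ B0 := hB0 ⟨x, hx, rfl⟩
    have h2 := le_max_left B0 0
    show Metric.infDist x Z < max B0 0 + 1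
    linarith
  · rintro x ⟨hx, hxB⟩
    have hxB' : Metric.infDist x Z < B := hxB
    refine le_trans ?_ (hW x hx)
    rw [Real.rpow_natCast, div_mul_eq_mul_div, mul_div_assoc, ← div_pow]
    have h0 : 0 ≤ Metric.infDist x Z := Metric.infDist_nonneg
    have : Metric.infDist x Z / B ≤ r x :=
      le_min (div_le_self h0 hB) ((div_le_one hBp).2 hxB'.le)
    gcongr
end
end QA
end

/-- Łojasiewicz inequality II in the class `C^ℝ_M`: comparison of `|f|`
with the Euclidean distance to the zero set of `f`. -/
theorem stmt12 {N : ℕ} (M : ℕ → ℝ)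
    (hpos : ∀ j, 0 < M j) (hmono : Monotone M) (hM0 : M 0 = 1)
    (hlog : ∀ j : ℕ, M (j+1) / M j ≤ M (j+2) / M (j+1))
    (hqa : ∑' k : ℕ, ENNReal.ofReal (M k / (((k : ℝ) + 1) * M (k+1))) = ⊤)
    (hder : ∃ C : ℝ, ∀ j : ℕ, 1 ≤ j → (M (j+1) / M j) ^ ((1 : ℝ) / j) ≤ C)
    (U : Set (EuclideanSpace ℝ (Fin N))) (hUopen : IsOpen U) (hUconn : IsConnected U)
    (f : EuclideanSpace ℝ (Fin N) → ℝ) (hf : CRM M U f)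
    (Z : Set (EuclideanSpace ℝ (Fin N))) (hZ : Z = {x ∈ U | f x = 0})
    (K : Set (EuclideanSpace ℝ (Fin N))) (hKcpt : IsCompact K) (hKU : K ⊆ U) :
    ∃ C : ℝ, 0 < C ∧ ∃ ν : ℝ, 1 ≤ ν ∧
      ∃ W : Set (EuclideanSpace ℝ (Fin N)), IsOpen W ∧ K ⊆ W ∧ W ⊆ U ∧
        ∀ x ∈ W, C * Metric.infDist x Z ^ ν ≤ |f x| := by
  exact QA.final (QA.Wt_of hpos hmono hM0 hlog hder) (QA.Dv_of hpos hqa) U hUopen hUconn f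
    (QA.CRM_CM hpos hUopen hf) Z hZ K hKcpt hKU
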